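/- arXiv:1407.3463 — 7 statements merged into one kernel-verified Lean document; each statement's English description precedes it below -/
import Mathlib

section
/- Let L ∈ 𝓛, say L(A,B) = Σᵢ f(σᵢ) with f ∈ 𝓤. Then the matrix Γ̂_pos = Γ_pr − Σ_{i=1}^{r} (δᵢ²/(1+δᵢ²)) ŵᵢ ŵᵢᵀ belongs to 𝓜_r and minimizes the loss to the exact posterior covariance over 𝓜_r: for every Γ̃ ∈ 𝓜_r, L(Γ_pos, Γ̂_pos) ≤ L(Γ_pos, Γ̃). -/
open Matrix MeasureTheory Polynomial Filter Finset

/-- `σ` enumerates (with multiplicity) the generalized eigenvalues of the pencil `(A, B)`,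
i.e. the eigenvalues of `B⁻¹ * A`. -/
def IsGenEigs {n : ℕ} (A B : Matrix (Fin n) (Fin n) ℝ) (σ : Fin n → ℝ) : Prop :=
  (B⁻¹ * A).charpoly = ∏ i : Fin n, (Polynomial.X - Polynomial.C (σ i))

/-- Membership in the class 𝓤: continuously differentiable `f : (0,∞) → ℝ` with
`f'(x)(1-x) < 0` for `x ≠ 1`, and `f(x) → ∞` as `x → ∞`. -/
def MemU (f : ℝ → ℝ) : Prop :=
  ∃ f' : ℝ → ℝ,
    (∀ x ∈ Set.Ioi (0:ℝ), HasDerivAt f (f' x) x) ∧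
    ContinuousOn f' (Set.Ioi (0:ℝ)) ∧
    (∀ x ∈ Set.Ioi (0:ℝ), x ≠ 1 → f' x * (1 - x) < 0) ∧
    Filter.Tendsto f Filter.atTop Filter.atTop

/-- The approximation class `𝓜_r`: positive definite matrices of the form
`Γpr - K Kᵀ` with `rank K ≤ r`. -/
def MClass {n : ℕ} (Γpr : Matrix (Fin n) (Fin n) ℝ) (r : ℕ) :
    Set (Matrix (Fin n) (Fin n) ℝ) :=
  {M | ∃ K : Matrix (Fin n) (Fin n) ℝ, K.rank ≤ r ∧ M = Γpr - K * Kᵀ ∧ M.PosDef}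

lemma sum_eq_of_prod {n : ℕ} (f : ℝ → ℝ) (a b : Fin n → ℝ)
    (h : ∏ i : Fin n, (Polynomial.X - Polynomial.C (a i)) =
      ∏ i : Fin n, (Polynomial.X - Polynomial.C (b i))) :
    ∑ i, f (a i) = ∑ i, f (b i) := by
  have key : ∀ c : Fin n → ℝ, (∏ i : Fin n, (Polynomial.X - Polynomial.C (c i))).roots
      = Finset.univ.val.map c := by
    intro c
    have := Polynomial.roots_multiset_prod_X_sub_C (Finset.univ.val.map c)
    rw [Multiset.map_map] at this
    exact this
  have h2 : Finset.univ.val.map a = Finset.univ.val.map b := by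
    rw [← key a, ← key b, h]
  have h3 := congrArg (fun M => (Multiset.map f M).sum) h2
  simp only [Multiset.map_map] at h3
  exact h3

lemma memU_min {f : ℝ → ℝ} (hf : MemU f) :
    (∀ x, 0 < x → f 1 ≤ f x) ∧ (∀ x y, 0 < x → x ≤ y → y ≤ 1 → f y ≤ f x) := by
  obtain ⟨f', hd, -, hs, -⟩ := hf
  have hanti : AntitoneOn f (Set.Ioc 0 1) := by
    apply antitoneOn_of_deriv_nonpos (convex_Ioc 0 1)
    · intro x hx
      exact (hd x hx.1).continuousAt.continuousWithinAt
    · intro x hx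
      rw [interior_Ioc] at hx
      exact (hd x hx.1).differentiableAt.differentiableWithinAt
    · intro x hx
      rw [interior_Ioc] at hx
      rw [(hd x hx.1).deriv]
      have := hs x hx.1 hx.2.ne
      have h1 : 0 < 1 - x := by linarith [hx.2]
      by_contra hc
      push Not at hc
      nlinarith
  have hmono : MonotoneOn f (Set.Ici 1) := by
    apply monotoneOn_of_deriv_nonneg (convex_Ici 1)
    · intro x hx
      have hx' : (1:ℝ) ≤ x := hx
      exact (hd x (by simp; linarith)).continuousAt.continuousWithinAt
    · intro x hx
      rw [interior_Ici] at hx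
      have hx' : (1:ℝ) < x := hx
      exact (hd x (by simp; linarith)).differentiableAt.differentiableWithinAt
    · intro x hx
      rw [interior_Ici] at hx
      have hx' : (1:ℝ) < x := hx
      have h0 : x ∈ Set.Ioi (0:ℝ) := by simp; linarith
      rw [(hd x h0).deriv]
      have := hs x h0 hx'.ne'
      by_contra hc
      push Not at hc
      nlinarith
  refine ⟨fun x hx => ?_, fun x y hx hxy hy => ?_⟩
  · rcases le_total x 1 with h | h
    · exact hanti ⟨hx, h⟩ ⟨one_pos, le_rfl⟩ h
    · exact hmono (by simp) h h
  · exact hanti ⟨hx, hxy.trans hy⟩ ⟨hx.trans_le hxy, hy⟩ hxy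

/-- Weyl-type bound. -/
lemma weyl_bound {n r k : ℕ} (hk : k + r < n) (A N : Matrix (Fin n) (Fin n) ℝ)
    (e τ : Fin n → ℝ) (he : Monotone e) (hτ : Monotone τ)
    (hA : A = Matrix.diagonal e + N) (hN : N.rank ≤ r)
    (Q : Matrix (Fin n) (Fin n) ℝ) (hQ : Qᵀ * Q = 1)
    (hAQ : A = Qᵀ * Matrix.diagonal τ * Q) :
    τ ⟨k, by omega⟩ ≤ e ⟨k + r, hk⟩ := by
  let Φ : (Fin n → ℝ) →ₗ[ℝ] (LinearMap.range N.mulVecLin) ×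
      (({i : Fin n // k + r < (i:ℕ)} → ℝ) × ({j : Fin n // (j:ℕ) < k} → ℝ)) :=
    (N.mulVecLin.rangeRestrict).prod
      ((LinearMap.funLeft ℝ ℝ (Subtype.val)).prod
        ((LinearMap.funLeft ℝ ℝ (Subtype.val)).comp Q.mulVecLin))
  have hc1 : Fintype.card {i : Fin n // k + r < (i:ℕ)} = n - 1 - (k + r) := by
    have := Fin.card_Ioi (⟨k + r, hk⟩ : Fin n)
    rw [Fintype.card_subtype, ← this]
    congr 1
    ext i
    simp [Fin.lt_def]
  have hc2 : Fintype.card {i : Fin n // (i:ℕ) < k} = k := by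
    have := Fin.card_Iio (⟨k, by omega⟩ : Fin n)
    rw [Fintype.card_subtype]
    refine Eq.trans ?_ this
    congr 1
    ext i
    simp [Fin.lt_def]
  have hker : LinearMap.ker Φ ≠ ⊥ := by
    apply LinearMap.ker_ne_bot_of_finrank_lt
    rw [Module.finrank_prod, Module.finrank_prod, Module.finrank_fintype_fun_eq_card,
      Module.finrank_fintype_fun_eq_card, Module.finrank_fintype_fun_eq_card, hc1, hc2,
      Fintype.card_fin]
    have : Module.finrank ℝ (LinearMap.range N.mulVecLin) ≤ r := hN
    omega
  obtain ⟨x, hx, hx0⟩ := Submodule.exists_mem_ne_zero_of_ne_bot hker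
  have hΦ : Φ x = 0 := hx
  have h1 : N *ᵥ x = 0 := by
    have := congrArg (fun z => (z.1 : Fin n → ℝ)) hΦ
    simpa [Φ] using this
  have h2 : ∀ i : Fin n, k + r < (i:ℕ) → x i = 0 := by
    intro i hi
    have := congrFun (congrArg (fun z => z.2.1) hΦ) ⟨i, hi⟩
    simpa [Φ, LinearMap.funLeft] using this
  have h3 : ∀ i : Fin n, (i:ℕ) < k → (Q *ᵥ x) i = 0 := by
    intro i hi
    have := congrFun (congrArg (fun z => z.2.2) hΦ) ⟨i, hi⟩
    simpa [Φ, LinearMap.funLeft] using this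
  have hq1 : x ⬝ᵥ (A *ᵥ x) = ∑ i, e i * x i ^ 2 := by
    rw [hA, Matrix.add_mulVec, h1, add_zero]
    simp only [dotProduct, Matrix.mulVec_diagonal]
    exact Finset.sum_congr rfl fun i _ => by ring
  have hq2 : x ⬝ᵥ (A *ᵥ x) = ∑ i, τ i * (Q *ᵥ x) i ^ 2 := by
    rw [hAQ, ← Matrix.mulVec_mulVec, ← Matrix.mulVec_mulVec, Matrix.dotProduct_mulVec,
      Matrix.vecMul_transpose]
    simp only [dotProduct, Matrix.mulVec_diagonal]
    exact Finset.sum_congr rfl fun i _ => by ring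
  have hq3 : ∑ i, (Q *ᵥ x) i ^ 2 = ∑ i, x i ^ 2 := by
    have : (Q *ᵥ x) ⬝ᵥ (Q *ᵥ x) = x ⬝ᵥ x := by
      rw [← Matrix.vecMul_transpose, ← Matrix.dotProduct_mulVec, Matrix.vecMul_transpose,
        Matrix.mulVec_mulVec, hQ, Matrix.one_mulVec]
    simpa [dotProduct, sq] using this
  have hpos : 0 < ∑ i, x i ^ 2 := by
    obtain ⟨i, hi⟩ := Function.ne_iff.1 hx0
    exact Finset.sum_pos' (fun i _ => sq_nonneg _)
      ⟨i, Finset.mem_univ _, by have : x i ≠ 0 := hi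
                                positivity⟩
  have hle1 : ∑ i, e i * x i ^ 2 ≤ e ⟨k + r, hk⟩ * ∑ i, x i ^ 2 := by
    rw [Finset.mul_sum]
    refine Finset.sum_le_sum fun i _ => ?_
    by_cases hi : k + r < (i:ℕ)
    · simp [h2 i hi]
    · exact mul_le_mul_of_nonneg_right (he (Fin.le_def.2 (by simpa using hi))) (sq_nonneg _)
  have hle2 : τ ⟨k, by omega⟩ * ∑ i, x i ^ 2 ≤ ∑ i, τ i * (Q *ᵥ x) i ^ 2 := by
    rw [← hq3, Finset.mul_sum]
    refine Finset.sum_le_sum fun i _ => ?_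
    by_cases hi : (i:ℕ) < k
    · simp [h3 i hi]
    · exact mul_le_mul_of_nonneg_right (hτ (Fin.le_def.2 (by simpa using hi))) (sq_nonneg _)
  have : τ ⟨k, by omega⟩ * ∑ i, x i ^ 2 ≤ e ⟨k + r, hk⟩ * ∑ i, x i ^ 2 := by
    linarith
  exact le_of_mul_le_mul_right this hpos

/-- Ordered spectral decomposition of a positive definite matrix. -/
lemma ordered_spectral {n : ℕ} (A : Matrix (Fin n) (Fin n) ℝ) (hA : A.PosDef) :
    ∃ (τ : Fin n → ℝ) (Q : Matrix (Fin n) (Fin n) ℝ), Monotone τ ∧ (∀ i, 0 < τ i) ∧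
      Qᵀ * Q = 1 ∧ A = Qᵀ * Matrix.diagonal τ * Q ∧
      A.charpoly = ∏ i : Fin n, (Polynomial.X - Polynomial.C (τ i)) := by
  have hH := hA.isHermitian
  let p := Tuple.sort hH.eigenvalues
  let U : Matrix (Fin n) (Fin n) ℝ := (hH.eigenvectorUnitary : Matrix (Fin n) (Fin n) ℝ)
  have hUU : U * Uᵀ = 1 := by
    have := Unitary.mul_star_self_of_mem hH.eigenvectorUnitary.2
    simpa [Matrix.star_eq_conjTranspose, U] using this
  have hsp : A = U * Matrix.diagonal hH.eigenvalues * Uᵀ := by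
    have := hH.spectral_theorem
    rw [Unitary.conjStarAlgAut_apply] at this
    simpa [Matrix.star_eq_conjTranspose, U, Function.comp_def] using this
  refine ⟨hH.eigenvalues ∘ p, Uᵀ.submatrix p id, Tuple.monotone_sort _,
    fun i => hA.eigenvalues_pos _, ?_, ?_, ?_⟩
  · rw [Matrix.transpose_submatrix, Matrix.transpose_transpose,
      Matrix.submatrix_mul_equiv, hUU, Matrix.submatrix_id_id]
  · have hd : Matrix.diagonal (hH.eigenvalues ∘ p)
        = (Matrix.diagonal hH.eigenvalues).submatrix p p := by
      rw [Matrix.submatrix_diagonal_equiv]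
    rw [Matrix.transpose_submatrix, Matrix.transpose_transpose, hd,
      Matrix.submatrix_mul_equiv, Matrix.submatrix_mul_equiv, Matrix.submatrix_id_id, ← hsp]
  · rw [hH.charpoly_eq]
    exact (Equiv.prod_comp p (fun i => Polynomial.X - Polynomial.C (hH.eigenvalues i))).symm

lemma sum_compare {n r : ℕ} (hr : r ≤ n) (f : ℝ → ℝ) (hf : MemU f) (e s τ : Fin n → ℝ)
    (hs : ∀ i : Fin n, s i = if (i:ℕ) < r then 1 else e i)
    (he1 : ∀ i, e i ≤ 1) (hτ0 : ∀ i, 0 < τ i)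
    (h : ∀ k, (hk : k + r < n) → τ ⟨k, by omega⟩ ≤ e ⟨k + r, hk⟩) :
    ∑ i, f (s i) ≤ ∑ i, f (τ i) := by
  obtain ⟨hmin, hanti⟩ := memU_min hf
  obtain ⟨q, rfl⟩ := Nat.exists_eq_add_of_le hr
  rw [← Equiv.sum_comp (finCongr (Nat.add_comm q r)) (fun i => f (τ i)),
    Fin.sum_univ_add, Fin.sum_univ_add, add_comm]
  refine add_le_add (Finset.sum_le_sum fun j _ => ?_) (Finset.sum_le_sum fun j _ => ?_)
  · rw [hs, if_neg (by simp)]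
    have hj : (j:ℕ) + r < r + q := by omega
    have h1 := h j hj
    have e1 : (⟨(j:ℕ) + r, hj⟩ : Fin (r + q)) = Fin.natAdd r j := by
      ext; simp [add_comm]
    have e2 : finCongr (Nat.add_comm q r) (Fin.castAdd r j) =
      (⟨(j:ℕ), by omega⟩ : Fin (r + q)) := by
      ext; simp
    rw [e1] at h1
    rw [e2]
    exact hanti _ _ (hτ0 _) h1 (he1 _)
  · rw [hs, if_pos (by simp)]
    exact hmin _ (hτ0 _)

/-- Theorem 2.3 (i) of Spantini et al.: the matrix
`Γ̂pos = Γpr − Σ_{i<r} (δᵢ²/(1+δᵢ²)) ŵᵢ ŵᵢᵀ` belongs to `𝓜_r` and minimizes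
every loss `L ∈ 𝓛` to the exact posterior covariance over `𝓜_r`. -/
theorem optimal_posterior_covariance_approx
    (n m r : ℕ) (hn : 0 < n) (hm : 0 < m) (hr : r ≤ n)
    (G : Matrix (Fin m) (Fin n) ℝ)
    (Γobs : Matrix (Fin m) (Fin m) ℝ) (hobs : Γobs.PosDef)
    (Γpr : Matrix (Fin n) (Fin n) ℝ) (hpr : Γpr.PosDef)
    (H Γpos : Matrix (Fin n) (Fin n) ℝ)
    (hH : H = Gᵀ * Γobs⁻¹ * G)
    (hΓpos : Γpos = (H + Γpr⁻¹)⁻¹)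
    (δ : Fin n → ℝ) (w : Fin n → Fin n → ℝ)
    (hδ : ∀ i, 0 ≤ δ i)
    (hord : ∀ i j : Fin n, i ≤ j → (δ j) ^ 2 ≤ (δ i) ^ 2)
    (heig : ∀ i, H *ᵥ w i = (δ i) ^ 2 • (Γpr⁻¹ *ᵥ w i))
    (hnorm : ∀ i j, w i ⬝ᵥ (Γpr⁻¹ *ᵥ w j) = if i = j then (1:ℝ) else 0)
    (f : ℝ → ℝ) (hf : MemU f)
    (Γhat : Matrix (Fin n) (Fin n) ℝ)
    (hΓhat : Γhat = Γpr - ∑ i ∈ Finset.univ.filter (fun i : Fin n => (i : ℕ) < r),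
      ((δ i) ^ 2 / (1 + (δ i) ^ 2)) • vecMulVec (w i) (w i)) :
    Γhat ∈ MClass Γpr r ∧
      ∀ Γt ∈ MClass Γpr r, ∀ σ σ' : Fin n → ℝ,
        IsGenEigs Γpos Γhat σ → IsGenEigs Γpos Γt σ' →
        ∑ i, f (σ i) ≤ ∑ i, f (σ' i) := by
  classical
  set P := Γpr⁻¹ with hP
  have hPpos : P.PosDef := hpr.inv
  have hprdet : IsUnit Γpr.det := (Matrix.isUnit_iff_isUnit_det _).1 hpr.isUnit
  have hPT : Pᵀ = P := by simpa [Matrix.IsHermitian] using hPpos.isHermitian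
  let W : Matrix (Fin n) (Fin n) ℝ := Matrix.of fun a i => w i a
  let e : Fin n → ℝ := fun i => 1 / (1 + (δ i) ^ 2)
  let E : Matrix (Fin n) (Fin n) ℝ := Matrix.diagonal fun i => √(e i)
  have he0 : ∀ i, 0 < e i := fun i => by positivity
  have he1 : ∀ i, e i ≤ 1 := fun i => by
    have := sq_nonneg (δ i)
    exact (div_le_one (by positivity)).2 (by linarith)
  have hemono : Monotone e := fun i j hij => by
    have := hord i j hij
    exact one_div_le_one_div_of_le (by positivity) (by linarith)
  have hEE : E * E = Matrix.diagonal e := by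
    rw [Matrix.diagonal_mul_diagonal]
    congr 1
    ext i
    exact Real.mul_self_sqrt (he0 i).le
  have hET : Eᵀ = E := Matrix.diagonal_transpose _
  have hcol : ∀ (M : Matrix (Fin n) (Fin n) ℝ) a i, (M * W) a i = (M *ᵥ w i) a := by
    intro M a i
    simp [Matrix.mul_apply, Matrix.mulVec, dotProduct, W]
  have hWPW : Wᵀ * (P * W) = 1 := by
    ext i j
    rw [Matrix.one_apply, ← hnorm i j, Matrix.mul_apply]
    simp only [hcol, dotProduct]
    rfl
  have hPWW : P * W * Wᵀ = 1 := _root_.mul_eq_one_comm.1 hWPW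
  have hWWP : W * (Wᵀ * P) = 1 := by
    rw [← Matrix.mul_assoc] at hWPW
    exact _root_.mul_eq_one_comm.1 hWPW
  have hpr_eq : Γpr = W * Wᵀ := by
    have : P⁻¹ = W * Wᵀ := Matrix.inv_eq_right_inv (by rw [← Matrix.mul_assoc, hPWW])
    rw [← this, hP, Matrix.nonsing_inv_nonsing_inv _ hprdet]
  have hHW : H * W = P * W * Matrix.diagonal (fun i => (δ i) ^ 2) := by
    ext a i
    rw [Matrix.mul_diagonal, hcol, hcol, heig]
    simp [mul_comm]
  let V := W * E
  have hpos_eq : Γpos = V * Vᵀ := by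
    rw [hΓpos]
    apply Matrix.inv_eq_right_inv
    have h1 : (H + P) * W = P * W * Matrix.diagonal (fun i => 1 + (δ i) ^ 2) := by
      rw [Matrix.add_mul, hHW]
      nth_rewrite 2 [← Matrix.mul_one (P * W)]
      rw [← Matrix.mul_add, ← Matrix.diagonal_one, Matrix.diagonal_add]
      congr 2
      ext i
      ring
    have h2 : Matrix.diagonal (fun i => 1 + (δ i) ^ 2) * Matrix.diagonal e = 1 := by
      rw [Matrix.diagonal_mul_diagonal, ← Matrix.diagonal_one]
      congr 1
      ext i
      have : (1 + (δ i) ^ 2) ≠ 0 := by positivity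
      simp only [e]
      field_simp
    calc (H + P) * (V * Vᵀ) = ((H + P) * W) * (E * E) * Wᵀ := by
          simp only [V, Matrix.transpose_mul, hET, Matrix.mul_assoc]
      _ = P * W * (Matrix.diagonal (fun i => 1 + (δ i) ^ 2) * Matrix.diagonal e) * Wᵀ := by
          rw [h1, hEE, Matrix.mul_assoc (P * W)]
      _ = 1 := by rw [h2, Matrix.mul_one, hPWW]
  have hVPV : Vᵀ * P * V = Matrix.diagonal e := by
    calc Vᵀ * P * V = E * (Wᵀ * (P * W)) * E := by
          simp only [V, Matrix.transpose_mul, hET, Matrix.mul_assoc]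
      _ = _ := by rw [hWPW, Matrix.mul_one, hEE]
  -- charpoly of the pencil
  have hchar : ∀ M : Matrix (Fin n) (Fin n) ℝ,
      (M⁻¹ * Γpos).charpoly = (Vᵀ * M⁻¹ * V).charpoly := by
    intro M
    rw [hpos_eq, ← Matrix.mul_assoc, Matrix.charpoly_mul_comm, Matrix.mul_assoc]
  -- the optimal matrix
  let g : Fin n → ℝ := fun i => if (i:ℕ) < r then √((δ i) ^ 2 / (1 + (δ i) ^ 2)) else 0
  let c : Fin n → ℝ := fun i => if (i:ℕ) < r then e i else 1
  have hc0 : ∀ i, 0 < c i := fun i => by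
    simp only [c]; split_ifs
    · exact he0 i
    · exact one_pos
  have hgg : ∀ i, g i * g i = if (i:ℕ) < r then (δ i) ^ 2 / (1 + (δ i) ^ 2) else 0 := by
    intro i
    simp only [g]; split_ifs
    · exact Real.mul_self_sqrt (by positivity)
    · simp
  have hhatK : Γhat = Γpr - (W * Matrix.diagonal g) * (W * Matrix.diagonal g)ᵀ := by
    rw [hΓhat]
    congr 1
    ext a b
    rw [Matrix.sum_apply, Finset.sum_filter, Matrix.mul_apply]
    refine Finset.sum_congr rfl fun i _ => ?_
    rw [Matrix.transpose_apply, Matrix.mul_diagonal, Matrix.mul_diagonal]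
    have : W a i * g i * (W b i * g i) = (g i * g i) * (w i a * w i b) := by
      simp only [W, Matrix.of_apply]; ring
    rw [this, hgg]
    split_ifs <;> simp [Matrix.vecMulVec_apply]
  have hhatc : Γhat = W * Matrix.diagonal c * Wᵀ := by
    rw [hhatK, Matrix.transpose_mul, Matrix.diagonal_transpose, hpr_eq]
    have : Matrix.diagonal c = 1 - Matrix.diagonal g * Matrix.diagonal g := by
      rw [Matrix.diagonal_mul_diagonal, ← Matrix.diagonal_one, Matrix.diagonal_sub]
      congr 1
      ext i
      rw [hgg]
      simp only [c, e]
      have : (1 + (δ i) ^ 2) ≠ 0 := by positivity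
      split_ifs
      · field_simp; ring
      · simp
    rw [this, Matrix.mul_sub, Matrix.sub_mul, Matrix.mul_one]
    simp only [Matrix.mul_assoc]
  have hWunit : IsUnit W := IsUnit.of_mul_eq_one _ hWWP
  have hhatpos : Γhat.PosDef := by
    rw [hhatc]
    have h1 : (Matrix.diagonal c).PosDef := Matrix.PosDef.diagonal hc0
    have := h1.mul_mul_conjTranspose_same (B := W)
      (Matrix.vecMul_injective_of_isUnit hWunit)
    simpa using this
  have hVunit : IsUnit V := by
    have hEu : IsUnit (E * E) := by
      rw [hEE, Matrix.isUnit_diagonal, Pi.isUnit_iff]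
      exact fun i => (he0 i).ne'.isUnit
    have hEu' : IsUnit E := by
      rw [Matrix.isUnit_iff_isUnit_det] at hEu ⊢
      rw [Matrix.det_mul] at hEu
      exact isUnit_of_mul_isUnit_left hEu
    exact hWunit.mul hEu'
  refine ⟨⟨_, ?_, hhatK, hhatpos⟩, ?_⟩
  · refine (Matrix.rank_mul_le_right _ _).trans ?_
    rw [Matrix.rank_diagonal]
    calc Fintype.card {i // g i ≠ 0} ≤ Fintype.card {i : Fin n // (i:ℕ) < r} := by
          refine Fintype.card_subtype_mono _ _ ?_
          intro i hi
          by_contra hc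
          exact hi (if_neg hc)
      _ ≤ r := by
          have := Fintype.card_le_of_injective
            (fun i : {i : Fin n // (i:ℕ) < r} => (⟨i.1, i.2⟩ : Fin r))
            (fun a b hab => by
              have := congrArg Fin.val hab
              exact Subtype.ext (Fin.ext this))
          simpa using this
  · rintro Γt ⟨K, hK, hΓt, hΓtpos⟩ σ σ' hσ hσ'
    let s : Fin n → ℝ := fun i => if (i:ℕ) < r then 1 else e i
    have hhatinv : Γhat⁻¹ = P * W * Matrix.diagonal (fun i => (c i)⁻¹) * (Wᵀ * P) := by
      apply Matrix.inv_eq_right_inv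
      have hcc : Matrix.diagonal c * Matrix.diagonal (fun i => (c i)⁻¹) = 1 := by
        rw [Matrix.diagonal_mul_diagonal, ← Matrix.diagonal_one]
        congr 1
        ext i
        exact mul_inv_cancel₀ (hc0 i).ne'
      calc Γhat * (P * W * Matrix.diagonal (fun i => (c i)⁻¹) * (Wᵀ * P))
          = W * Matrix.diagonal c * (Wᵀ * (P * W)) * Matrix.diagonal (fun i => (c i)⁻¹)
              * (Wᵀ * P) := by
            rw [hhatc]; simp only [Matrix.mul_assoc]
        _ = W * (Matrix.diagonal c * Matrix.diagonal (fun i => (c i)⁻¹)) * (Wᵀ * P) := by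
            rw [hWPW]; simp only [Matrix.mul_assoc, Matrix.mul_one]
        _ = 1 := by rw [hcc, Matrix.mul_one, hWWP]
    have hhatV : Vᵀ * Γhat⁻¹ * V = Matrix.diagonal s := by
      calc Vᵀ * Γhat⁻¹ * V = E * (Wᵀ * (P * W)) * Matrix.diagonal (fun i => (c i)⁻¹)
            * (Wᵀ * (P * W)) * E := by
            rw [hhatinv]
            simp only [V, Matrix.transpose_mul, hET, Matrix.mul_assoc]
        _ = E * Matrix.diagonal (fun i => (c i)⁻¹) * E := by
            rw [hWPW]; simp only [Matrix.mul_one]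
        _ = Matrix.diagonal s := by
            simp only [E]
            rw [Matrix.diagonal_mul_diagonal, Matrix.diagonal_mul_diagonal]
            congr 1
            ext i
            have h1 := Real.mul_self_sqrt (he0 i).le
            have h2 : √(e i) * (c i)⁻¹ * √(e i) = e i * (c i)⁻¹ := by
              rw [mul_right_comm, h1]
            rw [h2]
            simp only [c, s]
            split_ifs
            · exact mul_inv_cancel₀ (he0 i).ne'
            · simp
    have hA : (Vᵀ * Γt⁻¹ * V).PosDef := by
      have := hΓtpos.inv.conjTranspose_mul_mul_same (B := V)
        (Matrix.mulVec_injective_of_isUnit hVunit)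
      simpa using this
    obtain ⟨τ, Q, hτm, hτ0, hQ, hAQ, hτc⟩ := ordered_spectral _ hA
    have e1 : ∑ i, f (σ i) = ∑ i, f (s i) := by
      apply sum_eq_of_prod
      rw [← hσ, hchar, hhatV, Matrix.charpoly_diagonal]
    have e2 : ∑ i, f (σ' i) = ∑ i, f (τ i) := by
      apply sum_eq_of_prod
      rw [← hσ', hchar, hτc]
    rw [e1, e2]
    have hΓtdet : IsUnit Γt.det := (Matrix.isUnit_iff_isUnit_det _).1 hΓtpos.isUnit
    have hdiff : Γt⁻¹ = P + Γt⁻¹ * (K * Kᵀ) * P := by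
      have h1 : K * Kᵀ = Γpr - Γt := by rw [hΓt]; abel
      rw [h1, Matrix.mul_sub, Matrix.sub_mul, Matrix.nonsing_inv_mul _ hΓtdet, Matrix.one_mul,
        Matrix.mul_assoc, hP, Matrix.mul_nonsing_inv _ hprdet, Matrix.mul_one]
      abel
    refine sum_compare hr f hf e s τ (fun i => rfl) he1 hτ0 fun k hk => ?_
    refine weyl_bound hk (Vᵀ * Γt⁻¹ * V) (Vᵀ * Γt⁻¹ * K * (Kᵀ * P * V)) e τ hemono hτm ?_ ?_
      Q hQ hAQ
    · nth_rewrite 1 [hdiff]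
      rw [Matrix.mul_add, Matrix.add_mul, hVPV]
      simp only [Matrix.mul_assoc]
    · exact ((Matrix.rank_mul_le_left _ _).trans (Matrix.rank_mul_le_right _ _)).trans hK
end

section
/- Let L ∈ 𝓛, say L(A,B) = Σᵢ f(σᵢ) with f ∈ 𝓤, and let Γ̂_pos = Γ_pr − Σ_{i=1}^{r} (δᵢ²/(1+δᵢ²)) ŵᵢ ŵᵢᵀ. Then the minimum loss over 𝓜_r equals L(Γ̂_pos, Γ_pos) = r·f(1) + Σ_{i>r} f(1/(1+δᵢ²)). -/
open Matrix MeasureTheory Polynomial Filter Finset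

lemma aux_f_anti {f : ℝ → ℝ} (hf : MemU f) : AntitoneOn f (Set.Ioc 0 1) := by
  obtain ⟨f', h1, -, h3, -⟩ := hf
  apply antitoneOn_of_deriv_nonpos (convex_Ioc 0 1)
  · intro x hx
    exact (h1 x hx.1).continuousAt.continuousWithinAt
  · intro x hx
    rw [interior_Ioc] at hx
    exact (h1 x hx.1).differentiableAt.differentiableWithinAt
  · intro x hx
    rw [interior_Ioc] at hx
    rw [(h1 x hx.1).deriv]
    have := h3 x hx.1 hx.2.ne
    have h : 0 < 1 - x := by linarith [hx.2]
    by_contra hc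
    push Not at hc
    nlinarith [mul_pos hc h]

lemma aux_f_mono {f : ℝ → ℝ} (hf : MemU f) : MonotoneOn f (Set.Ici 1) := by
  obtain ⟨f', h1, -, h3, -⟩ := hf
  have hp : ∀ x : ℝ, 1 ≤ x → x ∈ Set.Ioi (0:ℝ) := fun x hx => lt_of_lt_of_le one_pos hx
  apply monotoneOn_of_deriv_nonneg (convex_Ici 1)
  · intro x hx
    exact (h1 x (hp x hx)).continuousAt.continuousWithinAt
  · intro x hx
    rw [interior_Ici] at hx
    exact (h1 x (hp x (le_of_lt hx))).differentiableAt.differentiableWithinAt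
  · intro x hx
    rw [interior_Ici] at hx
    have hx' : 1 < x := hx
    rw [(h1 x (hp x hx'.le)).deriv]
    have := h3 x (hp x hx'.le) hx'.ne'
    by_contra hc
    push Not at hc
    nlinarith [mul_pos_of_neg_of_neg hc (show 1 - x < 0 by linarith)]

lemma aux_f_one {f : ℝ → ℝ} (hf : MemU f) {x : ℝ} (hx : 0 < x) : f 1 ≤ f x := by
  rcases le_total x 1 with h | h
  · exact aux_f_anti hf ⟨hx, h⟩ ⟨one_pos, le_refl _⟩ h
  · exact aux_f_mono hf (Set.mem_Ici.2 le_rfl) h h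

lemma aux_sum {n : ℕ} {A B Q : Matrix (Fin n) (Fin n) ℝ} {τ σ : Fin n → ℝ}
    (hQ : IsUnit Q.det) (hA : A = Q * Qᵀ) (hB : B = Q * diagonal τ * Qᵀ) (hτ : ∀ i, τ i ≠ 0)
    (hσ : IsGenEigs A B σ) (f : ℝ → ℝ) : ∑ i, f (σ i) = ∑ i, f (1 / τ i) := by
  have hQT : IsUnit Qᵀ.det := by rwa [det_transpose]
  have hd : diagonal τ * diagonal (fun i => 1 / τ i) = (1 : Matrix (Fin n) (Fin n) ℝ) := by
    rw [diagonal_mul_diagonal, ← diagonal_one]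
    congr 1
    ext i
    field_simp [hτ i]
  have hBi : B⁻¹ = Qᵀ⁻¹ * diagonal (fun i => 1 / τ i) * Q⁻¹ := by
    apply inv_eq_right_inv
    calc B * (Qᵀ⁻¹ * diagonal (fun i => 1 / τ i) * Q⁻¹)
        = Q * (diagonal τ * (Qᵀ * Qᵀ⁻¹) * diagonal (fun i => 1 / τ i)) * Q⁻¹ := by
          rw [hB]; simp only [Matrix.mul_assoc]
      _ = 1 := by rw [mul_nonsing_inv _ hQT, Matrix.mul_one, hd, Matrix.mul_one,
                    mul_nonsing_inv _ hQ]
  have hcp : (B⁻¹ * A).charpoly = ∏ i : Fin n, (X - C (1 / τ i)) := by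
    have e : B⁻¹ * A = Qᵀ⁻¹ * (diagonal (fun i => 1 / τ i) * Qᵀ) := by
      calc B⁻¹ * A = Qᵀ⁻¹ * (diagonal (fun i => 1 / τ i) * (Q⁻¹ * Q) * Qᵀ) := by
            rw [hBi, hA]; simp only [Matrix.mul_assoc]
        _ = _ := by rw [nonsing_inv_mul _ hQ, Matrix.mul_one]
    rw [e, Matrix.charpoly_mul_comm, Matrix.mul_assoc, mul_nonsing_inv _ hQT, Matrix.mul_one,
      charpoly_diagonal]
  unfold IsGenEigs at hσ
  rw [hcp] at hσ
  have h2 := congrArg Polynomial.roots hσ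
  have hroots : ∀ a : Fin n → ℝ,
      (∏ i : Fin n, (X - C (a i))).roots = Multiset.map a Finset.univ.val := by
    intro a
    have e := Polynomial.roots_multiset_prod_X_sub_C (Multiset.map a Finset.univ.val)
    rw [Multiset.map_map] at e
    exact e
  rw [hroots, hroots] at h2
  have h3 := congrArg (fun s => (s.map f).sum) h2
  simp only [Multiset.map_map] at h3
  exact h3.symm

lemma aux_spec {n : ℕ} {T : Matrix (Fin n) (Fin n) ℝ} (hT : T.PosDef) :
    ∃ (U : Matrix (Fin n) (Fin n) ℝ) (τ : Fin n → ℝ), Uᵀ * U = 1 ∧ U * Uᵀ = 1 ∧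
      (∀ i j, i ≤ j → τ j ≤ τ i) ∧ (∀ i, 0 < τ i) ∧ T = U * diagonal τ * Uᵀ := by
  set e := hT.1.eigenvalues with he
  let p : Equiv.Perm (Fin n) := Tuple.sort (fun i => - e i)
  have hp : Monotone ((fun i => - e i) ∘ p) := Tuple.monotone_sort _
  let V : Matrix (Fin n) (Fin n) ℝ := (hT.1.eigenvectorUnitary : Matrix (Fin n) (Fin n) ℝ)
  have hV : V * Vᵀ = 1 := by
    have : V * star V = 1 := Unitary.coe_mul_star_self hT.1.eigenvectorUnitary
    rwa [star_eq_conjTranspose, conjTranspose_eq_transpose_of_trivial] at this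
  have hV' : Vᵀ * V = 1 := mul_eq_one_comm.1 hV
  have hs : T = V * diagonal e * Vᵀ := by
    have := hT.1.spectral_theorem
    rw [Unitary.conjStarAlgAut_apply] at this
    rw [star_eq_conjTranspose, conjTranspose_eq_transpose_of_trivial] at this
    exact this
  refine ⟨V.submatrix id p, e ∘ p, ?_, ?_, ?_, ?_, ?_⟩
  · rw [transpose_submatrix]
    have := submatrix_mul_equiv Vᵀ V p (Equiv.refl _) p
    rw [hV', Equiv.coe_refl] at this
    rw [this, submatrix_one_equiv]
  · rw [transpose_submatrix, submatrix_mul_equiv, hV]; simp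
  · intro i j hij
    have := hp hij
    simp only [Function.comp] at this ⊢
    linarith
  · intro i; exact hT.eigenvalues_pos _
  · have : diagonal (e ∘ p) = (diagonal e).submatrix p p := by
      rw [submatrix_diagonal_equiv]
    rw [this, transpose_submatrix, submatrix_mul_equiv, submatrix_mul_equiv, ← hs]; simp

lemma aux_quad {n : ℕ} (a x : Fin n → ℝ) : x ⬝ᵥ (diagonal a *ᵥ x) = ∑ i, a i * (x i) ^ 2 := by
  simp only [dotProduct, mulVec_diagonal]
  exact Finset.sum_congr rfl fun i _ => by ring

lemma aux_weyl {n r : ℕ} (d τ : Fin n → ℝ) (K U : Matrix (Fin n) (Fin n) ℝ)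
    (hd : ∀ i j, i ≤ j → d j ≤ d i) (hτ : ∀ i j, i ≤ j → τ j ≤ τ i) (hK : K.rank ≤ r)
    (hU : U * Uᵀ = 1) (h : diagonal d - K * Kᵀ = U * diagonal τ * Uᵀ)
    (j k : Fin n) (hk : (k : ℕ) = j + r) : d k ≤ τ j := by
  let L1 : (Fin n → ℝ) →ₗ[ℝ] ({i : Fin n // k < i} → ℝ) := LinearMap.funLeft ℝ ℝ Subtype.val
  let L2 : (Fin n → ℝ) →ₗ[ℝ] LinearMap.range (Kᵀ.mulVecLin) := Kᵀ.mulVecLin.rangeRestrict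
  let L3 : (Fin n → ℝ) →ₗ[ℝ] ({i : Fin n // i < j} → ℝ) :=
    (LinearMap.funLeft ℝ ℝ Subtype.val) ∘ₗ (Uᵀ.mulVecLin)
  let L := L1.prod (L2.prod L3)
  have hker : LinearMap.ker L ≠ ⊥ := by
    apply LinearMap.ker_ne_bot_of_finrank_lt
    have hKt : Module.finrank ℝ (LinearMap.range (Kᵀ.mulVecLin)) ≤ r := by
      have : Kᵀ.rank ≤ r := by rwa [rank_transpose]
      exact this
    rw [Module.finrank_prod, Module.finrank_prod, Module.finrank_fintype_fun_eq_card,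
      Module.finrank_fintype_fun_eq_card, Module.finrank_fintype_fun_eq_card]
    have c1 : Fintype.card {i : Fin n // k < i} = n - 1 - k := by
      rw [Fintype.card_subtype]
      have : (univ.filter fun i : Fin n => k < i) = Finset.Ioi k := by ext; simp
      rw [this, Fin.card_Ioi]
    have c2 : Fintype.card {i : Fin n // i < j} = j := by
      rw [Fintype.card_subtype]
      have : (univ.filter fun i : Fin n => i < j) = Finset.Iio j := by ext; simp
      rw [this, Fin.card_Iio]
    rw [c1, c2, Fintype.card_fin]
    have := k.2
    omega
  obtain ⟨x, hx, hx0⟩ := Submodule.exists_mem_ne_zero_of_ne_bot hker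
  have hLx : L x = 0 := hx
  have h1 : ∀ i, k < i → x i = 0 := fun i hi => congrFun (congrArg Prod.fst hLx) ⟨i, hi⟩
  have h2 : Kᵀ *ᵥ x = 0 := congrArg Subtype.val (congrArg (fun z => z.2.1) hLx)
  have h3 : ∀ i, i < j → (Uᵀ *ᵥ x) i = 0 := fun i hi =>
    congrFun (congrArg (fun z => z.2.2) hLx) ⟨i, hi⟩
  set y := Uᵀ *ᵥ x with hy
  have q := congrArg (fun M => x ⬝ᵥ (M *ᵥ x)) h
  simp only [sub_mulVec, ← mulVec_mulVec, h2, mulVec_zero, sub_zero] at q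
  rw [← hy, dotProduct_mulVec x U, ← mulVec_transpose, ← hy, aux_quad, aux_quad] at q
  have hn : ∑ i, y i ^ 2 = ∑ i, x i ^ 2 := by
    have : y ⬝ᵥ y = x ⬝ᵥ x := by
      conv_lhs => rw [hy, dotProduct_mulVec, ← mulVec_transpose, transpose_transpose,
        mulVec_mulVec, hU, one_mulVec]
    simpa [dotProduct, sq] using this
  have hpos : 0 < ∑ i, x i ^ 2 := by
    obtain ⟨i, hi⟩ := Function.ne_iff.1 hx0
    exact Finset.sum_pos' (fun i _ => sq_nonneg _) ⟨i, mem_univ _, by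
      have : x i ≠ 0 := hi
      positivity⟩
  have l1 : d k * ∑ i, x i ^ 2 ≤ ∑ i, d i * x i ^ 2 := by
    rw [Finset.mul_sum]
    refine Finset.sum_le_sum fun i _ => ?_
    rcases lt_or_ge k i with hi | hi
    · simp [h1 i hi]
    · exact mul_le_mul_of_nonneg_right (hd _ _ hi) (sq_nonneg _)
  have l2 : ∑ i, τ i * y i ^ 2 ≤ τ j * ∑ i, y i ^ 2 := by
    rw [Finset.mul_sum]
    refine Finset.sum_le_sum fun i _ => ?_
    rcases lt_or_ge i j with hi | hi
    · simp [h3 i hi]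
    · exact mul_le_mul_of_nonneg_right (hτ _ _ hi) (sq_nonneg _)
  rw [hn] at l2
  have : d k * ∑ i, x i ^ 2 ≤ τ j * ∑ i, x i ^ 2 := by linarith
  exact le_of_mul_le_mul_right this hpos

lemma aux_final {n r : ℕ} (hr : r ≤ n) {f : ℝ → ℝ} (hf : MemU f) (d τ : Fin n → ℝ)
    (hd : ∀ i, 1 ≤ d i) (hτ : ∀ i, 0 < τ i)
    (h : ∀ j k : Fin n, (k : ℕ) = j + r → d k ≤ τ j) :
    (r : ℝ) * f 1 + ∑ i ∈ Finset.univ.filter (fun i : Fin n => r ≤ (i : ℕ)), f (1 / d i)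
      ≤ ∑ i, f (1 / τ i) := by
  obtain ⟨p, rfl⟩ : ∃ p, n = p + r := ⟨n - r, by omega⟩
  rw [Fin.sum_univ_add, add_comm]
  apply add_le_add
  · have : ∑ i ∈ Finset.univ.filter (fun i : Fin (p + r) => r ≤ (i : ℕ)), f (1 / d i)
        = ∑ i : Fin p, f (1 / d (i.addNat r)) := by
      symm
      refine Finset.sum_bij (fun i _ => i.addNat r) ?_ ?_ ?_ ?_
      · intro i _; simp
      · intro a _ b _ hab; simpa using hab
      · intro b hb
        simp only [mem_filter, mem_univ, true_and] at hb
        exact ⟨⟨b - r, by omega⟩, mem_univ _, by ext; simp; omega⟩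
      · intro i _; rfl
    rw [this]
    refine Finset.sum_le_sum fun i _ => ?_
    have hle := h (Fin.castAdd r i) (i.addNat r) (by simp)
    have h1 := hd (i.addNat r)
    have h0 := hτ (Fin.castAdd r i)
    have h4 : 1 / d (i.addNat r) ≤ 1 := by rw [div_le_one (by linarith)]; exact h1
    have h5 : 1 / τ (Fin.castAdd r i) ≤ 1 / d (i.addNat r) :=
      one_div_le_one_div_of_le (by linarith) hle
    exact aux_f_anti hf ⟨by positivity, h5.trans h4⟩ ⟨by positivity, h4⟩ h5
  · calc (r : ℝ) * f 1 = ∑ i : Fin r, f 1 := by simp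
      _ ≤ _ := Finset.sum_le_sum fun i _ => aux_f_one hf (one_div_pos.2 (hτ _))

/-- The minimum loss over `𝓜_r` equals
`L(Γ̂pos, Γpos) = r·f(1) + Σ_{i>r} f(1/(1+δᵢ²))`. -/
theorem minimum_loss_posterior_covariance_approx
    (n m r : ℕ) (hn : 0 < n) (hm : 0 < m) (hr : r ≤ n)
    (G : Matrix (Fin m) (Fin n) ℝ)
    (Γobs : Matrix (Fin m) (Fin m) ℝ) (hobs : Γobs.PosDef)
    (Γpr : Matrix (Fin n) (Fin n) ℝ) (hpr : Γpr.PosDef)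
    (H Γpos : Matrix (Fin n) (Fin n) ℝ)
    (hH : H = Gᵀ * Γobs⁻¹ * G)
    (hΓpos : Γpos = (H + Γpr⁻¹)⁻¹)
    (δ : Fin n → ℝ) (w : Fin n → Fin n → ℝ)
    (hδ : ∀ i, 0 ≤ δ i)
    (hord : ∀ i j : Fin n, i ≤ j → (δ j) ^ 2 ≤ (δ i) ^ 2)
    (heig : ∀ i, H *ᵥ w i = (δ i) ^ 2 • (Γpr⁻¹ *ᵥ w i))
    (hnorm : ∀ i j, w i ⬝ᵥ (Γpr⁻¹ *ᵥ w j) = if i = j then (1:ℝ) else 0)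
    (f : ℝ → ℝ) (hf : MemU f)
    (Γhat : Matrix (Fin n) (Fin n) ℝ)
    (hΓhat : Γhat = Γpr - ∑ i ∈ Finset.univ.filter (fun i : Fin n => (i : ℕ) < r),
      ((δ i) ^ 2 / (1 + (δ i) ^ 2)) • vecMulVec (w i) (w i)) :
    (∀ σ : Fin n → ℝ, IsGenEigs Γpos Γhat σ →
      ∑ i, f (σ i) =
        (r : ℝ) * f 1 +
          ∑ i ∈ Finset.univ.filter (fun i : Fin n => r ≤ (i : ℕ)),
            f (1 / (1 + (δ i) ^ 2))) ∧
    (∀ Γt ∈ MClass Γpr r, ∀ σ' : Fin n → ℝ, IsGenEigs Γpos Γt σ' →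
      (r : ℝ) * f 1 +
          ∑ i ∈ Finset.univ.filter (fun i : Fin n => r ≤ (i : ℕ)),
            f (1 / (1 + (δ i) ^ 2)) ≤ ∑ i, f (σ' i)) := by
  have hδ1 : ∀ i, 0 < 1 + δ i ^ 2 := fun i => by positivity
  have hprdet : IsUnit Γpr.det := hpr.det_pos.ne'.isUnit
  let W : Matrix (Fin n) (Fin n) ℝ := Matrix.of fun i j => w j i
  have hcol : ∀ (M : Matrix (Fin n) (Fin n) ℝ) i j, (M * W) i j = (M *ᵥ w j) i := by
    intro M i j
    rfl
  have hW1 : Wᵀ * (Γpr⁻¹ * W) = 1 := by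
    ext i j
    rw [Matrix.one_apply, ← hnorm i j]
    rfl
  have hW2 : Γpr⁻¹ * W * Wᵀ = 1 := mul_eq_one_comm.1 hW1
  have hWW : Γpr = W * Wᵀ := by
    have := congrArg (fun M => Γpr * M) hW2
    simp only [Matrix.mul_assoc, Matrix.mul_one] at this
    rw [mul_nonsing_inv_cancel_left _ _ hprdet] at this
    exact this.symm
  have hHW : H * W = Γpr⁻¹ * W * diagonal (fun i => δ i ^ 2) := by
    ext i j
    rw [hcol, heig, mul_diagonal, hcol]
    simp [mul_comm]
  have hsum : (H + Γpr⁻¹) * W = Γpr⁻¹ * W * diagonal (fun i => 1 + δ i ^ 2) := by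
    rw [Matrix.add_mul, hHW]
    have : diagonal (fun i => 1 + δ i ^ 2)
        = (1 : Matrix (Fin n) (Fin n) ℝ) + diagonal (fun i => δ i ^ 2) := by
      rw [← diagonal_one, diagonal_add]
    rw [this, Matrix.mul_add, Matrix.mul_one, add_comm]
  let s : Fin n → ℝ := fun i => 1 / Real.sqrt (1 + δ i ^ 2)
  have hs0 : ∀ i, s i ≠ 0 := fun i => (one_div_pos.2 (Real.sqrt_pos.2 (hδ1 i))).ne'
  have hss : ∀ i, s i * s i = 1 / (1 + δ i ^ 2) := fun i => by
    simp only [s]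
    rw [div_mul_div_comm, Real.mul_self_sqrt (hδ1 i).le, one_mul]
  let V := W * diagonal s
  have hVd : ∀ a : Fin n → ℝ, V * diagonal a * Vᵀ
      = W * diagonal (fun i => a i / (1 + δ i ^ 2)) * Wᵀ := by
    intro a
    have : diagonal s * diagonal a * diagonal s = diagonal (fun i => a i / (1 + δ i ^ 2)) := by
      rw [diagonal_mul_diagonal, diagonal_mul_diagonal]
      congr 1
      ext i
      rw [div_eq_mul_one_div, ← hss i]; ring
    rw [← this]
    simp only [V, transpose_mul, diagonal_transpose, Matrix.mul_assoc]
  have hVV : V * Vᵀ = W * diagonal (fun i => 1 / (1 + δ i ^ 2)) * Wᵀ := by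
    have := hVd (fun _ => 1)
    rwa [diagonal_one, Matrix.mul_one] at this
  have hpos : Γpos = V * Vᵀ := by
    rw [hΓpos, hVV]
    apply inv_eq_right_inv
    have : diagonal (fun i => 1 + δ i ^ 2) * diagonal (fun i => 1 / (1 + δ i ^ 2))
        = (1 : Matrix (Fin n) (Fin n) ℝ) := by
      rw [diagonal_mul_diagonal, ← diagonal_one]
      congr 1
      ext i
      have := (hδ1 i).ne'
      field_simp
    rw [← Matrix.mul_assoc, ← Matrix.mul_assoc, hsum, Matrix.mul_assoc (Γpr⁻¹ * W) (diagonal _) (diagonal _), this,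
      Matrix.mul_one, hW2]
  have hWdet : IsUnit W.det := by
    have : Wᵀ * Γpr⁻¹ * W = 1 := by rw [Matrix.mul_assoc]; exact hW1
    exact isUnit_det_of_left_inverse this
  have hVdet : IsUnit V.det := by
    simp only [V, det_mul, det_diagonal]
    exact hWdet.mul (Finset.prod_ne_zero_iff.2 fun i _ => hs0 i).isUnit
  have hVTdet : IsUnit Vᵀ.det := by rwa [det_transpose]
  have hprV : Γpr = V * diagonal (fun i => 1 + δ i ^ 2) * Vᵀ := by
    rw [hVd]
    have : (fun i => (1 + δ i ^ 2) / (1 + δ i ^ 2)) = fun _ => (1:ℝ) := by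
      ext i; exact div_self (hδ1 i).ne'
    rw [this, diagonal_one, Matrix.mul_one, hWW]
  constructor
  · intro σ hσ
    have hhat : Γhat = V * diagonal (fun i : Fin n => if (i : ℕ) < r then 1 else 1 + δ i ^ 2) * Vᵀ := by
      rw [hVd, hΓhat]
      have e1 : ∑ i ∈ Finset.univ.filter (fun i : Fin n => (i : ℕ) < r),
          ((δ i) ^ 2 / (1 + (δ i) ^ 2)) • vecMulVec (w i) (w i)
          = W * diagonal (fun i : Fin n =>
            if (i : ℕ) < r then (δ i) ^ 2 / (1 + (δ i) ^ 2) else 0) * Wᵀ := by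
        ext a b
        rw [Matrix.sum_apply, Matrix.mul_apply, Finset.sum_filter]
        refine Finset.sum_congr rfl fun i _ => ?_
        rw [mul_diagonal]
        split_ifs
        · simp [vecMulVec_apply, W]; ring
        · simp
      rw [e1]
      conv_lhs => rw [hWW]
      have e2 : W * Wᵀ = W * 1 * Wᵀ := by rw [Matrix.mul_one]
      rw [e2, ← Matrix.sub_mul, ← Matrix.mul_sub, ← diagonal_one, diagonal_sub]
      congr 3
      ext i
      have := (hδ1 i).ne'
      split_ifs
      · field_simp; ring
      · field_simp; ring
    rw [aux_sum hVdet hpos hhat (fun i => by split_ifs; exacts [one_ne_zero, (hδ1 i).ne']) hσ f]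
    rw [← Finset.sum_filter_add_sum_filter_not Finset.univ (fun i : Fin n => (i : ℕ) < r)]
    congr 1
    · rw [Finset.sum_congr rfl (g := fun _ => f 1)]
      · rw [Finset.sum_const, Fin.card_filter_val_lt, min_eq_right hr, nsmul_eq_mul]
      · intro i hi
        simp only [mem_filter, mem_univ, true_and] at hi
        simp [hi]
    · simp only [not_lt]
      refine Finset.sum_congr rfl fun i hi => ?_
      simp only [mem_filter, mem_univ, true_and] at hi
      rw [if_neg (not_lt.2 hi)]
  · rintro Γt ⟨K, hK, hΓt, hpd⟩ σ hσ
    let T := V⁻¹ * Γt * V⁻¹ᵀ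
    have hTpd : T.PosDef := by
      have hu : IsUnit V⁻¹ := by
        rw [isUnit_nonsing_inv_iff]; exact (isUnit_iff_isUnit_det _).2 hVdet
      have := (hu.posDef_star_right_conjugate_iff (x := Γt)).2 hpd
      rwa [star_eq_conjTranspose, conjTranspose_eq_transpose_of_trivial] at this
    obtain ⟨U, τ, hU1, hU2, hτ, hτ0, hT⟩ := aux_spec hTpd
    have hViV : V⁻¹ * V = 1 := nonsing_inv_mul _ hVdet
    have hVVi : V * V⁻¹ = 1 := mul_nonsing_inv _ hVdet
    have hViVT : Vᵀ * V⁻¹ᵀ = 1 := by rw [← transpose_mul, hViV, transpose_one]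
    have hVViT : V⁻¹ᵀ * Vᵀ = 1 := by rw [← transpose_mul, hVVi, transpose_one]
    have hQ : IsUnit (V * U).det := by
      rw [det_mul]; exact hVdet.mul (isUnit_det_of_left_inverse hU1)
    have hA : Γpos = (V * U) * (V * U)ᵀ := by
      rw [transpose_mul, Matrix.mul_assoc, ← Matrix.mul_assoc U, hU2, Matrix.one_mul, hpos]
    have hB : Γt = (V * U) * diagonal τ * (V * U)ᵀ := by
      have e : V * T * Vᵀ = Γt := by
        calc V * T * Vᵀ = (V * V⁻¹) * Γt * (V⁻¹ᵀ * Vᵀ) := by simp only [T, Matrix.mul_assoc]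
          _ = Γt := by rw [hVVi, hVViT, Matrix.one_mul, Matrix.mul_one]
      rw [← e, hT]
      simp only [transpose_mul, Matrix.mul_assoc]
    rw [aux_sum hQ hA hB (fun i => (hτ0 i).ne') hσ f]
    apply aux_final hr hf (fun i => 1 + δ i ^ 2) τ (fun i => by nlinarith [sq_nonneg (δ i)]) hτ0
    refine aux_weyl (r := r) _ τ (V⁻¹ * K) U (fun i j hij => by linarith [hord i j hij]) hτ
      ((rank_mul_le_right _ _).trans hK) hU2 ?_
    rw [← hT]
    calc diagonal (fun i => 1 + δ i ^ 2) - V⁻¹ * K * (V⁻¹ * K)ᵀ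
        = (V⁻¹ * V) * diagonal (fun i => 1 + δ i ^ 2) * (Vᵀ * V⁻¹ᵀ)
            - V⁻¹ * (K * Kᵀ) * V⁻¹ᵀ := by
          rw [hViV, hViVT, Matrix.one_mul, Matrix.mul_one]
          simp only [transpose_mul, Matrix.mul_assoc]
      _ = V⁻¹ * (V * diagonal (fun i => 1 + δ i ^ 2) * Vᵀ - K * Kᵀ) * V⁻¹ᵀ := by
          simp only [Matrix.mul_sub, Matrix.sub_mul, Matrix.mul_assoc]
      _ = T := by rw [← hprV, ← hΓt]
end

section
/- Fix L ∈ 𝓛 and a vector μ ∈ ℝⁿ. A matrix Γ̂ ∈ 𝓜_r minimizes, over 𝓜_r, the Kullback–Leibler divergence D_KL( N(μ, Γ_pos) ‖ N(μ, Γ̂) ) between the Gaussian measures N(μ, Γ_pos) and N(μ, Γ̂) on ℝⁿ if and only if Γ̂ minimizes L(Γ_pos, Γ̂) over 𝓜_r; the same equivalence holds with the Kullback–Leibler divergence replaced by the Hellinger distance between N(μ, Γ_pos) and N(μ, Γ̂). -/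
open Matrix MeasureTheory Polynomial Filter Finset

/-- The density (w.r.t. Lebesgue measure on `ℝⁿ`) of the Gaussian measure `N(μ, Σ)`. -/
noncomputable def gaussianDensity {n : ℕ} (μ : Fin n → ℝ) (S : Matrix (Fin n) (Fin n) ℝ)
    (x : Fin n → ℝ) : ℝ :=
  (2 * Real.pi) ^ (-(n : ℝ) / 2) * S.det ^ (-(1:ℝ) / 2) *
    Real.exp (-(1 / 2) * ((x - μ) ⬝ᵥ (S⁻¹ *ᵥ (x - μ))))

/-- The Gaussian probability measure `N(μ, Σ)` on `ℝⁿ`. -/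
noncomputable def gaussianMeasure {n : ℕ} (μ : Fin n → ℝ)
    (S : Matrix (Fin n) (Fin n) ℝ) : Measure (Fin n → ℝ) :=
  MeasureTheory.volume.withDensity fun x => ENNReal.ofReal (gaussianDensity μ S x)

/-- Kullback–Leibler divergence `D_KL(μ ‖ ν) = ∫ log (dμ/dν) dμ`. -/
noncomputable def klDiv' {α : Type*} [MeasurableSpace α] (μ ν : Measure α) : ℝ :=
  ∫ x, Real.log ((μ.rnDeriv ν) x).toReal ∂μ

/-- Squared Hellinger distance between two measures on `ℝⁿ`, via their densities with
respect to the dominating Lebesgue measure. -/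
noncomputable def sqHellinger {n : ℕ} (μ ν : Measure (Fin n → ℝ)) : ℝ :=
  (1 / 2) * ∫ x, (Real.sqrt ((μ.rnDeriv MeasureTheory.volume) x).toReal -
    Real.sqrt ((ν.rnDeriv MeasureTheory.volume) x).toReal) ^ 2


/-- Simultaneous diagonalisation data. -/
structure SimDiag {n : ℕ} (A B T : Matrix (Fin n) (Fin n) ℝ) (s : Fin n → ℝ) : Prop where
  unit : IsUnit T.det
  pos : ∀ i, 0 < s i
  eqA : A = T * Tᵀ
  eqB : B⁻¹ = (T⁻¹)ᵀ * diagonal s * T⁻¹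

open scoped MatrixOrder Matrix.Norms.L2Operator in
theorem posDef_factor {n : ℕ} {A : Matrix (Fin n) (Fin n) ℝ} (hA : A.PosDef) :
    ∃ C : Matrix (Fin n) (Fin n) ℝ, IsUnit C.det ∧ A = C * Cᵀ := by
  obtain ⟨B, hB, h⟩ := CStarAlgebra.isStrictlyPositive_iff_eq_star_mul_self.mp
    hA.isStrictlyPositive
  refine ⟨Bᵀ, ?_, ?_⟩
  · rw [det_transpose]; exact (Matrix.isUnit_iff_isUnit_det B).mp hB
  · rw [h]; simp [star_eq_conjTranspose, conjTranspose_eq_transpose_of_trivial]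

theorem simDiag_exists {n : ℕ} {A B : Matrix (Fin n) (Fin n) ℝ} (hA : A.PosDef) (hB : B.PosDef) :
    ∃ T s, SimDiag A B T s ∧ Monotone s := by
  obtain ⟨C, hC, hAC⟩ := posDef_factor hA
  have hCu : IsUnit C := (Matrix.isUnit_iff_isUnit_det C).mpr hC
  have hQ : (Cᵀ * B⁻¹ * C).PosDef := by
    have := (Matrix.IsUnit.posDef_star_left_conjugate_iff (x := B⁻¹) hCu).mpr hB.inv
    simpa [star_eq_conjTranspose, conjTranspose_eq_transpose_of_trivial] using this
  set d := hQ.1.eigenvalues with hd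
  set e := Tuple.sort d with he
  set V : Matrix (Fin n) (Fin n) ℝ := (hQ.1.eigenvectorUnitary : Matrix (Fin n) (Fin n) ℝ) with hV
  have hVV : V * Vᵀ = 1 := by
    have := Unitary.coe_mul_star_self hQ.1.eigenvectorUnitary
    simpa [star_eq_conjTranspose, conjTranspose_eq_transpose_of_trivial] using this
  have hsp : Cᵀ * B⁻¹ * C = V * diagonal d * Vᵀ := by
    have := hQ.1.spectral_theorem
    rw [Unitary.conjStarAlgAut_apply] at this
    simpa [star_eq_conjTranspose, conjTranspose_eq_transpose_of_trivial, Function.comp_def]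
      using this
  set V' := V.submatrix id e with hV'
  have hVV' : V' * V'ᵀ = 1 := by
    rw [hV', transpose_submatrix, submatrix_mul_equiv, hVV]; simp
  have hsp' : Cᵀ * B⁻¹ * C = V' * diagonal (d ∘ e) * V'ᵀ := by
    rw [hsp, hV', transpose_submatrix, ← submatrix_diagonal_equiv, submatrix_mul_equiv,
      submatrix_mul_equiv]; simp
  have hVi : V'⁻¹ = V'ᵀ := Matrix.inv_eq_right_inv hVV'
  have hVu : IsUnit V'.det := Matrix.isUnit_det_of_right_inverse hVV'
  refine ⟨C * V', d ∘ e, ⟨?_, ?_, ?_, ?_⟩, Tuple.monotone_sort d⟩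
  · rw [det_mul]; exact hC.mul hVu
  · intro i; exact hQ.eigenvalues_pos _
  · rw [hAC, transpose_mul, Matrix.mul_assoc, ← Matrix.mul_assoc V', hVV', Matrix.one_mul]
  · rw [Matrix.mul_inv_rev, transpose_mul, hVi, transpose_transpose]
    have : (C⁻¹)ᵀ * V' * diagonal (d ∘ e) * (V'ᵀ * C⁻¹)
        = (C⁻¹)ᵀ * (V' * diagonal (d ∘ e) * V'ᵀ) * C⁻¹ := by simp only [Matrix.mul_assoc]
    rw [this, ← hsp', transpose_nonsing_inv]
    have h1 : (Cᵀ)⁻¹ * Cᵀ = 1 := Matrix.nonsing_inv_mul _ (by rwa [det_transpose])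
    have h2 : C * C⁻¹ = 1 := Matrix.mul_nonsing_inv _ hC
    calc B⁻¹ = ((Cᵀ)⁻¹ * Cᵀ) * B⁻¹ * (C * C⁻¹) := by rw [h1, h2]; simp
      _ = _ := by simp only [Matrix.mul_assoc]

theorem SimDiag.inv_mul {n : ℕ} {A B T : Matrix (Fin n) (Fin n) ℝ} {s : Fin n → ℝ}
    (h : SimDiag A B T s) : B⁻¹ * A = (T⁻¹)ᵀ * (diagonal s * Tᵀ) := by
  rw [h.eqB, h.eqA, Matrix.mul_assoc, ← Matrix.mul_assoc T⁻¹,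
    Matrix.nonsing_inv_mul _ h.unit, Matrix.one_mul, Matrix.mul_assoc]

theorem SimDiag.isGenEigs {n : ℕ} {A B T : Matrix (Fin n) (Fin n) ℝ} {s : Fin n → ℝ}
    (h : SimDiag A B T s) : IsGenEigs A B s := by
  unfold IsGenEigs
  rw [h.inv_mul, Matrix.charpoly_mul_comm, Matrix.mul_assoc, ← transpose_mul,
    Matrix.nonsing_inv_mul _ h.unit, transpose_one, Matrix.mul_one, charpoly_diagonal]

theorem IsGenEigs.roots {n : ℕ} {A B : Matrix (Fin n) (Fin n) ℝ} {s : Fin n → ℝ}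
    (h : IsGenEigs A B s) : (B⁻¹ * A).charpoly.roots = Finset.univ.val.map s := by
  rw [h, ← Polynomial.roots_multiset_prod_X_sub_C (Finset.univ.val.map s), Multiset.map_map]
  rfl

/-- The loss, expressed through the roots of the characteristic polynomial. -/
noncomputable def lossF {n : ℕ} (f : ℝ → ℝ) (A B : Matrix (Fin n) (Fin n) ℝ) : ℝ :=
  ((B⁻¹ * A).charpoly.roots.map f).sum

theorem IsGenEigs.loss {n : ℕ} {A B : Matrix (Fin n) (Fin n) ℝ} {s : Fin n → ℝ}
    (h : IsGenEigs A B s) (f : ℝ → ℝ) : lossF f A B = ∑ i, f (s i) := by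
  rw [lossF, h.roots, Multiset.map_map]; rfl

/-- Quadratic forms in diagonal coordinates. -/
theorem SimDiag.quad {n : ℕ} {A B T : Matrix (Fin n) (Fin n) ℝ} {s : Fin n → ℝ}
    (h : SimDiag A B T s) (w : Fin n → ℝ) :
    w ⬝ᵥ (B⁻¹ *ᵥ w) = ∑ i, s i * (T⁻¹ *ᵥ w) i ^ 2 := by
  rw [h.eqB, ← Matrix.mulVec_mulVec, ← Matrix.mulVec_mulVec, Matrix.dotProduct_mulVec,
    Matrix.vecMul_transpose]
  simp only [dotProduct, mulVec_diagonal]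
  exact Finset.sum_congr rfl fun i _ => by ring

theorem SimDiag.quadA {n : ℕ} {A B T : Matrix (Fin n) (Fin n) ℝ} {s : Fin n → ℝ}
    (h : SimDiag A B T s) (w : Fin n → ℝ) :
    w ⬝ᵥ (A⁻¹ *ᵥ w) = ∑ i, (T⁻¹ *ᵥ w) i ^ 2 := by
  have : SimDiag A A T 1 := ⟨h.unit, by simp, h.eqA, by
    rw [h.eqA, Matrix.mul_inv_rev, transpose_nonsing_inv]; simp⟩
  simpa using this.quad w

theorem interlace {n r : ℕ} {A P B T S K : Matrix (Fin n) (Fin n) ℝ} {l s : Fin n → ℝ}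
    (hP : SimDiag A P T l) (hB : SimDiag A B S s) (hPd : P.PosDef) (hBd : B.PosDef)
    (hl : Monotone l) (hs : Monotone s)
    (hK : K.rank ≤ r) (hBK : B = P - K * Kᵀ) (i : Fin n) (hi : i.1 + r < n) :
    s i ≤ l ⟨i.1 + r, hi⟩ := by
  let M := (Kᵀ * P⁻¹).mulVecLin
  let L : (Fin n → ℝ) →ₗ[ℝ] (({j : Fin n // i.1 + r < j.1} → ℝ) × ({j : Fin n // j < i} → ℝ)) ×
      LinearMap.range M :=
    LinearMap.prod (LinearMap.prod
      ((LinearMap.funLeft ℝ ℝ Subtype.val).comp (T⁻¹).mulVecLin)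
      ((LinearMap.funLeft ℝ ℝ Subtype.val).comp (S⁻¹).mulVecLin)) M.rangeRestrict
  have hker : LinearMap.ker L ≠ ⊥ := by
    apply LinearMap.ker_ne_bot_of_finrank_lt
    have hM : Module.finrank ℝ (LinearMap.range M) ≤ r := by
      have : (Kᵀ * P⁻¹).rank ≤ r := (rank_mul_le_left _ _).trans (by rwa [rank_transpose])
      exact this
    have h1 : Fintype.card {j : Fin n // i.1 + r < j.1} = n - 1 - (i.1 + r) := by
      have : Fintype.card {j : Fin n // (⟨i.1 + r, hi⟩ : Fin n) < j} = n - 1 - (i.1 + r) := by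
        rw [Fintype.card_subtype, Finset.filter_lt_eq_Ioi, Fin.card_Ioi]
      exact this
    have h2 : Fintype.card {j : Fin n // j < i} = i.1 := by
      rw [Fintype.card_subtype, Finset.filter_gt_eq_Iio, Fin.card_Iio]
    simp only [Module.finrank_prod, Module.finrank_fintype_fun_eq_card, h1, h2, Fintype.card_fin]
    omega
  obtain ⟨w, hw, hw0⟩ := (Submodule.ne_bot_iff _).mp hker
  have hL : L w = 0 := hw
  have e1 : ∀ j : Fin n, i.1 + r < j.1 → (T⁻¹ *ᵥ w) j = 0 := fun j hj =>
    congrFun (congrArg (fun z => z.1.1) hL) ⟨j, hj⟩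
  have e2 : ∀ j : Fin n, j < i → (S⁻¹ *ᵥ w) j = 0 := fun j hj =>
    congrFun (congrArg (fun z => z.1.2) hL) ⟨j, hj⟩
  have e3 : (Kᵀ * P⁻¹) *ᵥ w = 0 := congrArg (fun z => (z.2 : Fin n → ℝ)) hL
  have uP : IsUnit P.det := (Matrix.isUnit_iff_isUnit_det P).mp hPd.isUnit
  have uB : IsUnit B.det := (Matrix.isUnit_iff_isUnit_det B).mp hBd.isUnit
  have e4 : B⁻¹ *ᵥ w = P⁻¹ *ᵥ w := by
    have h1 : B *ᵥ (P⁻¹ *ᵥ w) = w := by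
      rw [hBK, Matrix.sub_mulVec, ← Matrix.mulVec_mulVec, Matrix.mulVec_mulVec (M := Kᵀ), e3,
        Matrix.mulVec_zero, sub_zero, Matrix.mulVec_mulVec, Matrix.mul_nonsing_inv _ uP,
        Matrix.one_mulVec]
    calc B⁻¹ *ᵥ w = B⁻¹ *ᵥ (B *ᵥ (P⁻¹ *ᵥ w)) := by rw [h1]
      _ = _ := by rw [Matrix.mulVec_mulVec, Matrix.nonsing_inv_mul _ uB, Matrix.one_mulVec]
  have q : ∑ j, s j * (S⁻¹ *ᵥ w) j ^ 2 = ∑ j, l j * (T⁻¹ *ᵥ w) j ^ 2 := by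
    rw [← hB.quad, ← hP.quad, e4]
  have qA : ∑ j, (S⁻¹ *ᵥ w) j ^ 2 = ∑ j, (T⁻¹ *ᵥ w) j ^ 2 := by
    rw [← hB.quadA, ← hP.quadA]
  have b1 : s i * ∑ j, (S⁻¹ *ᵥ w) j ^ 2 ≤ ∑ j, s j * (S⁻¹ *ᵥ w) j ^ 2 := by
    rw [Finset.mul_sum]
    refine Finset.sum_le_sum fun j _ => ?_
    by_cases hj : j < i
    · simp [e2 j hj]
    · exact mul_le_mul_of_nonneg_right (hs (not_lt.mp hj)) (sq_nonneg _)
  have b2 : ∑ j, l j * (T⁻¹ *ᵥ w) j ^ 2 ≤ l ⟨i.1 + r, hi⟩ * ∑ j, (T⁻¹ *ᵥ w) j ^ 2 := by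
    rw [Finset.mul_sum]
    refine Finset.sum_le_sum fun j _ => ?_
    by_cases hj : i.1 + r < j.1
    · simp [e1 j hj]
    · exact mul_le_mul_of_nonneg_right (hl (by rw [Fin.le_def]; simpa using hj)) (sq_nonneg _)
  have pos : 0 < ∑ j, (T⁻¹ *ᵥ w) j ^ 2 := by
    apply lt_of_le_of_ne (Finset.sum_nonneg fun j _ => sq_nonneg _)
    intro h0
    apply hw0
    have hz : T⁻¹ *ᵥ w = 0 := by
      funext j
      have := (Finset.sum_eq_zero_iff_of_nonneg (fun j _ => sq_nonneg _)).mp h0.symm j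
        (Finset.mem_univ _)
      simpa using this
    calc w = T *ᵥ (T⁻¹ *ᵥ w) := by
          rw [Matrix.mulVec_mulVec, Matrix.mul_nonsing_inv _ hP.unit, Matrix.one_mulVec]
      _ = 0 := by rw [hz, Matrix.mulVec_zero]
  rw [qA, q] at b1
  exact le_of_mul_le_mul_right (b1.trans b2) pos

/-- Strictly decreasing on `(0,1]`, strictly increasing on `[1,∞)`. -/
def GoodF (f : ℝ → ℝ) : Prop := StrictAntiOn f (Set.Ioc 0 1) ∧ StrictMonoOn f (Set.Ici 1)

theorem goodF_of_deriv {f f' : ℝ → ℝ} (hd : ∀ x ∈ Set.Ioi (0:ℝ), HasDerivAt f (f' x) x)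
    (hs : ∀ x ∈ Set.Ioi (0:ℝ), x ≠ 1 → f' x * (1 - x) < 0) : GoodF f := by
  constructor
  · apply strictAntiOn_of_deriv_neg (convex_Ioc 0 1)
    · intro x hx
      exact (hd x hx.1).continuousAt.continuousWithinAt
    · intro x hx
      rw [interior_Ioc] at hx
      rw [(hd x hx.1).deriv]
      have := hs x hx.1 hx.2.ne
      nlinarith [hx.2]
  · apply strictMonoOn_of_deriv_pos (convex_Ici 1)
    · intro x hx
      exact (hd x (lt_of_lt_of_le one_pos hx : (0:ℝ) < x)).continuousAt.continuousWithinAt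
    · intro x hx
      rw [interior_Ici] at hx
      have h1 : (1:ℝ) < x := hx
      have h0 : (0:ℝ) < x := one_pos.trans h1
      rw [(hd x h0).deriv]
      have := hs x h0 h1.ne'
      nlinarith

theorem MemU.good {f : ℝ → ℝ} (hf : MemU f) : GoodF f := by
  obtain ⟨f', hd, -, hs, -⟩ := hf
  exact goodF_of_deriv hd hs

theorem GoodF.le {f : ℝ → ℝ} (hf : GoodF f) {x t : ℝ} (hx : 0 < x) (hxt : x ≤ t) (ht : t ≤ 1) :
    f t ≤ f x :=
  hf.1.antitoneOn ⟨hx, hxt.trans ht⟩ ⟨hx.trans_le hxt, ht⟩ hxt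

theorem GoodF.eq {f : ℝ → ℝ} (hf : GoodF f) {x t : ℝ} (hx : 0 < x) (hxt : x ≤ t) (ht : t ≤ 1)
    (h : f t = f x) : x = t :=
  hf.1.injOn ⟨hx, hxt.trans ht⟩ ⟨hx.trans_le hxt, ht⟩ h.symm

theorem GoodF.one_le {f : ℝ → ℝ} (hf : GoodF f) {x : ℝ} (hx : 0 < x) : f 1 ≤ f x := by
  rcases le_total x 1 with h | h
  · exact hf.le hx h le_rfl
  · exact hf.2.monotoneOn (by simp) h h

theorem GoodF.one_eq {f : ℝ → ℝ} (hf : GoodF f) {x : ℝ} (hx : 0 < x) (h1 : f 1 = f x) : x = 1 := by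
  rcases le_total x 1 with h | h
  · exact hf.eq hx h le_rfl h1
  · exact hf.2.injOn h (by simp) h1.symm

/-- The optimal sorted spectrum. -/
noncomputable def tau {n : ℕ} (r : ℕ) (l : Fin n → ℝ) (i : Fin n) : ℝ :=
  if h : i.1 + r < n then l ⟨i.1 + r, h⟩ else 1

theorem tau_le {n r : ℕ} {l s : Fin n → ℝ} {f : ℝ → ℝ} (hf : GoodF f) (hl : ∀ i, l i ≤ 1)
    (hs : ∀ i, 0 < s i) (h : ∀ (i : Fin n) (hi : i.1 + r < n), s i ≤ l ⟨i.1 + r, hi⟩) (i : Fin n) :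
    f (tau r l i) ≤ f (s i) := by
  unfold tau
  split_ifs with hi
  · exact hf.le (hs i) (h i hi) (hl _)
  · exact hf.one_le (hs i)

theorem tau_eq {n r : ℕ} {l s : Fin n → ℝ} {f : ℝ → ℝ} (hf : GoodF f) (hl : ∀ i, l i ≤ 1)
    (hs : ∀ i, 0 < s i) (h : ∀ (i : Fin n) (hi : i.1 + r < n), s i ≤ l ⟨i.1 + r, hi⟩) (i : Fin n)
    (he : f (tau r l i) = f (s i)) : s i = tau r l i := by
  unfold tau at *
  split_ifs at * with hi
  · exact hf.eq (hs i) (h i hi) (hl _) he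
  · exact hf.one_eq (hs i) he

theorem tau_sum_eq {n r : ℕ} {l s : Fin n → ℝ} {f : ℝ → ℝ} (hf : GoodF f) (hl : ∀ i, l i ≤ 1)
    (hs : ∀ i, 0 < s i) (h : ∀ (i : Fin n) (hi : i.1 + r < n), s i ≤ l ⟨i.1 + r, hi⟩)
    (he : ∑ i, f (s i) ≤ ∑ i, f (tau r l i)) : s = tau r l := by
  have h1 : ∀ i ∈ (Finset.univ : Finset (Fin n)), f (tau r l i) ≤ f (s i) :=
    fun i _ => tau_le hf hl hs h i
  have h2 := (Finset.sum_eq_sum_iff_of_le h1).mp (le_antisymm (Finset.sum_le_sum h1) he)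
  funext i
  exact tau_eq hf hl hs h i (h2 i (Finset.mem_univ _))

theorem tau_perm {n r : ℕ} (hr : r ≤ n) (l : Fin n → ℝ) :
    ∃ e : Equiv.Perm (Fin n), ∀ i, (if (e i).1 < r then 1 else l (e i)) = tau r l i := by
  let g : Fin n → Fin n := fun i =>
    if h : i.1 + r < n then ⟨i.1 + r, h⟩ else ⟨i.1 + r - n, by have := i.2; omega⟩
  have hg : Function.Injective g := by
    intro a b hab
    have ha := a.2
    have hb := b.2
    simp only [g] at hab
    apply Fin.ext
    split_ifs at hab <;> simp only [Fin.mk.injEq] at hab <;> omega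
  refine ⟨Equiv.ofBijective g (Finite.injective_iff_bijective.mp hg), fun i => ?_⟩
  have hi := i.2
  simp only [Equiv.ofBijective_apply, g, tau]
  by_cases h : i.1 + r < n
  · simp only [h, dif_pos]
    rw [if_neg (by omega)]
  · simp only [h, dif_neg, not_false_eq_true]
    rw [if_pos (by omega)]

theorem SimDiag.B_eq {n : ℕ} {A B T : Matrix (Fin n) (Fin n) ℝ} {s : Fin n → ℝ}
    (h : SimDiag A B T s) (hB : IsUnit B.det) : B = T * diagonal (fun i => (s i)⁻¹) * Tᵀ := by
  rw [← Matrix.nonsing_inv_nonsing_inv B hB]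
  apply Matrix.inv_eq_right_inv
  rw [h.eqB]
  have h1 : T⁻¹ * T = 1 := Matrix.nonsing_inv_mul _ h.unit
  have h2 : (T⁻¹)ᵀ * Tᵀ = 1 := by
    rw [← transpose_mul, Matrix.mul_nonsing_inv _ h.unit, transpose_one]
  have h3 : diagonal s * diagonal (fun i => (s i)⁻¹) = 1 := by
    rw [diagonal_mul_diagonal, ← diagonal_one]
    congr 1; funext i; exact mul_inv_cancel₀ (h.pos i).ne'
  calc (T⁻¹)ᵀ * diagonal s * T⁻¹ * (T * diagonal (fun i => (s i)⁻¹) * Tᵀ)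
      = (T⁻¹)ᵀ * (diagonal s * (T⁻¹ * T) * diagonal (fun i => (s i)⁻¹)) * Tᵀ := by
        simp only [Matrix.mul_assoc]
    _ = 1 := by rw [h1, Matrix.mul_one, h3, Matrix.mul_one, h2]

theorem optimum_exists {n r : ℕ} {A P T : Matrix (Fin n) (Fin n) ℝ} {l : Fin n → ℝ}
    (hP : SimDiag A P T l) (hPd : P.PosDef) (hl : ∀ i, l i ≤ 1) :
    ∃ B ∈ MClass P r, IsGenEigs A B (fun i => if i.1 < r then 1 else l i) := by
  set t : Fin n → ℝ := fun i => if i.1 < r then 1 else l i with ht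
  have tpos : ∀ i, 0 < t i := by
    intro i; simp only [ht]; split_ifs
    · exact one_pos
    · exact hP.pos i
  set B := T * diagonal (fun i => (t i)⁻¹) * Tᵀ with hB
  have uT : IsUnit T := (Matrix.isUnit_iff_isUnit_det T).mpr hP.unit
  have hBd : B.PosDef := by
    have := (Matrix.IsUnit.posDef_star_right_conjugate_iff
      (x := diagonal (fun i => (t i)⁻¹)) uT).mpr
        (PosDef.diagonal fun i => inv_pos.mpr (tpos i))
    simpa [star_eq_conjTranspose, conjTranspose_eq_transpose_of_trivial] using this
  have hS : SimDiag A B T t := by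
    refine ⟨hP.unit, tpos, hP.eqA, ?_⟩
    rw [hB, Matrix.mul_inv_rev, Matrix.mul_inv_rev, transpose_nonsing_inv, Matrix.mul_assoc]
    congr 2
    apply Matrix.inv_eq_right_inv
    rw [diagonal_mul_diagonal, ← diagonal_one]
    congr 1; funext i; exact inv_mul_cancel₀ (tpos i).ne'
  refine ⟨B, ⟨T * diagonal (fun i => if i.1 < r then √((l i)⁻¹ - 1) else 0), ?_, ?_, hBd⟩,
    hS.isGenEigs⟩
  · refine (rank_mul_le_right _ _).trans ?_
    rw [rank_diagonal]
    calc _ ≤ Fintype.card (Fin r) := by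
          apply Fintype.card_le_of_injective
            (fun i : {i : Fin n // (if i.1 < r then √((l i)⁻¹ - 1) else 0) ≠ 0} =>
              (⟨i.1.1, by by_contra h; exact i.2 (if_neg h)⟩ : Fin r))
          intro a b hab
          simpa [Fin.ext_iff, Subtype.ext_iff] using hab
      _ = r := Fintype.card_fin r
  · have uP : IsUnit P.det := (Matrix.isUnit_iff_isUnit_det P).mp hPd.isUnit
    rw [eq_sub_iff_add_eq, hP.B_eq uP, transpose_mul, diagonal_transpose, Matrix.mul_assoc T,
      ← Matrix.mul_assoc (diagonal _) (diagonal _), diagonal_mul_diagonal, ← Matrix.mul_assoc T,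
      hB, ← Matrix.add_mul, ← Matrix.mul_add, diagonal_add]
    congr 3
    funext i
    simp only [ht]
    split_ifs
    · have : 1 ≤ (l i)⁻¹ := (one_le_inv₀ (hP.pos i)).mpr (hl i)
      rw [Real.mul_self_sqrt (by linarith)]; norm_num
    · simp

theorem minimizer_char {n r : ℕ} (hr : r ≤ n) {A P : Matrix (Fin n) (Fin n) ℝ}
    (hA : A.PosDef) (hP : P.PosDef) (hAP : (A⁻¹ - P⁻¹).PosSemidef) :
    ∃ M : Multiset ℝ, ∀ f, GoodF f → ∀ B ∈ MClass P r,
      ((∀ B' ∈ MClass P r, lossF f A B ≤ lossF f A B') ↔ (B⁻¹ * A).charpoly.roots = M) := by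
  obtain ⟨T, l, hT, hl⟩ := simDiag_exists hA hP
  have hl1 : ∀ i, l i ≤ 1 := by
    intro i
    have h := hAP.dotProduct_mulVec_nonneg (T *ᵥ Pi.single i 1)
    have hw : T⁻¹ *ᵥ (T *ᵥ Pi.single i 1) = Pi.single i 1 := by
      rw [Matrix.mulVec_mulVec, Matrix.nonsing_inv_mul _ hT.unit, Matrix.one_mulVec]
    rw [star_trivial, Matrix.sub_mulVec, dotProduct_sub, hT.quad, hT.quadA, hw] at h
    simpa [Pi.single_apply] using h
  obtain ⟨B₀, hB₀, hB₀e⟩ := optimum_exists (r := r) hT hP hl1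
  obtain ⟨e, he⟩ := tau_perm hr l
  have hopt : ∀ f, lossF f A B₀ = ∑ i, f (tau r l i) := by
    intro f
    rw [hB₀e.loss, ← Equiv.sum_comp e]
    exact Finset.sum_congr rfl fun i _ => by rw [← he i]
  have key : ∀ B ∈ MClass P r, ∃ s : Fin n → ℝ, IsGenEigs A B s ∧ (∀ i, 0 < s i) ∧
      ∀ (i : Fin n) (hi : i.1 + r < n), s i ≤ l ⟨i.1 + r, hi⟩ := by
    rintro B ⟨K, hK, hBK, hBd⟩
    obtain ⟨S, s, hS, hs⟩ := simDiag_exists hA hBd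
    exact ⟨s, hS.isGenEigs, hS.pos, fun i hi => interlace hT hS hP hBd hl hs hK hBK i hi⟩
  refine ⟨Finset.univ.val.map (tau r l), fun f hf B hB => ?_⟩
  obtain ⟨s, hs, hs0, hsl⟩ := key B hB
  constructor
  · intro h
    have h1 := h B₀ hB₀
    rw [hopt, hs.loss] at h1
    rw [hs.roots, tau_sum_eq hf hl1 hs0 hsl h1]
  · intro h B' hB'
    obtain ⟨s', hs', hs0', hsl'⟩ := key B' hB'
    rw [hs'.loss, lossF, h, Multiset.map_map]
    exact Finset.sum_le_sum fun i _ => tau_le hf hl1 hs0' hsl' i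

/-- One-dimensional centred Gaussian density with precision `s`. -/
noncomputable def phi (s y : ℝ) : ℝ := √s * (√(2 * Real.pi))⁻¹ * Real.exp (-(s / 2) * y ^ 2)

theorem phi_pos {s : ℝ} (hs : 0 < s) (y : ℝ) : 0 < phi s y := by
  unfold phi; positivity

theorem phi_integrable {s : ℝ} (hs : 0 < s) : Integrable (phi s) := by
  unfold phi
  exact (integrable_exp_neg_mul_sq (half_pos hs)).const_mul _

theorem phi_integral {s : ℝ} (hs : 0 < s) : ∫ y, phi s y = 1 := by
  unfold phi
  rw [integral_const_mul, integral_gaussian]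
  have : Real.pi / (s / 2) = (2 * Real.pi) / s := by field_simp
  rw [this, Real.sqrt_div (by positivity)]
  have h1 : √s ≠ 0 := by positivity
  have h2 : √(2 * Real.pi) ≠ 0 := by positivity
  field_simp

theorem phi_sq_integrable : Integrable (fun y => phi 1 y * y ^ 2) := by
  have h := (integrable_rpow_mul_exp_neg_mul_sq (b := 1 / 2) (s := 2) (by norm_num)
    (by norm_num)).const_mul (√1 * (√(2 * Real.pi))⁻¹)
  refine h.congr (Filter.Eventually.of_forall fun y => ?_)
  simp only [phi, Real.rpow_two]; ring

theorem phi_eq_gaussianPDF (y : ℝ) : phi 1 y = ProbabilityTheory.gaussianPDFReal 0 1 y := by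
  simp only [phi, ProbabilityTheory.gaussianPDFReal]
  simp only [Real.sqrt_one, NNReal.coe_one, one_mul, sub_zero, mul_one]
  congr 2; ring

theorem phi_sq_integral : ∫ y, phi 1 y * y ^ 2 = 1 := by
  have h := ProbabilityTheory.variance_id_gaussianReal (μ := 0) (v := 1)
  rw [ProbabilityTheory.variance_of_integral_eq_zero (by fun_prop)
    (by simp [ProbabilityTheory.integral_id_gaussianReal]),
    ProbabilityTheory.integral_gaussianReal_eq_integral_smul (by simp)] at h
  simpa [phi_eq_gaussianPDF] using h

/-- Kullback-Leibler loss. -/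
noncomputable def fKL (s : ℝ) : ℝ := (s - 1) / 2 - Real.log s / 2

theorem phi_log {s : ℝ} (hs : 0 < s) (y : ℝ) :
    Real.log ((phi s y)⁻¹ * phi 1 y) = (s - 1) / 2 * y ^ 2 - Real.log s / 2 := by
  have h1 : √s ≠ 0 := by positivity
  have h2 : √(2 * Real.pi) ≠ 0 := by positivity
  have : (phi s y)⁻¹ * phi 1 y = (√s)⁻¹ * Real.exp ((s - 1) / 2 * y ^ 2) := by
    have h3 : (s - 1) / 2 * y ^ 2 = -(1 / 2) * y ^ 2 - (-(s / 2) * y ^ 2) := by ring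
    rw [h3, Real.exp_sub]
    simp only [phi, Real.sqrt_one]
    field_simp
  rw [this, Real.log_mul (by positivity) (Real.exp_pos _).ne', Real.log_inv, Real.log_exp,
    Real.log_sqrt hs.le]
  ring

theorem phi_log_integrable {s : ℝ} (hs : 0 < s) :
    Integrable (fun y => phi 1 y * Real.log ((phi s y)⁻¹ * phi 1 y)) := by
  have h := (phi_sq_integrable.const_mul ((s - 1) / 2)).sub
    ((phi_integrable one_pos).const_mul (Real.log s / 2))
  refine h.congr (Filter.Eventually.of_forall fun y => ?_)
  simp only [phi_log hs, Pi.sub_apply]; ring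

theorem phi_log_integral {s : ℝ} (hs : 0 < s) :
    ∫ y, phi 1 y * Real.log ((phi s y)⁻¹ * phi 1 y) = fKL s := by
  have : ∀ y, phi 1 y * Real.log ((phi s y)⁻¹ * phi 1 y) =
      (s - 1) / 2 * (phi 1 y * y ^ 2) - Real.log s / 2 * phi 1 y := by
    intro y; rw [phi_log hs]; ring
  simp_rw [this]
  rw [integral_sub (phi_sq_integrable.const_mul _) ((phi_integrable one_pos).const_mul _),
    integral_const_mul, integral_const_mul, phi_sq_integral, phi_integral one_pos, fKL]
  ring

/-- Hellinger loss. -/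
noncomputable def fH (s : ℝ) : ℝ := Real.log ((1 + s) / 2) / 2 - Real.log s / 4

theorem phi_sqrt {s : ℝ} (hs : 0 < s) (y : ℝ) :
    √(phi 1 y) * √(phi s y) =
      √(√s) * (√(2 * Real.pi))⁻¹ * Real.exp (-((1 + s) / 4) * y ^ 2) := by
  rw [← Real.sqrt_mul (phi_pos one_pos y).le]
  rw [Real.sqrt_eq_iff_mul_self_eq_of_pos (by positivity)]
  have h3 : Real.exp (-((1 + s) / 4) * y ^ 2) * Real.exp (-((1 + s) / 4) * y ^ 2) =
      Real.exp (-(1 / 2) * y ^ 2) * Real.exp (-(s / 2) * y ^ 2) := by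
    rw [← Real.exp_add, ← Real.exp_add]; congr 1; ring
  have h4 : √(√s) * √(√s) = √s := Real.mul_self_sqrt (Real.sqrt_nonneg _)
  simp only [phi, Real.sqrt_one]
  linear_combination (√(2 * Real.pi))⁻¹ ^ 2 * √(√s) ^ 2 * h3 +
    (√(2 * Real.pi))⁻¹ ^ 2 * Real.exp (-(1 / 2) * y ^ 2) * Real.exp (-(s / 2) * y ^ 2) * h4

theorem phi_sqrt_integrable {s : ℝ} (hs : 0 < s) :
    Integrable (fun y => √(phi 1 y) * √(phi s y)) := by
  simp_rw [phi_sqrt hs]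
  exact (integrable_exp_neg_mul_sq (by positivity)).const_mul _

theorem phi_sqrt_integral {s : ℝ} (hs : 0 < s) :
    ∫ y, √(phi 1 y) * √(phi s y) = Real.exp (-fH s) := by
  simp_rw [phi_sqrt hs]
  rw [integral_const_mul, integral_gaussian]
  have h2 : √(2 * Real.pi) ≠ 0 := by positivity
  have e1 : Real.pi / ((1 + s) / 4) = (2 * Real.pi) * ((1 + s) / 2)⁻¹ := by field_simp; norm_num
  rw [e1, Real.sqrt_mul (show (0:ℝ) ≤ 2 * Real.pi by positivity) ((1 + s) / 2)⁻¹]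
  have e2 : √(√s) * (√(2 * Real.pi))⁻¹ * (√(2 * Real.pi) * √((1 + s) / 2)⁻¹) =
      √(√s) * √((1 + s) / 2)⁻¹ := by field_simp
  rw [e2, ← Real.exp_log (show 0 < √(√s) * √((1 + s) / 2)⁻¹ by positivity),
    Real.log_mul (by positivity) (by positivity), Real.log_sqrt (by positivity),
    Real.log_sqrt (by positivity), Real.log_sqrt (by positivity), Real.log_inv, fH]
  congr 1; ring

theorem fKL_good : GoodF fKL := by
  apply goodF_of_deriv (f' := fun x => 1 / 2 - x⁻¹ / 2)
  · intro x hx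
    have hx0 : x ≠ 0 := ne_of_gt hx
    unfold fKL
    exact (((hasDerivAt_id x).sub_const 1).div_const 2).sub ((Real.hasDerivAt_log hx0).div_const 2)
  · intro x hx h1
    have hx0 : 0 < x := hx
    have : (1 / 2 - x⁻¹ / 2) * (1 - x) = -((1 - x) ^ 2 / (2 * x)) := by field_simp; ring
    rw [this, neg_lt_zero]
    have : 1 - x ≠ 0 := sub_ne_zero.mpr h1.symm
    positivity

theorem fH_good : GoodF fH := by
  apply goodF_of_deriv (f' := fun x => (1 / 2) / ((1 + x) / 2) / 2 - x⁻¹ / 4)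
  · intro x hx
    have hx0 : 0 < x := hx
    unfold fH
    exact (((((hasDerivAt_id x).const_add 1).div_const 2).log
      (by simp only [id]; positivity)).div_const 2).sub ((Real.hasDerivAt_log hx0.ne').div_const 4)
  · intro x hx h1
    have hx0 : 0 < x := hx
    have : ((1 / 2) / ((1 + x) / 2) / 2 - x⁻¹ / 4) * (1 - x) =
        -((1 - x) ^ 2 / (4 * x * (1 + x))) := by field_simp; ring
    rw [this, neg_lt_zero]
    have : 1 - x ≠ 0 := sub_ne_zero.mpr h1.symm
    positivity

theorem integral_affine {n : ℕ} {T : Matrix (Fin n) (Fin n) ℝ} (hT : IsUnit T.det)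
    (μ : Fin n → ℝ) (g : (Fin n → ℝ) → ℝ) :
    ∫ x, g x = |T.det| * ∫ y, g (T *ᵥ y + μ) := by
  have hd : T.det ≠ 0 := hT.ne_zero
  have hemb : MeasurableEmbedding (toLin' T) := by
    apply Topology.IsClosedEmbedding.measurableEmbedding
    apply LinearMap.isClosedEmbedding_of_injective
    rw [LinearMap.ker_eq_bot]
    intro x y hxy
    simp only [toLin'_apply] at hxy
    exact Matrix.mulVec_injective_of_isUnit ((Matrix.isUnit_iff_isUnit_det T).mpr hT) hxy
  have h1 : ∫ y, g (T *ᵥ y + μ) = ∫ x, g (x + μ) ∂(Measure.map (toLin' T) volume) := by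
    rw [hemb.integral_map]; simp [toLin'_apply]
  rw [h1, Real.map_matrix_volume_pi_eq_smul_volume_pi hd, integral_smul_measure,
    integral_add_right_eq_self g μ, ENNReal.toReal_ofReal (abs_nonneg _), smul_eq_mul,
    ← mul_assoc, abs_inv, mul_inv_cancel₀ (abs_ne_zero.mpr hd), one_mul]

theorem SimDiag.self {n : ℕ} {A B T : Matrix (Fin n) (Fin n) ℝ} {s : Fin n → ℝ}
    (h : SimDiag A B T s) : SimDiag A A T (fun _ => 1) := ⟨h.unit, by simp, h.eqA, by
    rw [h.eqA, Matrix.mul_inv_rev, transpose_nonsing_inv]; simp⟩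

theorem density_eq {n : ℕ} {A B T : Matrix (Fin n) (Fin n) ℝ} {s : Fin n → ℝ}
    (h : SimDiag A B T s) (hB : B.PosDef) (μ y : Fin n → ℝ) :
    gaussianDensity μ B (T *ᵥ y + μ) = |T.det|⁻¹ * ∏ i, phi (s i) (y i) := by
  have uB : IsUnit B.det := (Matrix.isUnit_iff_isUnit_det B).mp hB.isUnit
  have hd : T.det ≠ 0 := h.unit.ne_zero
  have hp : 0 < ∏ i, s i := Finset.prod_pos fun i _ => h.pos i
  have hdet : B.det = (|T.det| * √(∏ i, (s i))⁻¹) ^ 2 := by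
    rw [h.B_eq uB, det_mul, det_mul, det_transpose, det_diagonal, mul_pow, sq_abs,
      Real.sq_sqrt (by positivity), Finset.prod_inv_distrib]
    ring
  have e1 : B.det ^ (-(1:ℝ) / 2) = |T.det|⁻¹ * ∏ i, √(s i) := by
    have : -(1:ℝ) / 2 = -(1 / 2) := by ring
    rw [this, Real.rpow_neg hB.det_pos.le, ← Real.sqrt_eq_rpow, hdet, Real.sqrt_sq (by positivity),
      mul_inv, Real.sqrt_inv, inv_inv, Real.sqrt_prod _ (fun i _ => (h.pos i).le)]
  have e2 : (2 * Real.pi) ^ (-(n : ℝ) / 2) = ∏ _i : Fin n, (√(2 * Real.pi))⁻¹ := by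
    rw [Finset.prod_const, Finset.card_univ, Fintype.card_fin, Real.sqrt_eq_rpow,
      ← Real.rpow_neg (by positivity), ← Real.rpow_natCast, ← Real.rpow_mul (by positivity)]
    congr 1; ring
  have e3 : T⁻¹ *ᵥ (T *ᵥ y) = y := by
    rw [Matrix.mulVec_mulVec, Matrix.nonsing_inv_mul _ h.unit, Matrix.one_mulVec]
  unfold gaussianDensity
  rw [add_sub_cancel_right, h.quad, e1, e2, e3, Finset.mul_sum, Real.exp_sum]
  simp only [phi, Finset.prod_mul_distrib]
  have e4 : ∀ i, Real.exp (-(1 / 2) * (s i * y i ^ 2)) = Real.exp (-(s i / 2) * y i ^ 2) := by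
    intro i; congr 1; ring
  simp only [e4]
  ring

theorem density_pos {n : ℕ} {B : Matrix (Fin n) (Fin n) ℝ} (hB : B.PosDef) (μ x : Fin n → ℝ) :
    0 < gaussianDensity μ B x := by
  have := hB.det_pos
  unfold gaussianDensity; positivity

theorem density_meas {n : ℕ} (B : Matrix (Fin n) (Fin n) ℝ) (μ : Fin n → ℝ) :
    Measurable (gaussianDensity μ B) := by
  apply Continuous.measurable
  unfold gaussianDensity
  fun_prop

theorem kl_eq {n : ℕ} {A B : Matrix (Fin n) (Fin n) ℝ} (hA : A.PosDef) (hB : B.PosDef)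
    (μ : Fin n → ℝ) :
    klDiv' (gaussianMeasure μ A) (gaussianMeasure μ B) = lossF fKL A B := by
  obtain ⟨T, s, h, -⟩ := simDiag_exists hA hB
  have mA := (density_meas A μ).ennreal_ofReal
  have mB := (density_meas B μ).ennreal_ofReal
  have hd : |T.det| ≠ 0 := abs_ne_zero.mpr h.unit.ne_zero
  have sA : SigmaFinite (gaussianMeasure μ A) := by
    unfold gaussianMeasure
    infer_instance
  have r1 : (gaussianMeasure μ A).rnDeriv (gaussianMeasure μ B) =ᵐ[gaussianMeasure μ A]
      fun x => (ENNReal.ofReal (gaussianDensity μ B x))⁻¹ *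
        ENNReal.ofReal (gaussianDensity μ A x) := by
    apply (withDensity_absolutelyContinuous volume
      (fun x => ENNReal.ofReal (gaussianDensity μ A x))).ae_le
    have r2 := Measure.rnDeriv_withDensity_right (gaussianMeasure μ A) volume
      (f := fun x => ENNReal.ofReal (gaussianDensity μ B x)) mB.aemeasurable
      (Filter.Eventually.of_forall fun x => by simpa using density_pos hB μ x)
      (Filter.Eventually.of_forall fun x => ENNReal.ofReal_ne_top)
    have r3 := Measure.rnDeriv_withDensity volume mA
    filter_upwards [r2, r3] with x h2 h3
    unfold gaussianMeasure at h2 ⊢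
    rw [h2, h3]
  have step1 : klDiv' (gaussianMeasure μ A) (gaussianMeasure μ B) =
      ∫ x, gaussianDensity μ A x *
        Real.log ((gaussianDensity μ B x)⁻¹ * gaussianDensity μ A x) := by
    unfold klDiv'
    have : ∫ x, Real.log (((gaussianMeasure μ A).rnDeriv (gaussianMeasure μ B)) x).toReal
        ∂(gaussianMeasure μ A) =
        ∫ x, Real.log ((gaussianDensity μ B x)⁻¹ * gaussianDensity μ A x)
          ∂(gaussianMeasure μ A) := by
      apply integral_congr_ae
      filter_upwards [r1] with x hx
      rw [hx, ENNReal.toReal_mul, ENNReal.toReal_inv, ENNReal.toReal_ofReal (density_pos hB μ x).le,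
        ENNReal.toReal_ofReal (density_pos hA μ x).le]
    rw [this]
    unfold gaussianMeasure
    rw [integral_withDensity_eq_integral_toReal_smul mA
      (Filter.Eventually.of_forall fun x => ENNReal.ofReal_lt_top)]
    apply integral_congr_ae
    refine Filter.Eventually.of_forall fun x => ?_
    simp only [ENNReal.toReal_ofReal (density_pos hA μ x).le, smul_eq_mul]
  have step2 : ∀ y : Fin n → ℝ, gaussianDensity μ A (T *ᵥ y + μ) *
        Real.log ((gaussianDensity μ B (T *ᵥ y + μ))⁻¹ * gaussianDensity μ A (T *ᵥ y + μ)) =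
      |T.det|⁻¹ * ∑ i, ∏ j, (if j = i then
        phi 1 (y j) * Real.log ((phi (s j) (y j))⁻¹ * phi 1 (y j)) else phi 1 (y j)) := by
    intro y
    rw [density_eq h.self hA, density_eq h hB]
    have e1 : (|T.det|⁻¹ * ∏ i, phi (s i) (y i))⁻¹ * (|T.det|⁻¹ * ∏ i, phi 1 (y i)) =
        ∏ i, ((phi (s i) (y i))⁻¹ * phi 1 (y i)) := by
      rw [Finset.prod_mul_distrib, Finset.prod_inv_distrib, mul_inv, inv_inv]
      field_simp
    rw [e1, Real.log_prod (fun i _ => (mul_pos (inv_pos.mpr (phi_pos (h.pos i) _))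
      (phi_pos one_pos _)).ne'), mul_assoc, Finset.mul_sum]
    congr 1
    refine Finset.sum_congr rfl fun i _ => ?_
    rw [← Finset.mul_prod_erase _ _ (Finset.mem_univ i),
      ← Finset.mul_prod_erase _ _ (Finset.mem_univ i), if_pos rfl]
    have : ∏ j ∈ Finset.univ.erase i, (if j = i then
        phi 1 (y j) * Real.log ((phi (s j) (y j))⁻¹ * phi 1 (y j)) else phi 1 (y j)) =
        ∏ j ∈ Finset.univ.erase i, phi 1 (y j) :=
      Finset.prod_congr rfl fun j hj => if_neg (Finset.ne_of_mem_erase hj)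
    rw [this]; ring
  have key : ∀ i, Integrable (fun y : Fin n → ℝ => ∏ j, (if j = i then
        phi 1 (y j) * Real.log ((phi (s j) (y j))⁻¹ * phi 1 (y j)) else phi 1 (y j))) ∧
      ∫ y : Fin n → ℝ, ∏ j, (if j = i then
        phi 1 (y j) * Real.log ((phi (s j) (y j))⁻¹ * phi 1 (y j)) else phi 1 (y j)) =
        fKL (s i) := by
    intro i
    let F : Fin n → ℝ → ℝ := fun j t => if j = i then
        phi 1 t * Real.log ((phi (s j) t)⁻¹ * phi 1 t) else phi 1 t
    constructor
    · refine Integrable.fintype_prod (f := F) fun j => ?_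
      by_cases hj : j = i
      · simpa only [F, hj, if_true] using phi_log_integrable (h.pos i)
      · simpa only [F, hj, if_false] using phi_integrable one_pos
    · refine (integral_fintype_prod_volume_eq_prod F).trans ?_
      rw [← Finset.mul_prod_erase _ _ (Finset.mem_univ i)]
      have : ∏ j ∈ Finset.univ.erase i, ∫ t, F j t = 1 := by
        apply Finset.prod_eq_one
        intro j hj
        simp only [F, Finset.ne_of_mem_erase hj, if_false, phi_integral one_pos]
      rw [this, mul_one]
      simp only [F, if_true, phi_log_integral (h.pos i)]
  rw [step1, integral_affine h.unit μ, h.isGenEigs.loss]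
  simp_rw [step2]
  rw [integral_const_mul, ← mul_assoc, mul_inv_cancel₀ hd, one_mul,
    integral_finsetSum _ (fun i _ => (key i).1)]
  exact Finset.sum_congr rfl fun i _ => (key i).2

theorem hell_eq {n : ℕ} {A B : Matrix (Fin n) (Fin n) ℝ} (hA : A.PosDef) (hB : B.PosDef)
    (μ : Fin n → ℝ) :
    sqHellinger (gaussianMeasure μ A) (gaussianMeasure μ B) = 1 - Real.exp (-lossF fH A B) := by
  obtain ⟨T, s, h, -⟩ := simDiag_exists hA hB
  have mA := (density_meas A μ).ennreal_ofReal
  have mB := (density_meas B μ).ennreal_ofReal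
  have hd : |T.det| ≠ 0 := abs_ne_zero.mpr h.unit.ne_zero
  have step1 : sqHellinger (gaussianMeasure μ A) (gaussianMeasure μ B) =
      (1 / 2) * ∫ x, (√(gaussianDensity μ A x) - √(gaussianDensity μ B x)) ^ 2 := by
    unfold sqHellinger
    congr 1
    apply integral_congr_ae
    filter_upwards [Measure.rnDeriv_withDensity volume mA,
      Measure.rnDeriv_withDensity volume mB] with x h2 h3
    unfold gaussianMeasure
    rw [h2, h3, ENNReal.toReal_ofReal (density_pos hB μ x).le,
        ENNReal.toReal_ofReal (density_pos hA μ x).le]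
  have step2 : ∀ y : Fin n → ℝ, (√(gaussianDensity μ A (T *ᵥ y + μ)) -
        √(gaussianDensity μ B (T *ᵥ y + μ))) ^ 2 =
      |T.det|⁻¹ * (∏ i, phi 1 (y i) + ∏ i, phi (s i) (y i) -
        2 * ∏ i, (√(phi 1 (y i)) * √(phi (s i) (y i)))) := by
    intro y
    have p1 : ∀ i, 0 ≤ phi 1 (y i) := fun i => (phi_pos one_pos _).le
    have p2 : ∀ i, 0 ≤ phi (s i) (y i) := fun i => (phi_pos (h.pos i) _).le
    rw [density_eq h.self hA, density_eq h hB, Real.sqrt_mul (by positivity),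
      Real.sqrt_mul (by positivity), ← mul_sub, mul_pow, Real.sq_sqrt (by positivity), sub_sq,
      Real.sq_sqrt (Finset.prod_nonneg fun i _ => p1 i),
      Real.sq_sqrt (Finset.prod_nonneg fun i _ => p2 i), Finset.prod_mul_distrib,
      Real.sqrt_prod _ (fun i _ => p1 i), Real.sqrt_prod _ (fun i _ => p2 i)]
    ring
  have i1 : Integrable (fun y : Fin n → ℝ => ∏ i, phi 1 (y i)) :=
    Integrable.fintype_prod (f := fun _ => phi 1) fun _ => phi_integrable one_pos
  have i2 : Integrable (fun y : Fin n → ℝ => ∏ i, phi (s i) (y i)) :=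
    Integrable.fintype_prod (f := fun i => phi (s i)) fun i => phi_integrable (h.pos i)
  have i3 : Integrable (fun y : Fin n → ℝ => ∏ i, (√(phi 1 (y i)) * √(phi (s i) (y i)))) :=
    Integrable.fintype_prod (f := fun i t => √(phi 1 t) * √(phi (s i) t))
      fun i => phi_sqrt_integrable (h.pos i)
  have v1 : ∫ y : Fin n → ℝ, ∏ i, phi 1 (y i) = 1 := by
    rw [integral_fintype_prod_volume_eq_prod (fun _ : Fin n => phi 1)]
    simp [phi_integral one_pos]
  have v2 : ∫ y : Fin n → ℝ, ∏ i, phi (s i) (y i) = 1 := by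
    rw [integral_fintype_prod_volume_eq_prod (fun i : Fin n => phi (s i))]
    exact Finset.prod_eq_one fun i _ => phi_integral (h.pos i)
  have v3 : ∫ y : Fin n → ℝ, ∏ i, (√(phi 1 (y i)) * √(phi (s i) (y i))) =
      Real.exp (-lossF fH A B) := by
    rw [integral_fintype_prod_volume_eq_prod (fun (i : Fin n) t => √(phi 1 t) * √(phi (s i) t)),
      h.isGenEigs.loss, ← Finset.sum_neg_distrib, Real.exp_sum]
    exact Finset.prod_congr rfl fun i _ => phi_sqrt_integral (h.pos i)
  rw [step1, integral_affine h.unit μ]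
  simp_rw [step2]
  have i12 : Integrable (fun y : Fin n → ℝ => ∏ i, phi 1 (y i) + ∏ i, phi (s i) (y i)) := i1.add i2
  rw [integral_const_mul, ← mul_assoc |T.det|, mul_inv_cancel₀ hd, one_mul,
    integral_sub i12 (i3.const_mul 2), integral_add i1 i2, integral_const_mul, v1, v2, v3]
  ring

/-- Lemma 2.2 (equivalence of approximations): `Γ̂ ∈ 𝓜_r` minimizes the K-L divergence
(resp. the Hellinger distance) between `N(μ, Γpos)` and `N(μ, Γ̂)` over `𝓜_r` iff it
minimizes the loss `L(Γpos, ·)` over `𝓜_r`. -/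
theorem equivalence_of_approximations
    (n m r : ℕ) (hn : 0 < n) (hm : 0 < m) (hr : r ≤ n)
    (G : Matrix (Fin m) (Fin n) ℝ)
    (Γobs : Matrix (Fin m) (Fin m) ℝ) (hobs : Γobs.PosDef)
    (Γpr : Matrix (Fin n) (Fin n) ℝ) (hpr : Γpr.PosDef)
    (H Γpos : Matrix (Fin n) (Fin n) ℝ)
    (hH : H = Gᵀ * Γobs⁻¹ * G)
    (hΓpos : Γpos = (H + Γpr⁻¹)⁻¹)
    (f : ℝ → ℝ) (hf : MemU f)
    (μ : Fin n → ℝ)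
    (Γhat : Matrix (Fin n) (Fin n) ℝ) (hΓhat : Γhat ∈ MClass Γpr r) :
    ((∀ Γt ∈ MClass Γpr r,
        klDiv' (gaussianMeasure μ Γpos) (gaussianMeasure μ Γhat) ≤
          klDiv' (gaussianMeasure μ Γpos) (gaussianMeasure μ Γt)) ↔
      (∀ Γt ∈ MClass Γpr r, ∀ σ σ' : Fin n → ℝ,
        IsGenEigs Γpos Γhat σ → IsGenEigs Γpos Γt σ' →
        ∑ i, f (σ i) ≤ ∑ i, f (σ' i))) ∧
    ((∀ Γt ∈ MClass Γpr r,
        Real.sqrt (sqHellinger (gaussianMeasure μ Γpos) (gaussianMeasure μ Γhat)) ≤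
          Real.sqrt (sqHellinger (gaussianMeasure μ Γpos) (gaussianMeasure μ Γt))) ↔
      (∀ Γt ∈ MClass Γpr r, ∀ σ σ' : Fin n → ℝ,
        IsGenEigs Γpos Γhat σ → IsGenEigs Γpos Γt σ' →
        ∑ i, f (σ i) ≤ ∑ i, f (σ' i))) := by
  have hHp : H.PosSemidef := by
    rw [hH]
    have := hobs.inv.posSemidef.conjTranspose_mul_mul_same G
    simpa [conjTranspose_eq_transpose_of_trivial] using this
  have hinv : (H + Γpr⁻¹).PosDef := Matrix.PosDef.posSemidef_add hHp hpr.inv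
  have hA : Γpos.PosDef := by rw [hΓpos]; exact hinv.inv
  have hAP : (Γpos⁻¹ - Γpr⁻¹).PosSemidef := by
    rw [hΓpos, Matrix.nonsing_inv_nonsing_inv _
      ((Matrix.isUnit_iff_isUnit_det _).mp hinv.isUnit), add_sub_cancel_right]
    exact hHp
  obtain ⟨M, hM⟩ := minimizer_char hr hA hpr hAP
  have hpd : ∀ B ∈ MClass Γpr r, B.PosDef := by
    rintro B ⟨K, -, -, hB⟩; exact hB
  have hloss : (∀ Γt ∈ MClass Γpr r, ∀ σ σ' : Fin n → ℝ,
        IsGenEigs Γpos Γhat σ → IsGenEigs Γpos Γt σ' →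
        ∑ i, f (σ i) ≤ ∑ i, f (σ' i)) ↔ (Γhat⁻¹ * Γpos).charpoly.roots = M := by
    rw [← hM f hf.good Γhat hΓhat]
    constructor
    · intro h Γt ht
      obtain ⟨_, s, hs, -⟩ := simDiag_exists hA (hpd _ hΓhat)
      obtain ⟨_, s', hs', -⟩ := simDiag_exists hA (hpd _ ht)
      rw [hs.isGenEigs.loss, hs'.isGenEigs.loss]
      exact h Γt ht s s' hs.isGenEigs hs'.isGenEigs
    · intro h Γt ht s s' hs hs'
      rw [← hs.loss, ← hs'.loss]
      exact h Γt ht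
  rw [hloss]
  constructor
  · rw [← hM fKL fKL_good Γhat hΓhat]
    refine forall₂_congr fun Γt ht => ?_
    rw [kl_eq hA (hpd _ hΓhat), kl_eq hA (hpd _ ht)]
  · rw [← hM fH fH_good Γhat hΓhat]
    refine forall₂_congr fun Γt ht => ?_
    have hnn : 0 ≤ sqHellinger (gaussianMeasure μ Γpos) (gaussianMeasure μ Γt) := by
      unfold sqHellinger
      exact mul_nonneg (by norm_num) (integral_nonneg fun x => sq_nonneg _)
    rw [Real.sqrt_le_sqrt_iff hnn, hell_eq hA (hpd _ hΓhat), hell_eq hA (hpd _ ht),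
      sub_le_sub_iff_left, Real.exp_le_exp, neg_le_neg_iff]
end

section
/- Let w̃ᵢ = Γ_pr⁻¹ ŵᵢ and let 𝓜_r⁻¹ = { Γ_pr⁻¹ + J Jᵀ : J a real n×n matrix with rank(J) ≤ r }. For any L ∈ 𝓛, the matrix B̂ = Γ_pr⁻¹ + Σ_{i=1}^{r} δᵢ² w̃ᵢ w̃ᵢᵀ minimizes L(B, Γ_pos⁻¹) over B ∈ 𝓜_r⁻¹; moreover, if δ₁² > δ₂² > ⋯ > δ_r² > δ_{r+1}², then B̂ is the unique minimizer. -/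
open Matrix MeasureTheory Polynomial Filter Finset

/-- The approximation class `𝓜_r⁻¹`: matrices of the form `Γpr⁻¹ + J Jᵀ` with
`rank J ≤ r`. -/
def MInvClass {n : ℕ} (Γpr : Matrix (Fin n) (Fin n) ℝ) (r : ℕ) :
    Set (Matrix (Fin n) (Fin n) ℝ) :=
  {M | ∃ J : Matrix (Fin n) (Fin n) ℝ, J.rank ≤ r ∧ M = Γpr⁻¹ + J * Jᵀ}


section abs
set_option linter.unusedSectionVars false
variable {n : ℕ} {E : Type*} [NormedAddCommGroup E] [InnerProductSpace ℝ E] [FiniteDimensional ℝ E]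

lemma opa_quad (b : OrthonormalBasis (Fin n) ℝ E) (T : E →ₗ[ℝ] E) (s : Fin n → ℝ)
    (h : ∀ i, T (b i) = s i • b i) (x : E) :
    inner ℝ x (T x) = ∑ i, s i * (inner ℝ (b i) x) ^ 2 := by
  conv_lhs => rw [← b.sum_repr' x]
  rw [map_sum, inner_sum]
  refine Finset.sum_congr rfl fun i _ => ?_
  rw [b.sum_repr' x, map_smul, h, inner_smul_right, inner_smul_right, real_inner_comm]
  ring

lemma opa_bound (e v : OrthonormalBasis (Fin n) ℝ E) (T D : E →ₗ[ℝ] E) (μ a : Fin n → ℝ)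
    (hT : ∀ i, T (v i) = μ i • v i) (hD : ∀ i, D (e i) = a i • e i)
    (N : Submodule ℝ E) (hN : ∀ x ∈ N, T x = D x) (r : ℕ)
    (hr : n ≤ Module.finrank ℝ N + r) (hμ : Monotone μ) (ha : Monotone a)
    (k l : Fin n) (hkl : (l : ℕ) = k + r) : μ k ≤ a l := by
  let φ : N →ₗ[ℝ] ((Fin k → ℝ) × (Fin (n - 1 - l) → ℝ)) :=
    LinearMap.prod
      (LinearMap.pi fun j => (innerₛₗ ℝ (v ⟨j, by omega⟩)).comp N.subtype)
      (LinearMap.pi fun j => (innerₛₗ ℝ (e ⟨l + 1 + j, by omega⟩)).comp N.subtype)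
  have hker : LinearMap.ker φ ≠ ⊥ := by
    apply LinearMap.ker_ne_bot_of_finrank_lt
    simp
    omega
  obtain ⟨x, hx, hx0⟩ := Submodule.exists_mem_ne_zero_of_ne_bot hker
  rw [LinearMap.mem_ker] at hx
  have h1 : ∀ j : Fin n, j < k → inner ℝ (v j) (x : E) = 0 := fun j hj => by
    have := congrFun (congrArg Prod.fst hx) ⟨j, hj⟩
    simpa [φ] using this
  have h2 : ∀ j : Fin n, l < j → inner ℝ (e j) (x : E) = 0 := fun j hj => by
    have := congrFun (congrArg Prod.snd hx) ⟨j - (l + 1), by omega⟩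
    have h3 : (⟨l + 1 + (j - (l + 1)), by omega⟩ : Fin n) = j := by ext; simp; omega
    simpa [φ, h3] using this
  have q1 := opa_quad v T μ hT x
  have q2 := opa_quad e D a hD x
  rw [← hN x x.2] at q2
  have s1 : ∑ i, (inner ℝ (v i) (x : E)) ^ 2 = ‖(x : E)‖ ^ 2 := v.sum_sq_inner_right x
  have s2 : ∑ i, (inner ℝ (e i) (x : E)) ^ 2 = ‖(x : E)‖ ^ 2 := e.sum_sq_inner_right x
  have i1 : μ k * ‖(x : E)‖ ^ 2 ≤ inner ℝ (x : E) (T x) := by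
    rw [q1, ← s1, Finset.mul_sum]
    refine Finset.sum_le_sum fun i _ => ?_
    by_cases hi : i < k
    · simp [h1 i hi]
    · exact mul_le_mul_of_nonneg_right (hμ (not_lt.1 hi)) (sq_nonneg _)
  have i2 : inner ℝ (x : E) (T x) ≤ a l * ‖(x : E)‖ ^ 2 := by
    rw [q2, ← s2, Finset.mul_sum]
    refine Finset.sum_le_sum fun i _ => ?_
    by_cases hi : l < i
    · simp [h2 i hi]
    · exact mul_le_mul_of_nonneg_right (ha (not_lt.1 hi)) (sq_nonneg _)
  have hpos : 0 < ‖(x : E)‖ ^ 2 := by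
    have : (x : E) ≠ 0 := by simpa using hx0
    positivity
  exact le_of_mul_le_mul_right (i1.trans i2) hpos

lemma opa_unique (e v : OrthonormalBasis (Fin n) ℝ E) (T D : E →ₗ[ℝ] E) (a : Fin n → ℝ) (r : ℕ)
    (hT : ∀ i, T (v i) = (if (i : ℕ) < r then 1 else a i) • v i) (hD : ∀ i, D (e i) = a i • e i)
    (N : Submodule ℝ E) (hN : ∀ x ∈ N, T x = D x) 
    (hr : n ≤ Module.finrank ℝ N + r) (ha : Monotone a) (ha1 : ∀ i, a i ≤ 1)
    (hst : ∀ i j : Fin n, (i : ℕ) < r → r ≤ (j : ℕ) → a i < a j)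
    (j : Fin n) (hj : r ≤ (j : ℕ)) : e j ∈ N := by
  set d := Module.finrank ℝ N with hd
  let u := stdOrthonormalBasis ℝ N
  have hu : Orthonormal ℝ (fun l => (u l : E)) := u.orthonormal.comp_linearIsometry N.subtypeₗᵢ
  let P : OrthonormalBasis (Fin n) ℝ E → Fin n → ℝ := fun b i => ∑ l, (inner ℝ (u l : E) (b i)) ^ 2
  have P0 : ∀ b i, 0 ≤ P b i := fun b i => Finset.sum_nonneg fun _ _ => sq_nonneg _
  have P1 : ∀ b i, P b i ≤ 1 := fun b i => by
    have := hu.sum_inner_products_le (b i) (s := Finset.univ)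
    simpa [P] using this
  have Ps : ∀ b, ∑ i, P b i = d := fun b => by
    simp only [P]
    rw [Finset.sum_comm]
    have : ∀ l, ∑ i, (inner ℝ (u l : E) (b i)) ^ 2 = 1 := fun l => by
      rw [b.sum_sq_inner_left, hu.1 l]; simp
    simp [this, hd]
  have Q : ∀ (b : OrthonormalBasis (Fin n) ℝ E) (F : E →ₗ[ℝ] E) (s : Fin n → ℝ)
      (h : ∀ i, F (b i) = s i • b i), ∑ l, inner ℝ (u l : E) (F (u l)) = ∑ i, s i * P b i := by
    intro b F s h
    simp only [P, Finset.mul_sum]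
    rw [Finset.sum_comm]
    refine Finset.sum_congr rfl fun l _ => ?_
    rw [opa_quad b F s h]
    refine Finset.sum_congr rfl fun i _ => ?_
    rw [real_inner_comm]
  have hTD : ∑ i : Fin n, (if (i : ℕ) < r then 1 else a i) * P v i = ∑ i, a i * P e i := by
    rw [← Q v T _ hT, ← Q e D _ hD]
    exact Finset.sum_congr rfl fun l _ => by rw [hN _ (u l).2]
  have hrn : r < n := by omega
  let c := a ⟨n - 1, by omega⟩
  let θ := a ⟨r, hrn⟩
  have hθc : θ ≤ c := ha (by simp [Fin.le_def]; omega)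
  have hcard : ∑ i : Fin n, (if (i : ℕ) < r then (0:ℝ) else 1) = n - r := by
    have h := Fin.sum_univ_eq_sum_range (fun i => if i < r then (0:ℝ) else 1) n
    rw [h]
    obtain ⟨k, rfl⟩ := Nat.exists_eq_add_of_lt hrn
    rw [add_assoc, Finset.sum_range_add]
    have : ∑ x ∈ Finset.range r, (if x < r then (0:ℝ) else 1) = 0 :=
      Finset.sum_eq_zero fun x hx => by simp [Finset.mem_range.1 hx]
    rw [this]; simp
  have hdr : (n : ℝ) - r ≤ d := by
    have : (n : ℝ) ≤ d + r := by exact_mod_cast hr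
    linarith
  let χ : Fin n → ℝ := fun i => if (i : ℕ) < r then 0 else 1
  have hχ : ∑ i, χ i = n - r := hcard
  -- termwise lower bound
  have lo : ∑ i, χ i * (a i - c) ≤ ∑ i : Fin n, ((if (i : ℕ) < r then 1 else a i) - c) * P v i := by
    refine Finset.sum_le_sum fun i _ => ?_
    have hc : a i ≤ c := ha (by simp [Fin.le_def]; omega)
    have := P0 v i
    have := P1 v i
    have hc1 : c ≤ 1 := ha1 _
    by_cases hi : (i : ℕ) < r
    · simp only [χ, hi, if_true]; nlinarith
    · simp only [χ, hi, if_false]; nlinarith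
  have hi : ∀ i : Fin n, (a i - θ) * P e i ≤ χ i * (a i - θ) := fun i => by
    have := P0 e i
    have := P1 e i
    by_cases hi : (i : ℕ) < r
    · have := hst i ⟨r, hrn⟩ hi le_rfl
      simp only [χ, hi, if_true]; nlinarith
    · have : θ ≤ a i := ha (by simp [Fin.le_def]; omega)
      simp only [χ, hi, if_false]; nlinarith
  have expand1 : ∑ i : Fin n, ((if (i : ℕ) < r then 1 else a i) - c) * P v i
      = ∑ i, a i * P e i - c * d := by
    simp only [sub_mul, Finset.sum_sub_distrib, hTD, ← Finset.mul_sum, Ps]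
  have expand2 : ∑ i, (a i - θ) * P e i = ∑ i, a i * P e i - θ * d := by
    simp only [sub_mul, Finset.sum_sub_distrib, ← Finset.mul_sum, Ps]
  have expand3 : ∀ z : ℝ, ∑ i, χ i * (a i - z) = ∑ i, χ i * a i - (n - r) * z := fun z => by
    simp only [mul_sub, Finset.sum_sub_distrib, ← Finset.sum_mul, hχ]
  have heq : ∑ i, (a i - θ) * P e i = ∑ i, χ i * (a i - θ) := by
    apply le_antisymm (Finset.sum_le_sum fun i _ => hi i)
    rw [expand2, expand3]
    rw [expand1, expand3] at lo
    nlinarith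
  have hterm := (Finset.sum_eq_sum_iff_of_le fun i _ => hi i).1 heq
  have hz : ∀ i : Fin n, (i : ℕ) < r → P e i = 0 := fun i hir => by
    have h1 := hterm i (Finset.mem_univ _)
    have := hst i ⟨r, hrn⟩ hir le_rfl
    simp only [χ, hir, if_true, zero_mul] at h1
    rcases mul_eq_zero.1 h1 with h | h
    · simp only [θ] at h; linarith
    · exact h
  have hle : ∀ i, P e i ≤ χ i := fun i => by
    by_cases hir : (i : ℕ) < r
    · simp [χ, hir, hz i hir]
    · simpa [χ, hir] using P1 e i
  have heq2 : ∑ i, P e i = ∑ i, χ i := by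
    apply le_antisymm (Finset.sum_le_sum fun i _ => hle i)
    rw [hχ, Ps]; exact hdr
  have hone : P e j = 1 := by
    have := (Finset.sum_eq_sum_iff_of_le fun i _ => hle i).1 heq2 j (Finset.mem_univ _)
    simpa [χ, not_lt.2 hj] using this
  -- Bessel equality
  let y : E := ∑ l, inner ℝ (u l : E) (e j) • (u l : E)
  have hy : y ∈ N := Submodule.sum_mem _ fun l _ => N.smul_mem _ (u l).2
  have hin : inner ℝ (e j) y = 1 := by
    rw [← hone]
    simp only [y, P, inner_sum, inner_smul_right]
    exact Finset.sum_congr rfl fun l _ => by rw [real_inner_comm (e j)]; ring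
  have hyy : inner ℝ y y = (1:ℝ) := by
    rw [← hone]
    simp only [y, P]
    rw [hu.inner_sum]
    exact Finset.sum_congr rfl fun l _ => by simp; ring
  have : e j - y = 0 := by
    have hin2 : inner ℝ y (e j) = 1 := by rw [real_inner_comm]; exact hin
    rw [← inner_self_eq_zero (𝕜 := ℝ), inner_sub_sub_self, hin, hyy, hin2]
    simp
  rw [sub_eq_zero.1 this]; exact hy
end abs

lemma opa_perm {n : ℕ} (σ μ : Fin n → ℝ)
    (h : ∏ i, (X - C (σ i)) = ∏ i, (X - C (μ i))) : ∃ p : Equiv.Perm (Fin n), ∀ i, σ (p i) = μ i := by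
  have key : ∀ τ : Fin n → ℝ, (∏ i, (X - C (τ i))).roots = Multiset.map τ Finset.univ.val := fun τ => by
    have := Polynomial.roots_multiset_prod_X_sub_C (Multiset.map τ Finset.univ.val)
    rw [Multiset.map_map] at this
    exact this
  have h2 : Multiset.map σ Finset.univ.val = Multiset.map μ Finset.univ.val := by
    rw [← key, ← key, h]
  have h3 : (List.ofFn σ).Perm (List.ofFn μ) := by
    rw [← Multiset.coe_eq_coe]
    simpa [Fin.univ_val_map] using h2
  have e1 : σ ∘ Tuple.sort σ = μ ∘ Tuple.sort μ := by
    apply List.ofFn_injective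
    apply List.Perm.eq_of_pairwise (le := (· ≤ ·))
    · intro a b _ _; exact le_antisymm
    · exact (Tuple.monotone_sort σ).sortedLE_ofFn.pairwise
    · exact (Tuple.monotone_sort μ).sortedLE_ofFn.pairwise
    · exact ((Equiv.Perm.ofFn_comp_perm _ σ).trans h3).trans (Equiv.Perm.ofFn_comp_perm _ μ).symm
  refine ⟨(Tuple.sort μ).symm.trans (Tuple.sort σ), fun i => ?_⟩
  have := congrFun e1 ((Tuple.sort μ).symm i)
  simpa using this

lemma opa_anti (f : ℝ → ℝ) (hf : MemU f) : StrictAntiOn f (Set.Ioc 0 1) := by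
  obtain ⟨f', h1, -, h3, -⟩ := hf
  refine strictAntiOn_of_hasDerivWithinAt_neg (f' := f') (convex_Ioc 0 1)
    (fun x hx => (h1 x hx.1).continuousAt.continuousWithinAt) (fun x hx => ?_) (fun x hx => ?_)
  · rw [interior_Ioc] at hx
    exact (h1 x hx.1).hasDerivWithinAt
  · rw [interior_Ioc] at hx
    have := h3 x hx.1 hx.2.ne
    have := hx.2
    nlinarith

lemma opa_mono (f : ℝ → ℝ) (hf : MemU f) : StrictMonoOn f (Set.Ici 1) := by
  obtain ⟨f', h1, -, h3, -⟩ := hf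
  refine strictMonoOn_of_hasDerivWithinAt_pos (f' := f') (convex_Ici 1)
    (fun x hx => (h1 x (Set.mem_Ioi.2 (zero_lt_one.trans_le hx))).continuousAt.continuousWithinAt) (fun x hx => ?_) (fun x hx => ?_)
  · rw [interior_Ici] at hx
    exact (h1 x (Set.mem_Ioi.2 (zero_lt_one.trans hx))).hasDerivWithinAt
  · rw [interior_Ici] at hx
    have := h3 x (Set.mem_Ioi.2 (zero_lt_one.trans hx)) (ne_of_gt hx)
    have : 1 < x := hx
    nlinarith

lemma opa_min (f : ℝ → ℝ) (hf : MemU f) (x : ℝ) (hx : 0 < x) : f 1 ≤ f x ∧ (f x = f 1 → x = 1) := by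
  rcases lt_trichotomy x 1 with h | h | h
  · have := opa_anti f hf ⟨hx, h.le⟩ ⟨one_pos, le_rfl⟩ h
    exact ⟨this.le, fun e => absurd e this.ne'⟩
  · simp [h]
  · have := opa_mono f hf (Set.mem_Ici.2 le_rfl) (Set.mem_Ici.2 h.le) h
    exact ⟨this.le, fun e => absurd e this.ne'⟩

lemma opa_main {n : ℕ} (hn : 0 < n) (r : ℕ) (hr : r ≤ n) (a : Fin n → ℝ) (ha : Monotone a)
    (ha0 : ∀ i, 0 < a i) (ha1 : ∀ i, a i ≤ 1)
    (U S : Matrix (Fin n) (Fin n) ℝ) (hU : U.rank ≤ r) (hS : S = diagonal a + U * Uᵀ)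
    (f : ℝ → ℝ) (hf : MemU f) (σ : Fin n → ℝ)
    (hσ : S.charpoly = ∏ i, (X - C (σ i)))
    (t : Fin n → ℝ) (ht : ∀ i, t i = if (i : ℕ) < r then 1 else a i) :
    ∑ i, f (t i) ≤ ∑ i, f (σ i) ∧
    ((∀ i j : Fin n, (i : ℕ) < r → r ≤ (j : ℕ) → a i < a j) → ∑ i, f (σ i) = ∑ i, f (t i) →
      S = diagonal t) := by
  have hSpd : S.PosDef := by
    rw [hS]
    refine Matrix.PosDef.add_posSemidef (Matrix.PosDef.diagonal ha0) ?_
    have := Matrix.posSemidef_self_mul_conjTranspose U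
    simpa using this
  have hSh := hSpd.1
  let ev := hSh.eigenvalues
  let so := Tuple.sort ev
  let μ := ev ∘ so
  have hμ : Monotone μ := Tuple.monotone_sort ev
  have hμ0 : ∀ i, 0 < μ i := fun i => hSpd.eigenvalues_pos _
  let v : OrthonormalBasis (Fin n) ℝ (EuclideanSpace ℝ (Fin n)) := hSh.eigenvectorBasis.reindex so.symm
  let T : EuclideanSpace ℝ (Fin n) →ₗ[ℝ] EuclideanSpace ℝ (Fin n) := toLpLin 2 2 S
  let D : EuclideanSpace ℝ (Fin n) →ₗ[ℝ] EuclideanSpace ℝ (Fin n) := toLpLin 2 2 (diagonal a)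
  let e : OrthonormalBasis (Fin n) ℝ (EuclideanSpace ℝ (Fin n)) := EuclideanSpace.basisFun (Fin n) ℝ
  let K : EuclideanSpace ℝ (Fin n) →ₗ[ℝ] EuclideanSpace ℝ (Fin n) := toLpLin 2 2 Uᵀ
  let N := LinearMap.ker K
  have hT : ∀ i, T (v i) = μ i • v i := fun i => by
    simp only [T, v, μ, toLpLin_apply, OrthonormalBasis.reindex_apply, Equiv.symm_symm,
      hSh.mulVec_eigenvectorBasis]
    rfl
  have hD : ∀ i, D (e i) = a i • e i := fun i => by
    ext j
    simp [D, e, toLpLin_apply, Matrix.mulVec_diagonal, Pi.single_apply]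
  have hN : ∀ x ∈ N, T x = D x := fun x hx => by
    have hx : K x = 0 := hx
    simp only [K, toLpLin_apply] at hx
    have hx : Uᵀ *ᵥ x.ofLp = 0 := by simpa using hx
    simp only [T, D, toLpLin_apply, hS, Matrix.add_mulVec, ← Matrix.mulVec_mulVec, hx]
    simp
  have hfin : n ≤ Module.finrank ℝ N + r := by
    have h1 := LinearMap.finrank_range_add_finrank_ker K
    have h2 : Module.finrank ℝ (LinearMap.range K) = Uᵀ.rank := by
      rw [Matrix.rank_eq_finrank_range_toLin Uᵀ (PiLp.basisFun 2 ℝ (Fin n)) (PiLp.basisFun 2 ℝ (Fin n))]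
      rfl
    rw [h2, Matrix.rank_transpose] at h1
    simp only [finrank_euclideanSpace, Fintype.card_fin] at h1
    change _ + Module.finrank ℝ N = n at h1
    omega
  have hb := opa_bound e v T D μ a hT hD N hN r hfin hμ ha
  have hpoly : ∏ i, (X - C (σ i)) = ∏ i, (X - C (ev i)) := by
    rw [← hσ, hSh.charpoly_eq]; rfl
  obtain ⟨p, hp⟩ := opa_perm σ ev hpoly
  have hsum : ∑ i, f (σ i) = ∑ i, f (μ i) := by
    rw [← Equiv.sum_comp (so.trans p)]
    exact Finset.sum_congr rfl fun i _ => by simp [hp, μ]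
  have : NeZero n := ⟨hn.ne'⟩
  let ρ : Equiv.Perm (Fin n) := Equiv.addRight (Fin.ofNat n r)
  have hρ : ∀ k, (ρ k : ℕ) = (k + r) % n := fun k => by
    simp [ρ, Fin.val_add]
  have hcase : ∀ k : Fin n, ((ρ k : ℕ) = k + r ∧ t (ρ k) = a (ρ k)) ∨ t (ρ k) = 1 := fun k => by
    by_cases h : (k : ℕ) + r < n
    · left
      have h1 : (ρ k : ℕ) = k + r := by rw [hρ, Nat.mod_eq_of_lt h]
      refine ⟨h1, ?_⟩
      rw [ht, if_neg (by omega)]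
    · right
      have h1 : (ρ k : ℕ) = k + r - n := by
        rw [hρ, Nat.mod_eq_sub_mod (by omega), Nat.mod_eq_of_lt (by omega)]
      rw [ht, if_pos (by omega)]
  have hterm : ∀ k, f (t (ρ k)) ≤ f (μ k) ∧ (f (t (ρ k)) = f (μ k) → t (ρ k) = μ k) := fun k => by
    rcases hcase k with ⟨h1, h2⟩ | h
    · have h3 := hb k (ρ k) h1
      rw [h2]
      have m1 : μ k ∈ Set.Ioc (0:ℝ) 1 := ⟨hμ0 k, h3.trans (ha1 _)⟩
      have m2 : a (ρ k) ∈ Set.Ioc (0:ℝ) 1 := ⟨ha0 _, ha1 _⟩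
      exact ⟨(opa_anti f hf).antitoneOn m1 m2 h3, fun h => (opa_anti f hf).injOn m2 m1 h⟩
    · rw [h]
      have := opa_min f hf (μ k) (hμ0 k)
      exact ⟨this.1, fun h => (this.2 h.symm).symm⟩
  have htρ : ∑ i, f (t i) = ∑ k, f (t (ρ k)) := (Equiv.sum_comp ρ (fun i => f (t i))).symm
  refine ⟨?_, fun hst heq => ?_⟩
  · rw [hsum, htρ]
    exact Finset.sum_le_sum fun k _ => (hterm k).1
  rw [hsum, htρ] at heq
  have h1 := (Finset.sum_eq_sum_iff_of_le fun k _ => (hterm k).1).1 heq.symm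
  have hμt : ∀ k, t (ρ k) = μ k := fun k => (hterm k).2 (h1 k (Finset.mem_univ _))
  have hu : ∀ j : Fin n, r ≤ (j : ℕ) → e j ∈ N := by
    refine opa_unique e (v.reindex ρ) T D a r (fun i => ?_) hD N hN hfin ha ha1 hst
    rw [OrthonormalBasis.reindex_apply, hT, ← hμt, Equiv.apply_symm_apply, ht]
  have ht1 : ∀ i, t i ≤ 1 := fun i => by
    rw [ht]; split_ifs
    · exact le_rfl
    · exact ha1 i
  have hev1 : ∀ i, ev i ≤ 1 := fun i => by
    have := hμt (so.symm i)
    simp only [μ, Function.comp, Equiv.apply_symm_apply] at this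
    rw [← this]; exact ht1 _
  have hpsd : (1 - S).PosSemidef := by
    refine Matrix.PosSemidef.of_dotProduct_mulVec_nonneg (by
      exact Matrix.isHermitian_one.sub hSh) fun x => ?_
    have q := opa_quad v T μ hT (WithLp.toLp 2 x)
    have s1 := v.sum_sq_inner_right (WithLp.toLp 2 x)
    have hle : inner ℝ (WithLp.toLp 2 x : EuclideanSpace ℝ (Fin n)) (T (WithLp.toLp 2 x)) ≤ ‖(WithLp.toLp 2 x : EuclideanSpace ℝ (Fin n))‖ ^ 2 := by
      rw [q, ← s1]
      refine Finset.sum_le_sum fun i _ => ?_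
      have : μ i ≤ 1 := hev1 _
      nlinarith [sq_nonneg (inner ℝ (v i) (WithLp.toLp 2 x : EuclideanSpace ℝ (Fin n)))]
    rw [← real_inner_self_eq_norm_sq] at hle
    simp only [T, toLpLin_apply, EuclideanSpace.inner_toLp_toLp, star_trivial] at hle
    rw [star_trivial, Matrix.sub_mulVec, Matrix.one_mulVec, dotProduct_sub, sub_nonneg, dotProduct_comm]
    exact hle
  have hcol : ∀ j : Fin n, r ≤ (j : ℕ) → ∀ i, S i j = diagonal t i j := fun j hj i => by
    have h2 := hN _ (hu j hj)
    rw [hD] at h2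
    have h3 := congrArg (fun z : EuclideanSpace ℝ (Fin n) => z i) h2
    simp only [T, e, toLpLin_apply, EuclideanSpace.basisFun_apply] at h3
    simp at h3
    rw [h3, Matrix.diagonal_apply, ht]
    by_cases hij : i = j
    · subst hij; simp [not_lt.2 hj]
    · simp [hij]
  have htr : ∑ i, S i i = ∑ i, t i := by
    have h2 := hSh.trace_eq_sum_eigenvalues
    rw [Matrix.trace] at h2
    simp only [Matrix.diag_apply] at h2
    rw [h2, ← Equiv.sum_comp ρ t, ← Equiv.sum_comp so]
    exact Finset.sum_congr rfl fun i _ => by rw [hμt]; rfl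
  have hdiag : ∀ i, S i i = t i := by
    have hle : ∀ i, S i i ≤ t i := fun i => by
      by_cases hi : (i : ℕ) < r
      · rw [ht, if_pos hi]
        have := hpsd.diag_nonneg (i := i)
        simp at this
        exact this
      · rw [hcol i (not_lt.1 hi) i]; simp
    exact fun i => (Finset.sum_eq_sum_iff_of_le fun i _ => hle i).1 htr i (Finset.mem_univ _)
  ext i j
  by_cases hj : (j : ℕ) < r
  · have h2 := (hpsd.dotProduct_mulVec_zero_iff (Pi.single j 1)).1 (by
      simp [hdiag j, ht, hj])
    have h3 := congrFun h2 i
    simp at h3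
    have h4 : S i j = (1 : Matrix (Fin n) (Fin n) ℝ) i j := by linarith
    rw [h4, Matrix.one_apply, Matrix.diagonal_apply]
    by_cases hij : i = j
    · subst hij; simp [ht, hj]
    · simp [hij]
  · exact hcol j (not_lt.1 hj) i

/-- Corollary 3.1 (optimal posterior precision approximation):
`B̂ = Γpr⁻¹ + Σ_{i≤r} δᵢ² w̃ᵢ w̃ᵢᵀ` minimizes `L(B, Γpos⁻¹)` over `𝓜_r⁻¹`; it is the
unique minimizer when the first `r+1` generalized eigenvalues are strictly decreasing. -/
theorem optimal_posterior_precision_approx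
    (n m r : ℕ) (hn : 0 < n) (hm : 0 < m) (hr : r ≤ n)
    (G : Matrix (Fin m) (Fin n) ℝ)
    (Γobs : Matrix (Fin m) (Fin m) ℝ) (hobs : Γobs.PosDef)
    (Γpr : Matrix (Fin n) (Fin n) ℝ) (hpr : Γpr.PosDef)
    (H Γpos : Matrix (Fin n) (Fin n) ℝ)
    (hH : H = Gᵀ * Γobs⁻¹ * G)
    (hΓpos : Γpos = (H + Γpr⁻¹)⁻¹)
    (δ : Fin n → ℝ) (w : Fin n → Fin n → ℝ)
    (hδ : ∀ i, 0 ≤ δ i)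
    (hord : ∀ i j : Fin n, i ≤ j → (δ j) ^ 2 ≤ (δ i) ^ 2)
    (heig : ∀ i, H *ᵥ w i = (δ i) ^ 2 • (Γpr⁻¹ *ᵥ w i))
    (hnorm : ∀ i j, w i ⬝ᵥ (Γpr⁻¹ *ᵥ w j) = if i = j then (1:ℝ) else 0)
    (f : ℝ → ℝ) (hf : MemU f)
    (wt : Fin n → Fin n → ℝ) (hwt : ∀ i, wt i = Γpr⁻¹ *ᵥ w i)
    (Bhat : Matrix (Fin n) (Fin n) ℝ)
    (hBhat : Bhat = Γpr⁻¹ + ∑ i ∈ Finset.univ.filter (fun i : Fin n => (i : ℕ) < r),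
      (δ i) ^ 2 • vecMulVec (wt i) (wt i)) :
    Bhat ∈ MInvClass Γpr r ∧
    (∀ Bt ∈ MInvClass Γpr r, ∀ σ σ' : Fin n → ℝ,
      IsGenEigs Bhat Γpos⁻¹ σ → IsGenEigs Bt Γpos⁻¹ σ' →
      ∑ i, f (σ i) ≤ ∑ i, f (σ' i)) ∧
    ((∀ i j : Fin n, i < j → (j : ℕ) ≤ r → (δ j) ^ 2 < (δ i) ^ 2) →
      ∀ Bt ∈ MInvClass Γpr r,
        (∃ σ σ' : Fin n → ℝ, IsGenEigs Bt Γpos⁻¹ σ ∧ IsGenEigs Bhat Γpos⁻¹ σ' ∧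
          ∑ i, f (σ i) = ∑ i, f (σ' i)) →
        Bt = Bhat) := by
  set P := Γpr⁻¹ with hP
  let Wm : Matrix (Fin n) (Fin n) ℝ := (Matrix.of w)ᵀ
  have hPt : Pᵀ = P := by
    have := hpr.inv.1
    simpa [Matrix.IsHermitian] using this
  have hd0 : ∀ i, 0 < 1 + δ i ^ 2 := fun i => by positivity
  let s : Fin n → ℝ := fun i => (Real.sqrt (1 + δ i ^ 2))⁻¹
  let a : Fin n → ℝ := fun i => (1 + δ i ^ 2)⁻¹
  have hs2 : ∀ i, s i * s i = a i := fun i => by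
    simp only [s, a]
    rw [← mul_inv, Real.mul_self_sqrt (hd0 i).le]
  have hWP : Wmᵀ * P * Wm = 1 := by
    ext i j
    have h1 : (Wmᵀ * P * Wm) i j = w i ⬝ᵥ (P *ᵥ w j) := by
      rw [Matrix.mul_assoc, Matrix.mul_apply_eq_vecMul]
      rfl
    rw [h1, hnorm, Matrix.one_apply]
  have hWH : Wmᵀ * H * Wm = diagonal (fun i => δ i ^ 2) := by
    ext i j
    have h1 : (Wmᵀ * H * Wm) i j = w i ⬝ᵥ (H *ᵥ w j) := by
      rw [Matrix.mul_assoc, Matrix.mul_apply_eq_vecMul]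
      rfl
    rw [h1, heig, dotProduct_smul, hnorm, Matrix.diagonal_apply]
    by_cases hij : i = j
    · subst hij; simp
    · simp [hij]
  let V := Wm * diagonal s
  have hVt : Vᵀ = diagonal s * Wmᵀ := by simp [V, Matrix.transpose_mul]
  have hconj : ∀ M : Matrix (Fin n) (Fin n) ℝ, Vᵀ * M * V = diagonal s * (Wmᵀ * M * Wm) * diagonal s := by
    intro M
    rw [hVt]; simp only [V, Matrix.mul_assoc]
  have hVP : Vᵀ * P * V = diagonal a := by
    rw [hconj, hWP, Matrix.mul_one, Matrix.diagonal_mul_diagonal]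
    congr 1; funext i; exact hs2 i
  have hVHP : Vᵀ * (H + P) * V = 1 := by
    rw [hconj, Matrix.mul_add, Matrix.add_mul, hWP, hWH]
    rw [← Matrix.diagonal_one, Matrix.diagonal_add, Matrix.diagonal_mul_diagonal, Matrix.diagonal_mul_diagonal]
    congr 1; funext i
    have := hs2 i
    have h2 := (hd0 i).ne'
    simp only [a] at this
    calc s i * (δ i ^ 2 + 1) * s i = (s i * s i) * (1 + δ i ^ 2) := by ring
      _ = 1 := by rw [this, inv_mul_cancel₀ h2]
  have hVV : V * (Vᵀ * (H + P)) = 1 := mul_eq_one_comm.1 hVHP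
  have hVV2 : (V * Vᵀ) * (H + P) = 1 := by rw [Matrix.mul_assoc]; exact hVV
  have hΓ : Γpos = V * Vᵀ := by rw [hΓpos]; exact Matrix.inv_eq_left_inv hVV2
  have hΓii : Γpos⁻¹⁻¹ = V * Vᵀ := by
    rw [Matrix.nonsing_inv_nonsing_inv, hΓ]
    rw [hΓ]
    exact Matrix.isUnit_det_of_right_inverse hVV2
  have hcp : ∀ M : Matrix (Fin n) (Fin n) ℝ, (Γpos⁻¹⁻¹ * M).charpoly = (Vᵀ * M * V).charpoly := by
    intro M
    rw [hΓii, Matrix.mul_assoc, Matrix.charpoly_mul_comm]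
  have hinj : ∀ M M' : Matrix (Fin n) (Fin n) ℝ, Vᵀ * M * V = Vᵀ * M' * V → M = M' := by
    intro M M' h
    have hR : V * (Vᵀ * (H + P)) = 1 := hVV
    have hL : ((H + P) * V) * Vᵀ = 1 := by
      rw [Matrix.mul_assoc]
      exact mul_eq_one_comm.1 hVV2
    calc M = (((H + P) * V) * Vᵀ) * M * (V * (Vᵀ * (H + P))) := by rw [hR, hL]; simp
      _ = ((H + P) * V) * (Vᵀ * M * V) * (Vᵀ * (H + P)) := by simp only [Matrix.mul_assoc]
      _ = ((H + P) * V) * (Vᵀ * M' * V) * (Vᵀ * (H + P)) := by rw [h]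
      _ = (((H + P) * V) * Vᵀ) * M' * (V * (Vᵀ * (H + P))) := by simp only [Matrix.mul_assoc]
      _ = M' := by rw [hR, hL]; simp
  have ha : Monotone a := fun i j hij => by
    simp only [a]
    have := hord i j hij
    exact inv_anti₀ (hd0 j) (by linarith)
  have ha0 : ∀ i, 0 < a i := fun i => inv_pos.2 (hd0 i)
  have ha1 : ∀ i, a i ≤ 1 := fun i => inv_le_one_of_one_le₀ (by nlinarith [sq_nonneg (δ i)])
  -- Bhat in the class
  let c : Fin n → ℝ := fun i => if (i : ℕ) < r then δ i else 0
  let J : Matrix (Fin n) (Fin n) ℝ := (P * Wm) * diagonal c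
  have hJJ : Bhat = P + J * Jᵀ := by
    rw [hBhat]
    congr 1
    ext i j
    rw [Matrix.sum_apply, Finset.sum_filter, Matrix.mul_apply]
    refine Finset.sum_congr rfl fun k _ => ?_
    have hw : ∀ i, (P * Wm) i k = wt k i := fun i => by
      rw [hwt]; rfl
    simp only [J, Matrix.transpose_apply, Matrix.mul_diagonal, hw, c]
    by_cases hk : (k : ℕ) < r
    · simp [hk, Matrix.vecMulVec_apply]; ring
    · simp [hk]
  have hJr : J.rank ≤ r := by
    refine (Matrix.rank_mul_le_right _ _).trans ?_
    rw [Matrix.rank_diagonal]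
    have : Fintype.card {i // c i ≠ 0} ≤ Fintype.card (Fin r) := by
      refine Fintype.card_le_of_injective (fun i => ⟨i.1, ?_⟩) ?_
      · by_contra h
        exact i.2 (by simp [c, h])
      · intro i j hij
        simp only [Fin.mk.injEq] at hij
        exact Subtype.ext (Fin.ext hij)
    simpa using this
  have hmem : Bhat ∈ MInvClass Γpr r := ⟨J, hJr, hJJ⟩
  let t : Fin n → ℝ := fun i => if (i : ℕ) < r then 1 else a i
  have hVB : Vᵀ * Bhat * V = diagonal t := by
    have hVJ : Vᵀ * J = diagonal s * diagonal c := by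
      rw [hVt]
      calc diagonal s * Wmᵀ * J = diagonal s * (Wmᵀ * P * Wm) * diagonal c := by
            simp only [J, Matrix.mul_assoc]
        _ = _ := by rw [hWP, Matrix.mul_one]
    have hJV : Jᵀ * V = (diagonal s * diagonal c)ᵀ := by
      rw [← hVJ, Matrix.transpose_mul Vᵀ J, Matrix.transpose_transpose]
    calc Vᵀ * Bhat * V = Vᵀ * P * V + (Vᵀ * J) * (Jᵀ * V) := by
          rw [hJJ, Matrix.mul_add, Matrix.add_mul]; simp only [Matrix.mul_assoc]
      _ = diagonal t := by
          rw [hVJ, hJV, hVP, Matrix.diagonal_mul_diagonal, Matrix.diagonal_transpose,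
            Matrix.diagonal_mul_diagonal, Matrix.diagonal_add]
          congr 1; funext i
          by_cases hi : (i : ℕ) < r
          · simp only [c, t, hi, if_true]
            have h1 := hs2 i
            have h2 : a i * (1 + δ i ^ 2) = 1 := inv_mul_cancel₀ (hd0 i).ne'
            calc a i + s i * δ i * (s i * δ i) = a i + (s i * s i) * δ i ^ 2 := by ring
              _ = a i * (1 + δ i ^ 2) := by rw [h1]; ring
              _ = 1 := h2
          · simp [c, t, hi]
  have hsumB : ∀ σ, IsGenEigs Bhat Γpos⁻¹ σ → ∑ i, f (σ i) = ∑ i, f (t i) := fun σ hσ => by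
    unfold IsGenEigs at hσ
    rw [hcp, hVB, Matrix.charpoly_diagonal] at hσ
    obtain ⟨p, hp⟩ := opa_perm t σ hσ
    rw [← Equiv.sum_comp p (fun i => f (t i))]
    exact Finset.sum_congr rfl fun i _ => by rw [hp]
  have hmain : ∀ Bt ∈ MInvClass Γpr r, ∀ σ, IsGenEigs Bt Γpos⁻¹ σ →
      ∑ i, f (t i) ≤ ∑ i, f (σ i) ∧
      ((∀ i j : Fin n, (i : ℕ) < r → r ≤ (j : ℕ) → a i < a j) → ∑ i, f (σ i) = ∑ i, f (t i) →
        Vᵀ * Bt * V = diagonal t) := by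
    rintro Bt ⟨K, hK, hBt⟩ σ hσ
    unfold IsGenEigs at hσ
    rw [hcp] at hσ
    refine opa_main hn r hr a ha ha0 ha1 (Vᵀ * K) (Vᵀ * Bt * V)
      ((Matrix.rank_mul_le_right _ _).trans hK) ?_ f hf σ hσ t (fun i => rfl)
    rw [← hVP, hBt, Matrix.transpose_mul Vᵀ K, Matrix.transpose_transpose, Matrix.mul_add, Matrix.add_mul]
    simp only [Matrix.mul_assoc, hP]
  refine ⟨hmem, ?_, ?_⟩
  · intro Bt hBt σ σ' h1 h2
    rw [hsumB σ h1]
    exact (hmain Bt hBt σ' h2).1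
  · rintro hst Bt hBt ⟨σ, σ', h1, h2, h3⟩
    refine hinj _ _ ?_
    rw [hVB]
    refine (hmain Bt hBt σ h1).2 (fun i j hi hj => ?_) (h3.trans (hsumB σ' h2))
    have hrn : r < n := hj.trans_lt j.2
    have l1 := hst i ⟨r, hrn⟩ hi le_rfl
    have l2 := hord ⟨r, hrn⟩ j hj
    simp only [a]
    exact inv_strictAnti₀ (hd0 j) (by linarith)
end

section
/- Let w̃ᵢ = Γ_pr⁻¹ ŵᵢ. Then the matrix Γ_pr − Σ_{i=1}^{r} (δᵢ²/(1+δᵢ²)) ŵᵢ ŵᵢᵀ is invertible and its inverse equals Γ_pr⁻¹ + Σ_{i=1}^{r} δᵢ² w̃ᵢ w̃ᵢᵀ. -/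
open Matrix Finset

/-- Corollary 3.1 (ii): the optimal posterior covariance approximation
`Γpr − Σ_{i≤r} (δᵢ²/(1+δᵢ²)) ŵᵢ ŵᵢᵀ` is invertible, with inverse the optimal posterior
precision approximation `Γpr⁻¹ + Σ_{i≤r} δᵢ² w̃ᵢ w̃ᵢᵀ`, where `w̃ᵢ = Γpr⁻¹ ŵᵢ`. -/
theorem optimal_covariance_inverse_is_optimal_precision
    (n m r : ℕ) (hn : 0 < n) (hm : 0 < m) (hr : r ≤ n)
    (G : Matrix (Fin m) (Fin n) ℝ)
    (Γobs : Matrix (Fin m) (Fin m) ℝ) (hobs : Γobs.PosDef)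
    (Γpr : Matrix (Fin n) (Fin n) ℝ) (hpr : Γpr.PosDef)
    (H : Matrix (Fin n) (Fin n) ℝ)
    (hH : H = Gᵀ * Γobs⁻¹ * G)
    (δ : Fin n → ℝ) (w : Fin n → Fin n → ℝ)
    (hδ : ∀ i, 0 ≤ δ i)
    (hord : ∀ i j : Fin n, i ≤ j → (δ j) ^ 2 ≤ (δ i) ^ 2)
    (heig : ∀ i, H *ᵥ w i = (δ i) ^ 2 • (Γpr⁻¹ *ᵥ w i))
    (hnorm : ∀ i j, w i ⬝ᵥ (Γpr⁻¹ *ᵥ w j) = if i = j then (1:ℝ) else 0)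
    (wt : Fin n → Fin n → ℝ) (hwt : ∀ i, wt i = Γpr⁻¹ *ᵥ w i)
    (Γhat : Matrix (Fin n) (Fin n) ℝ)
    (hΓhat : Γhat = Γpr - ∑ i ∈ Finset.univ.filter (fun i : Fin n => (i : ℕ) < r),
      ((δ i) ^ 2 / (1 + (δ i) ^ 2)) • vecMulVec (w i) (w i)) :
    IsUnit Γhat ∧
      Γhat⁻¹ = Γpr⁻¹ + ∑ i ∈ Finset.univ.filter (fun i : Fin n => (i : ℕ) < r),
        (δ i) ^ 2 • vecMulVec (wt i) (wt i) := by
  have hdet : IsUnit Γpr.det := (Matrix.isUnit_iff_isUnit_det _).mp hpr.isUnit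
  have hsymm : (Γpr⁻¹)ᵀ = Γpr⁻¹ := by
    have h := hpr.inv.isHermitian.eq
    rwa [Matrix.conjTranspose_eq_transpose_of_trivial] at h
  have h1 : ∀ i, Γpr *ᵥ wt i = w i := by
    intro i
    rw [hwt, Matrix.mulVec_mulVec, Matrix.mul_nonsing_inv _ hdet, Matrix.one_mulVec]
  have h2 : ∀ i, w i ᵥ* Γpr⁻¹ = wt i := by
    intro i
    rw [hwt, ← Matrix.mulVec_transpose, hsymm]
  have h3 : ∀ i j, w i ⬝ᵥ wt j = if i = j then (1:ℝ) else 0 := by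
    intro i j
    rw [hwt, hnorm]
  have key : Γhat * (Γpr⁻¹ + ∑ i ∈ Finset.univ.filter (fun i : Fin n => (i : ℕ) < r),
        (δ i) ^ 2 • vecMulVec (wt i) (wt i)) = 1 := by
    rw [hΓhat]
    generalize Finset.univ.filter (fun i : Fin n => (i : ℕ) < r) = s
    have e1 : Γpr * ∑ i ∈ s, (δ i) ^ 2 • vecMulVec (wt i) (wt i)
        = ∑ i ∈ s, (δ i) ^ 2 • vecMulVec (w i) (wt i) := by
      rw [Finset.mul_sum]
      refine Finset.sum_congr rfl fun i _ => ?_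
      rw [Matrix.mul_smul, Matrix.mul_vecMulVec, h1]
    have e2 : (∑ i ∈ s, ((δ i) ^ 2 / (1 + (δ i) ^ 2)) • vecMulVec (w i) (w i)) * Γpr⁻¹
        = ∑ i ∈ s, ((δ i) ^ 2 / (1 + (δ i) ^ 2)) • vecMulVec (w i) (wt i) := by
      rw [Finset.sum_mul]
      refine Finset.sum_congr rfl fun i _ => ?_
      rw [Matrix.smul_mul, Matrix.vecMulVec_mul, h2]
    have e3 : (∑ i ∈ s, ((δ i) ^ 2 / (1 + (δ i) ^ 2)) • vecMulVec (w i) (w i)) *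
        (∑ i ∈ s, (δ i) ^ 2 • vecMulVec (wt i) (wt i))
        = ∑ i ∈ s, ((δ i) ^ 2 / (1 + (δ i) ^ 2) * (δ i) ^ 2) • vecMulVec (w i) (wt i) := by
      rw [Finset.sum_mul]
      refine Finset.sum_congr rfl fun i hi => ?_
      rw [Finset.mul_sum, Finset.sum_eq_single_of_mem i hi]
      · rw [Matrix.smul_mul, Matrix.mul_smul, Matrix.vecMulVec_mul_vecMulVec, h3, smul_smul]
        simp
      · intro j _ hj
        rw [Matrix.smul_mul, Matrix.mul_smul, Matrix.vecMulVec_mul_vecMulVec, h3,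
          if_neg (Ne.symm hj)]
        simp
    rw [sub_mul, mul_add, mul_add, e1, e2, e3, Matrix.mul_nonsing_inv _ hdet,
      ← Finset.sum_add_distrib]
    have e4 : ∑ i ∈ s, (δ i) ^ 2 • vecMulVec (w i) (wt i)
        = ∑ i ∈ s, (((δ i) ^ 2 / (1 + (δ i) ^ 2)) • vecMulVec (w i) (wt i)
          + ((δ i) ^ 2 / (1 + (δ i) ^ 2) * (δ i) ^ 2) • vecMulVec (w i) (wt i)) := by
      refine Finset.sum_congr rfl fun i _ => ?_
      rw [← add_smul]
      congr 1
      have : (1 + (δ i) ^ 2) ≠ 0 := by positivity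
      field_simp
    rw [e4, add_sub_cancel_right]
  exact ⟨IsUnit.of_mul_eq_one _ key, Matrix.inv_eq_right_inv key⟩
end

section
/- Let w̃ᵢ = Γ_pr⁻¹ ŵᵢ and define P_r = Σ_{i=1}^{r} ŵᵢ w̃ᵢᵀ and Ĝ_r = G P_r. Then P_r is an oblique projector, i.e. P_r² = P_r, and the posterior covariance matrix of the Bayesian linear model with forward operator Ĝ_r (in place of G), namely ( Ĝ_rᵀ Γ_obs⁻¹ Ĝ_r + Γ_pr⁻¹ )⁻¹, equals the optimal approximation Γ̂_pos = Γ_pr − Σ_{i=1}^{r} (δᵢ²/(1+δᵢ²)) ŵᵢ ŵᵢᵀ. -/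
open Matrix Finset

lemma sum_vecMulVec_eq (n r : ℕ) (w : Fin n → Fin n → ℝ) (c : Fin n → ℝ) :
    ∑ i ∈ Finset.univ.filter (fun i : Fin n => (i : ℕ) < r), c i • vecMulVec (w i) (w i)
      = (Matrix.of w)ᵀ * diagonal (fun i : Fin n => if (i : ℕ) < r then c i else 0)
        * Matrix.of w := by
  ext a b
  rw [Matrix.sum_apply, Finset.sum_filter, Matrix.mul_apply]
  refine Finset.sum_congr rfl fun i _ => ?_
  rw [Matrix.mul_diagonal]
  simp only [Matrix.smul_apply, vecMulVec_apply, Matrix.transpose_apply, Matrix.of_apply,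
    smul_eq_mul]
  split_ifs <;> ring

/-- Corollary 3.2 (optimal projector): `P_r = Σ_{i≤r} ŵᵢ w̃ᵢᵀ` is an oblique projector
(`P_r² = P_r`), and the posterior covariance of the Bayesian linear model with the reduced
forward operator `Ĝ_r = G P_r` equals the optimal approximation
`Γ̂pos = Γpr − Σ_{i≤r} (δᵢ²/(1+δᵢ²)) ŵᵢ ŵᵢᵀ`. -/
theorem optimal_projector
    (n m r : ℕ) (hn : 0 < n) (hm : 0 < m) (hr : r ≤ n)
    (G : Matrix (Fin m) (Fin n) ℝ)
    (Γobs : Matrix (Fin m) (Fin m) ℝ) (hobs : Γobs.PosDef)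
    (Γpr : Matrix (Fin n) (Fin n) ℝ) (hpr : Γpr.PosDef)
    (H : Matrix (Fin n) (Fin n) ℝ)
    (hH : H = Gᵀ * Γobs⁻¹ * G)
    (δ : Fin n → ℝ) (w : Fin n → Fin n → ℝ)
    (hδ : ∀ i, 0 ≤ δ i)
    (hord : ∀ i j : Fin n, i ≤ j → (δ j) ^ 2 ≤ (δ i) ^ 2)
    (heig : ∀ i, H *ᵥ w i = (δ i) ^ 2 • (Γpr⁻¹ *ᵥ w i))
    (hnorm : ∀ i j, w i ⬝ᵥ (Γpr⁻¹ *ᵥ w j) = if i = j then (1:ℝ) else 0)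
    (wt : Fin n → Fin n → ℝ) (hwt : ∀ i, wt i = Γpr⁻¹ *ᵥ w i)
    (P : Matrix (Fin n) (Fin n) ℝ)
    (hP : P = ∑ i ∈ Finset.univ.filter (fun i : Fin n => (i : ℕ) < r),
      vecMulVec (w i) (wt i))
    (Ghat : Matrix (Fin m) (Fin n) ℝ) (hGhat : Ghat = G * P) :
    P * P = P ∧
      (Ghatᵀ * Γobs⁻¹ * Ghat + Γpr⁻¹)⁻¹ =
        Γpr - ∑ i ∈ Finset.univ.filter (fun i : Fin n => (i : ℕ) < r),
          ((δ i) ^ 2 / (1 + (δ i) ^ 2)) • vecMulVec (w i) (w i) := by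
  have hA : (Γpr⁻¹)ᵀ = Γpr⁻¹ := by
    have := hpr.inv.isHermitian.eq
    rwa [Matrix.conjTranspose_eq_transpose_of_trivial] at this
  have hdet : IsUnit Γpr.det := (Matrix.isUnit_iff_isUnit_det _).1 hpr.isUnit
  have hPA : P = (∑ i ∈ Finset.univ.filter (fun i : Fin n => (i : ℕ) < r),
      (1 : ℝ) • vecMulVec (w i) (w i)) * Γpr⁻¹ := by
    rw [hP, Finset.sum_mul]
    refine Finset.sum_congr rfl fun i _ => ?_
    rw [one_smul, vecMulVec_mul, hwt, ← Matrix.vecMul_transpose, hA]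
  rw [sum_vecMulVec_eq n r w (fun _ => 1)] at hPA
  rw [sum_vecMulVec_eq n r w (fun i => (δ i) ^ 2 / (1 + (δ i) ^ 2))]
  have hAG : Γpr * Γpr⁻¹ = 1 := Matrix.mul_nonsing_inv _ hdet
  have hGA : Γpr⁻¹ * Γpr = 1 := Matrix.nonsing_inv_mul _ hdet
  have hHW : H * (Matrix.of w)ᵀ = Γpr⁻¹ * (Matrix.of w)ᵀ * diagonal (fun i => (δ i) ^ 2) := by
    ext a i
    rw [Matrix.mul_diagonal]
    have := congrFun (heig i) a
    simp only [Pi.smul_apply, smul_eq_mul] at this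
    rw [mul_comm]
    exact this
  have hWAW : Matrix.of w * Γpr⁻¹ * (Matrix.of w)ᵀ = 1 := by
    ext i j
    rw [Matrix.mul_assoc, Matrix.one_apply, ← hnorm i j]
    rfl
  have hobsT : Ghatᵀ * Γobs⁻¹ * Ghat = Pᵀ * H * P := by
    rw [hGhat, hH, Matrix.transpose_mul]
    simp only [Matrix.mul_assoc]
  rw [hobsT]
  generalize Matrix.of w = V at *
  generalize Γpr⁻¹ = A at *
  set E : Matrix (Fin n) (Fin n) ℝ :=
    diagonal (fun i : Fin n => if (i : ℕ) < r then (1 : ℝ) else 0) with hE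
  set F : Matrix (Fin n) (Fin n) ℝ :=
    diagonal (fun i : Fin n => if (i : ℕ) < r then (δ i) ^ 2 / (1 + (δ i) ^ 2) else 0) with hF
  set D : Matrix (Fin n) (Fin n) ℝ := diagonal (fun i => (δ i) ^ 2) with hD
  have hEE : E * E = E := by
    rw [hE, diagonal_mul_diagonal]
    congr 1; ext i; split_ifs <;> simp
  have hET : Eᵀ = E := by rw [hE, diagonal_transpose]
  have hEDF : (E * D * E + 1) * (1 - F) = 1 := by
    rw [hE, hD, hF, diagonal_mul_diagonal, diagonal_mul_diagonal, ← diagonal_one,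
      diagonal_add, diagonal_sub, diagonal_mul_diagonal]
    congr 1; ext i
    have : (1 + (δ i) ^ 2) ≠ 0 := by positivity
    split_ifs
    · field_simp
      ring
    · simp
  have hVVA : Vᵀ * (V * A) = 1 := mul_eq_one_comm.1 hWAW
  have hG : Γpr = Vᵀ * V := by
    calc Γpr = Vᵀ * (V * A) * Γpr := by rw [hVVA, Matrix.one_mul]
      _ = Vᵀ * V * (A * Γpr) := by simp only [Matrix.mul_assoc]
      _ = Vᵀ * V := by rw [hGA, Matrix.mul_one]
  refine ⟨?_, ?_⟩
  · calc P * P = Vᵀ * E * (V * A * Vᵀ) * E * V * A := by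
          rw [hPA]; simp only [Matrix.mul_assoc]
      _ = Vᵀ * (E * E) * V * A := by rw [hWAW]; simp only [Matrix.mul_assoc, Matrix.one_mul]
      _ = P := by rw [hEE, hPA]
  · apply Matrix.inv_eq_right_inv
    have hPT : Pᵀ = A * Vᵀ * E * V := by
      rw [hPA]
      simp only [Matrix.transpose_mul, Matrix.transpose_transpose, hA, hET, Matrix.mul_assoc]
    have hA2 : A = A * Vᵀ * V * A := by
      calc A = A * (Vᵀ * (V * A)) := by rw [hVVA, Matrix.mul_one]
        _ = _ := by simp only [Matrix.mul_assoc]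
    have h1 : Pᵀ * H * P = A * Vᵀ * (E * D * E) * V * A := by
      calc Pᵀ * H * P = A * Vᵀ * E * V * (H * Vᵀ) * E * V * A := by
            rw [hPT, hPA]; simp only [Matrix.mul_assoc]
        _ = A * Vᵀ * E * (V * A * Vᵀ) * D * E * V * A := by
            rw [hHW]; simp only [Matrix.mul_assoc]
        _ = _ := by rw [hWAW]; simp only [Matrix.mul_assoc, Matrix.one_mul]
    have h2 : Pᵀ * H * P + A = A * Vᵀ * (E * D * E + 1) * V * A := by
      rw [h1, Matrix.mul_add, Matrix.add_mul, Matrix.add_mul, Matrix.mul_one, ← hA2]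
    have h3 : Γpr - Vᵀ * F * V = Vᵀ * (1 - F) * V := by
      rw [hG, Matrix.mul_sub, Matrix.sub_mul, Matrix.mul_one]
    rw [h2, h3]
    calc A * Vᵀ * (E * D * E + 1) * V * A * (Vᵀ * (1 - F) * V)
        = A * Vᵀ * (E * D * E + 1) * (V * A * Vᵀ) * (1 - F) * V := by
          simp only [Matrix.mul_assoc]
      _ = A * Vᵀ * ((E * D * E + 1) * (1 - F)) * V := by
          rw [hWAW, Matrix.mul_one]; simp only [Matrix.mul_assoc]
      _ = A * (Vᵀ * V) := by rw [hEDF, Matrix.mul_one, Matrix.mul_assoc]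
      _ = 1 := by rw [← hG, hGA]
end

section
/- Let S_pr and S_obs be matrices with Γ_pr = S_pr S_prᵀ and Γ_obs = S_obs S_obsᵀ, and let S_obs⁻¹ G S_pr = Σᵢ δᵢ vᵢ wᵢᵀ be a singular value decomposition with singular values δ₁ ≥ δ₂ ≥ ⋯ ≥ 0, and set ŵᵢ = S_pr wᵢ and v̂ᵢ = S_obs⁻ᵀ vᵢ. Then the matrix A* = Σ_{i=1}^{r} ( δᵢ/(1+δᵢ²) ) ŵᵢ v̂ᵢᵀ has rank at most r and minimizes the Bayes risk E[ ‖A y − x‖²_{Γ_pos⁻¹} ] over all real n×m matrices A of rank at most r, where the expectation is over the joint law of (x, y). -/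
open Matrix MeasureTheory Finset

/-- The joint law of `(x, y)` where `x ~ N(0, Γpr)`, `ε ~ N(0, Γobs)` independent of `x`,
and `y = G x + ε`. -/
noncomputable def jointMeasure {n m : ℕ} (G : Matrix (Fin m) (Fin n) ℝ)
    (Γpr : Matrix (Fin n) (Fin n) ℝ) (Γobs : Matrix (Fin m) (Fin m) ℝ) :
    Measure ((Fin n → ℝ) × (Fin m → ℝ)) :=
  Measure.map (fun p : (Fin n → ℝ) × (Fin m → ℝ) => (p.1, G *ᵥ p.1 + p.2))
    ((gaussianMeasure 0 Γpr).prod (gaussianMeasure 0 Γobs))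

/-- The Bayes risk `E[ ‖A y − x‖²_S ]` of the linear estimator `y ↦ A y`, where the
expectation is over the joint law `P` of `(x, y)`. -/
noncomputable def bayesRisk {n m : ℕ} (P : Measure ((Fin n → ℝ) × (Fin m → ℝ)))
    (S : Matrix (Fin n) (Fin n) ℝ) (A : Matrix (Fin n) (Fin m) ℝ) : ℝ :=
  ∫ p, (A *ᵥ p.2 - p.1) ⬝ᵥ (S *ᵥ (A *ᵥ p.2 - p.1)) ∂P

open ProbabilityTheory in
lemma aux_pi_std (n : ℕ) :
    (volume : Measure (Fin n → ℝ)).withDensity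
      (fun x => ENNReal.ofReal (∏ i, gaussianPDFReal 0 1 (x i))) =
    Measure.pi (fun _ : Fin n => gaussianReal 0 1) := by
  symm
  apply Measure.pi_eq
  intro s hs
  rw [withDensity_apply _ (MeasurableSet.univ_pi hs), volume_pi, Measure.restrict_pi_pi,
    ← ofReal_integral_eq_lintegral_ofReal]
  · rw [integral_fintype_prod_eq_prod (fun _ => gaussianPDFReal 0 1), ENNReal.ofReal_prod_of_nonneg]
    · refine Finset.prod_congr rfl fun i _ => ?_
      rw [gaussianReal_apply_eq_integral _ (by norm_num)]
    · intro i _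
      exact integral_nonneg fun x => gaussianPDFReal_nonneg _ _ _
  · exact Integrable.fintype_prod (f := fun _ => gaussianPDFReal 0 1)
      (fun i => (integrable_gaussianPDFReal 0 1).restrict)
  · exact Filter.Eventually.of_forall fun x =>
      Finset.prod_nonneg fun i _ => gaussianPDFReal_nonneg _ _ _

open ProbabilityTheory in
lemma aux_density {n : ℕ} (S : Matrix (Fin n) (Fin n) ℝ) (hS : S.det ≠ 0) (y : Fin n → ℝ) :
    |S.det| * gaussianDensity 0 (S * Sᵀ) (S *ᵥ y) = ∏ i, gaussianPDFReal 0 1 (y i) := by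
  have hu : IsUnit S.det := isUnit_iff_ne_zero.mpr hS
  have h1 : (S *ᵥ y - 0) ⬝ᵥ ((S * Sᵀ)⁻¹ *ᵥ (S *ᵥ y - 0)) = ∑ i, y i ^ 2 := by
    rw [sub_zero, Matrix.mul_inv_rev, ← Matrix.mulVec_mulVec, Matrix.mulVec_mulVec y S⁻¹ S,
      Matrix.nonsing_inv_mul _ hu, Matrix.one_mulVec, ← Matrix.transpose_nonsing_inv,
      Matrix.mulVec_transpose, dotProduct_comm, ← Matrix.dotProduct_mulVec,
      Matrix.mulVec_mulVec, Matrix.nonsing_inv_mul _ hu, Matrix.one_mulVec]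
    simp [dotProduct, sq]
  have h2 : |S.det| * (S * Sᵀ).det ^ (-(1:ℝ)/2) = 1 := by
    rw [Matrix.det_mul, Matrix.det_transpose, ← sq, ← sq_abs, ← Real.rpow_natCast,
      ← Real.rpow_mul (abs_nonneg _)]
    have : ((2:ℕ):ℝ) * (-(1:ℝ)/2) = -1 := by norm_num
    rw [this, Real.rpow_neg_one, mul_inv_cancel₀ (abs_ne_zero.mpr hS)]
  have h3 : ∏ i, gaussianPDFReal 0 1 (y i)
      = (2 * Real.pi) ^ (-(n : ℝ) / 2) * Real.exp (-(1/2) * ∑ i, y i ^ 2) := by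
    simp only [gaussianPDFReal, Finset.prod_mul_distrib, Finset.prod_const, Finset.card_univ,
      Fintype.card_fin, ← Real.exp_sum, Finset.mul_sum]
    congr 1
    · simp only [NNReal.coe_one, mul_one]
      rw [Real.sqrt_eq_rpow, ← Real.rpow_neg (by positivity), ← Real.rpow_natCast,
        ← Real.rpow_mul (by positivity)]
      congr 1
      ring
    · congr 1
      refine Finset.sum_congr rfl fun i _ => ?_
      simp
      ring
  rw [h3, gaussianDensity, h1]
  linear_combination (2 * Real.pi) ^ (-(n : ℝ) / 2) * Real.exp (-(1/2) * ∑ i, y i ^ 2) * h2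

lemma aux_density_meas {n : ℕ} (S : Matrix (Fin n) (Fin n) ℝ) :
    Measurable (gaussianDensity 0 S) := by
  have : Continuous (gaussianDensity 0 S) := by
    unfold gaussianDensity
    simp only [dotProduct, mulVec]
    fun_prop
  exact this.measurable

open ProbabilityTheory in
lemma aux_gaussian {n : ℕ} (S : Matrix (Fin n) (Fin n) ℝ) (hS : S.det ≠ 0) :
    gaussianMeasure 0 (S * Sᵀ) =
      (Measure.pi (fun _ : Fin n => gaussianReal 0 1)).map (fun y => S *ᵥ y) := by
  have hmS : Measurable (fun y : Fin n → ℝ => S *ᵥ y) := by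
    have : Continuous (fun y : Fin n → ℝ => S *ᵥ y) := by fun_prop
    exact this.measurable
  have hvol : (volume : Measure (Fin n → ℝ)) =
      ENNReal.ofReal |S.det| • Measure.map (fun y => S *ᵥ y) volume := by
    have h := Real.map_matrix_volume_pi_eq_smul_volume_pi hS
    have h' : (⇑(toLin' S)) = (fun y : Fin n → ℝ => S *ᵥ y) := by
      ext y; simp
    rw [h'] at h
    rw [h, smul_smul, ← ENNReal.ofReal_mul (abs_nonneg _), ← abs_mul, mul_inv_cancel₀ hS, abs_one,
      ENNReal.ofReal_one, one_smul]
  have hdm := (aux_density_meas (S * Sᵀ)).ennreal_ofReal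
  ext s hs
  rw [Measure.map_apply hmS hs, ← aux_pi_std, withDensity_apply _ (hmS hs), gaussianMeasure,
    withDensity_apply _ hs]
  rw [hvol, Measure.restrict_smul, lintegral_smul_measure, setLIntegral_map hs hdm hmS, ← hvol,
    smul_eq_mul, ← lintegral_const_mul _ (show Measurable fun y : Fin n → ℝ => ENNReal.ofReal
      (gaussianDensity 0 (S * Sᵀ) (S *ᵥ y)) from hdm.comp hmS)]
  refine lintegral_congr fun y => ?_
  rw [← ENNReal.ofReal_mul (abs_nonneg _), aux_density S hS]

open ProbabilityTheory in
lemma aux_lin {n : ℕ} (a : Fin n → ℝ) :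
    MemLp (fun x : Fin n → ℝ => a ⬝ᵥ x) 2 (Measure.pi (fun _ : Fin n => gaussianReal 0 1)) ∧
    ∫ x, a ⬝ᵥ x ∂(Measure.pi (fun _ : Fin n => gaussianReal 0 1)) = 0 ∧
    ∫ x, (a ⬝ᵥ x) ^ 2 ∂(Measure.pi (fun _ : Fin n => gaussianReal 0 1)) = a ⬝ᵥ a := by
  have hid : MemLp (fun x : ℝ => x) 2 (gaussianReal 0 1) := memLp_id_gaussianReal' 2 (by simp)
  have hL : ∀ i, MemLp (fun x : ℝ => a i * x) 2 (gaussianReal 0 1) := fun i => hid.const_mul _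
  have hLi : ∀ i, MemLp (fun x : Fin n → ℝ => a i * x i) 2
      (Measure.pi (fun _ : Fin n => gaussianReal 0 1)) := fun i =>
    (hL i).comp_measurePreserving (measurePreserving_eval (fun _ : Fin n => gaussianReal 0 1) i)
  have h1 : MemLp (fun x : Fin n → ℝ => a ⬝ᵥ x) 2
      (Measure.pi (fun _ : Fin n => gaussianReal 0 1)) := by
    simp only [dotProduct]
    exact memLp_finsetSum _ fun i _ => hLi i
  have h2 : ∫ x, a ⬝ᵥ x ∂(Measure.pi (fun _ : Fin n => gaussianReal 0 1)) = 0 := by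
    simp only [dotProduct]
    rw [integral_finsetSum _ fun i _ => (hLi i).integrable (by norm_num)]
    refine Finset.sum_eq_zero fun i _ => ?_
    rw [integral_const_mul]
    have := (measurePreserving_eval (fun _ : Fin n => gaussianReal 0 1) i).map_eq
    have h3 : ∫ x : Fin n → ℝ, x i ∂(Measure.pi (fun _ : Fin n => gaussianReal 0 1))
      = ∫ x, x ∂(gaussianReal 0 1) := by
      exact integral_comp_eval (μ := fun _ : Fin n => gaussianReal 0 1) (i := i)
        (f := fun x : ℝ => x) hid.1
    rw [h3, integral_id_gaussianReal, mul_zero]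
  refine ⟨h1, h2, ?_⟩
  have hv := variance_sum_pi (μ := fun _ : Fin n => gaussianReal 0 1)
    (X := fun i x => a i * x) hL
  have hv2 := variance_of_integral_eq_zero h1.1.aemeasurable h2
  have he : (∑ i, fun ω : Fin n → ℝ => a i * ω i) = fun x => a ⬝ᵥ x := by
    ext x; simp [dotProduct]
  rw [he] at hv
  rw [← hv2, hv]
  simp only [dotProduct]
  refine Finset.sum_congr rfl fun i _ => ?_
  rw [variance_const_mul, variance_fun_id_gaussianReal]
  simp [sq]

open ProbabilityTheory in
lemma aux_lin2 {n m : ℕ} (a : Fin n → ℝ) (b : Fin m → ℝ) :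
    Integrable (fun p : (Fin n → ℝ) × (Fin m → ℝ) => (a ⬝ᵥ p.1 + b ⬝ᵥ p.2) ^ 2)
      ((Measure.pi (fun _ : Fin n => gaussianReal 0 1)).prod
        (Measure.pi (fun _ : Fin m => gaussianReal 0 1))) ∧
    ∫ p : (Fin n → ℝ) × (Fin m → ℝ), (a ⬝ᵥ p.1 + b ⬝ᵥ p.2) ^ 2
      ∂((Measure.pi (fun _ : Fin n => gaussianReal 0 1)).prod
        (Measure.pi (fun _ : Fin m => gaussianReal 0 1))) = a ⬝ᵥ a + b ⬝ᵥ b := by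
  obtain ⟨ha, ha1, ha2⟩ := aux_lin a
  obtain ⟨hb, hb1, hb2⟩ := aux_lin b
  set μ := Measure.pi (fun _ : Fin n => gaussianReal 0 1)
  set ν := Measure.pi (fun _ : Fin m => gaussianReal 0 1)
  have i1 : Integrable (fun p : (Fin n → ℝ) × (Fin m → ℝ) => (a ⬝ᵥ p.1) ^ 2) (μ.prod ν) :=
    (ha.integrable_sq).comp_fst ν
  have i2 : Integrable (fun p : (Fin n → ℝ) × (Fin m → ℝ) => (b ⬝ᵥ p.2) ^ 2) (μ.prod ν) :=
    (hb.integrable_sq).comp_snd μ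
  have i3 : Integrable (fun p : (Fin n → ℝ) × (Fin m → ℝ) => (a ⬝ᵥ p.1) * (b ⬝ᵥ p.2))
      (μ.prod ν) := (ha.integrable (by norm_num)).mul_prod (hb.integrable (by norm_num))
  have he : (fun p : (Fin n → ℝ) × (Fin m → ℝ) => (a ⬝ᵥ p.1 + b ⬝ᵥ p.2) ^ 2) =
      fun p => ((a ⬝ᵥ p.1) ^ 2 + (b ⬝ᵥ p.2) ^ 2) + 2 * ((a ⬝ᵥ p.1) * (b ⬝ᵥ p.2)) := by
    ext p; ring
  rw [he]
  refine ⟨(i1.add i2).add (i3.const_mul 2), ?_⟩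
  have i12 : Integrable (fun p : (Fin n → ℝ) × (Fin m → ℝ) => (a ⬝ᵥ p.1) ^ 2 + (b ⬝ᵥ p.2) ^ 2)
      (μ.prod ν) := i1.add i2
  rw [integral_add i12 (i3.const_mul 2), integral_add i1 i2, integral_const_mul,
    integral_prod_mul (fun x => a ⬝ᵥ x) (fun x => b ⬝ᵥ x), ha1,
    integral_fun_fst (fun x => (a ⬝ᵥ x) ^ 2), integral_fun_snd (fun x => (b ⬝ᵥ x) ^ 2), ha2, hb2]
  simp

lemma aux_dot {k n : ℕ} (L : Matrix (Fin k) (Fin n) ℝ) :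
    ∑ i, (fun j => L i j) ⬝ᵥ (fun j => L i j) = (L * Lᵀ).trace := by
  simp [Matrix.trace, Matrix.mul_apply, dotProduct]

lemma aux_risk {n m : ℕ} (G : Matrix (Fin m) (Fin n) ℝ)
    (Spr : Matrix (Fin n) (Fin n) ℝ) (Sobs : Matrix (Fin m) (Fin m) ℝ)
    (h1 : Spr.det ≠ 0) (h2 : Sobs.det ≠ 0) (T : Matrix (Fin n) (Fin n) ℝ)
    (A : Matrix (Fin n) (Fin m) ℝ) :
    bayesRisk (jointMeasure G (Spr * Sprᵀ) (Sobs * Sobsᵀ)) (Tᵀ * T) A =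
      ((T * (A * G - 1) * Spr) * (T * (A * G - 1) * Spr)ᵀ).trace +
      ((T * A * Sobs) * (T * A * Sobs)ᵀ).trace := by
  have hc1 : Continuous (fun y : Fin n → ℝ => Spr *ᵥ y) := by fun_prop
  have hc2 : Continuous (fun y : Fin m → ℝ => Sobs *ᵥ y) := by fun_prop
  have hc3 : Continuous (fun p : (Fin n → ℝ) × (Fin m → ℝ) => (p.1, G *ᵥ p.1 + p.2)) := by
    fun_prop
  have hc4 : Continuous (fun p : (Fin n → ℝ) × (Fin m → ℝ) =>
      (A *ᵥ p.2 - p.1) ⬝ᵥ ((Tᵀ * T) *ᵥ (A *ᵥ p.2 - p.1))) := by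
    fun_prop
  rw [bayesRisk, jointMeasure, aux_gaussian Spr h1, aux_gaussian Sobs h2,
    Measure.map_prod_map _ _ hc1.measurable hc2.measurable,
    Measure.map_map hc3.measurable (hc1.measurable.prodMap hc2.measurable),
    integral_map (hc3.measurable.comp (hc1.measurable.prodMap hc2.measurable)).aemeasurable
      hc4.aestronglyMeasurable, ← aux_dot, ← aux_dot, ← Finset.sum_add_distrib]
  have he : ∀ p : (Fin n → ℝ) × (Fin m → ℝ),
      (A *ᵥ (G *ᵥ (Spr *ᵥ p.1) + Sobs *ᵥ p.2) - Spr *ᵥ p.1) ⬝ᵥ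
        ((Tᵀ * T) *ᵥ (A *ᵥ (G *ᵥ (Spr *ᵥ p.1) + Sobs *ᵥ p.2) - Spr *ᵥ p.1)) =
      ∑ i, ((fun j => (T * (A * G - 1) * Spr : Matrix (Fin n) (Fin n) ℝ) i j) ⬝ᵥ p.1 +
        (fun j => (T * A * Sobs) i j) ⬝ᵥ p.2) ^ 2 := by
    intro p
    have h : T *ᵥ (A *ᵥ (G *ᵥ (Spr *ᵥ p.1) + Sobs *ᵥ p.2) - Spr *ᵥ p.1) =
        (T * (A * G - 1) * Spr) *ᵥ p.1 + (T * A * Sobs) *ᵥ p.2 := by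
      simp only [Matrix.mulVec_add, Matrix.mulVec_sub, Matrix.mulVec_mulVec, Matrix.mul_sub,
        Matrix.sub_mul, Matrix.sub_mulVec, Matrix.mul_one, Matrix.mul_assoc]
      abel
    rw [← Matrix.mulVec_mulVec, Matrix.mulVec_transpose, dotProduct_comm,
      ← Matrix.dotProduct_mulVec, h]
    simp only [dotProduct, Pi.add_apply, Matrix.mulVec, sq]
  simp only [Function.comp_apply, Prod.map_apply', he]
  clear he hc4
  generalize T * (A * G - 1) * Spr = L
  generalize T * A * Sobs = D
  refine (integral_finsetSum Finset.univ fun i _ =>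
    (aux_lin2 (fun j => L i j) (fun j => D i j)).1).trans ?_
  exact Finset.sum_congr rfl fun i _ =>
    (aux_lin2 (fun j => L i j) (fun j => D i j)).2

lemma aux_Q {n m r : ℕ} (C : Matrix (Fin n) (Fin m) ℝ) (hC : C.rank ≤ r) :
    ∃ q ≤ r, ∃ Q : Matrix (Fin n) (Fin q) ℝ, Qᵀ * Q = 1 ∧ Q * (Qᵀ * C) = C := by
  let U := LinearMap.range (Matrix.toEuclideanLin C)
  have hU : Module.finrank ℝ U = C.rank := by
    rw [Matrix.rank_eq_finrank_range_toLin C (EuclideanSpace.basisFun _ ℝ).toBasis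
      (EuclideanSpace.basisFun _ ℝ).toBasis, ← Matrix.toEuclideanLin_eq_toLin_orthonormal]
  let b := stdOrthonormalBasis ℝ U
  refine ⟨Module.finrank ℝ U, hU.le.trans hC, Matrix.of fun i j => (b j : EuclideanSpace ℝ (Fin n)) i,
    ?_, ?_⟩
  · ext i j
    have := orthonormal_iff_ite.mp b.orthonormal i j
    rw [Submodule.coe_inner] at this
    rw [Matrix.one_apply, ← this, Matrix.mul_apply]
    rw [PiLp.inner_apply]
    refine Finset.sum_congr rfl fun l _ => ?_
    simp only [Matrix.of_apply, Matrix.transpose_apply, RCLike.inner_apply, conj_trivial]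
    exact mul_comm _ _
  · ext i c
    let u : U := ⟨Matrix.toEuclideanLin C (EuclideanSpace.single c 1), LinearMap.mem_range_self _ _⟩
    have hu : ∀ i, (u : EuclideanSpace ℝ (Fin n)) i = C i c := by
      intro i
      simp [u, Matrix.toEuclideanLin]
    have h := congrArg (fun z : U => (z : EuclideanSpace ℝ (Fin n)) i) (b.sum_repr' u)
    simp only [hu] at h
    rw [← h]
    simp only [Matrix.mul_apply, Submodule.coe_sum, Submodule.coe_smul, Submodule.coe_inner,
      PiLp.inner_apply, WithLp.ofLp_sum, WithLp.ofLp_smul, Finset.sum_apply, Pi.smul_apply, hu,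
      Matrix.of_apply, Matrix.transpose_apply, smul_eq_mul]
    refine Finset.sum_congr rfl fun j _ => ?_
    rw [mul_comm]
    congr 1
    refine Finset.sum_congr rfl fun l _ => ?_
    simp only [RCLike.inner_apply, conj_trivial]
    exact mul_comm _ _

lemma aux_diag_nonneg {n k : ℕ} (X : Matrix (Fin n) (Fin k) ℝ) (j : Fin k) : 0 ≤ (Xᵀ * X) j j := by
  rw [Matrix.mul_apply]
  exact Finset.sum_nonneg fun i _ => mul_self_nonneg _

lemma aux_bessel {n k l : ℕ} (W : Matrix (Fin n) (Fin k) ℝ) (hW : Wᵀ * W = 1)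
    (Z : Matrix (Fin n) (Fin l) ℝ) (j : Fin l) :
    (Zᵀ * W * (Wᵀ * Z)) j j ≤ (Zᵀ * Z) j j := by
  have h := aux_diag_nonneg (Z - W * (Wᵀ * Z)) j
  have e : (Z - W * (Wᵀ * Z))ᵀ * (Z - W * (Wᵀ * Z)) = Zᵀ * Z - Zᵀ * W * (Wᵀ * Z) := by
    have h1 : Wᵀ * (W * (Wᵀ * Z)) = Wᵀ * Z := by rw [← Matrix.mul_assoc, hW, Matrix.one_mul]
    simp only [Matrix.transpose_sub, Matrix.transpose_mul, Matrix.transpose_transpose,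
      Matrix.sub_mul, Matrix.mul_sub, Matrix.mul_assoc, h1]
    abel
  rw [e, Matrix.sub_apply] at h
  linarith

lemma aux_scalar {k r : ℕ} (hr : r ≤ k) (f p : Fin k → ℝ) (hf : ∀ i, 0 ≤ f i)
    (hord : ∀ i j : Fin k, i ≤ j → f j ≤ f i) (hp0 : ∀ i, 0 ≤ p i) (hp1 : ∀ i, p i ≤ 1)
    (hps : ∑ i, p i ≤ r) :
    ∑ i, f i * p i ≤ ∑ i, f i * (if (i : ℕ) < r then 1 else 0) := by
  obtain ⟨t, ht0, ht1, ht2⟩ : ∃ t : ℝ, 0 ≤ t ∧ (∀ i : Fin k, (i : ℕ) < r → t ≤ f i) ∧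
      (∀ i : Fin k, ¬ (i : ℕ) < r → f i ≤ t) := by
    rcases hr.lt_or_eq with h | h
    · exact ⟨f ⟨r, h⟩, hf _, fun i hi => hord _ _ (Fin.le_def.mpr hi.le),
        fun i hi => hord _ _ (Fin.le_def.mpr (not_lt.mp hi))⟩
    · exact ⟨0, le_rfl, fun i _ => hf i, fun i hi => absurd (h ▸ i.2) hi⟩
  have hc : ∑ i : Fin k, (if (i : ℕ) < r then (1:ℝ) else 0) = r := by
    rw [Finset.sum_boole, Fin.card_filter_val_lt, min_eq_right hr]
  have h : 0 ≤ ∑ i, (f i - t) * ((if (i : ℕ) < r then 1 else 0) - p i) := by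
    refine Finset.sum_nonneg fun i _ => ?_
    split_ifs with hi
    · exact mul_nonneg (sub_nonneg.mpr (ht1 i hi)) (sub_nonneg.mpr (hp1 i))
    · exact mul_nonneg_of_nonpos_of_nonpos (sub_nonpos.mpr (ht2 i hi)) (by linarith [hp0 i])
  have e : ∑ i, (f i - t) * ((if (i : ℕ) < r then 1 else 0) - p i) =
      ∑ i, f i * (if (i : ℕ) < r then 1 else 0) - ∑ i, f i * p i
        - t * (∑ i : Fin k, (if (i : ℕ) < r then (1:ℝ) else 0) - ∑ i, p i) := by
    rw [← Finset.sum_sub_distrib, ← Finset.sum_sub_distrib, Finset.mul_sum,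
      ← Finset.sum_sub_distrib]
    exact Finset.sum_congr rfl fun i _ => by ring
  rw [e, hc] at h
  nlinarith [mul_nonneg ht0 (sub_nonneg.mpr hps)]

lemma aux_eckart {n m k r : ℕ} (hr : r ≤ k) (W : Matrix (Fin n) (Fin k) ℝ)
    (V : Matrix (Fin m) (Fin k) ℝ) (hW : Wᵀ * W = 1) (hV : Vᵀ * V = 1) (δ : Fin k → ℝ)
    (hδ : ∀ i, 0 ≤ δ i) (hord : ∀ i j : Fin k, i ≤ j → δ j ≤ δ i)
    (C : Matrix (Fin n) (Fin m) ℝ) (hC : C.rank ≤ r) :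
    ∑ i, δ i ^ 2 - ∑ i, δ i ^ 2 * (if (i : ℕ) < r then 1 else 0) ≤
      ((C - W * diagonal δ * Vᵀ) * (C - W * diagonal δ * Vᵀ)ᵀ).trace := by
  obtain ⟨q, hq, Q, hQ, hQC⟩ := aux_Q C hC
  set N := W * diagonal δ * Vᵀ with hN
  have hNN : N * Nᵀ = W * diagonal (fun i => δ i ^ 2) * Wᵀ := by
    have : diagonal (fun i => δ i ^ 2) = diagonal δ * (diagonal δ : Matrix (Fin k) (Fin k) ℝ) := by
      rw [Matrix.diagonal_mul_diagonal]; simp [sq]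
    rw [this, hN]
    simp only [Matrix.transpose_mul, Matrix.transpose_transpose, Matrix.diagonal_transpose,
      Matrix.mul_assoc]
    rw [← Matrix.mul_assoc Vᵀ V, hV, Matrix.one_mul]
  set X := C - N with hX
  -- Bessel for each column
  have hb : ∀ Y : Matrix (Fin n) (Fin m) ℝ,
      (Y * Yᵀ).trace - (Qᵀ * (Y * Yᵀ) * Q).trace =
        ((Y - Q * (Qᵀ * Y)) * (Y - Q * (Qᵀ * Y))ᵀ).trace := by
    intro Y
    have e : (Y - Q * (Qᵀ * Y)) * (Y - Q * (Qᵀ * Y))ᵀ =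
        Y * Yᵀ - (Y * Yᵀ * Q) * Qᵀ - Q * (Qᵀ * (Y * Yᵀ)) + Q * ((Qᵀ * (Y * Yᵀ) * Q) * Qᵀ) := by
      simp only [Matrix.transpose_sub, Matrix.transpose_mul, Matrix.transpose_transpose,
        Matrix.sub_mul, Matrix.mul_sub, Matrix.mul_assoc]
      abel
    rw [e, Matrix.trace_add, Matrix.trace_sub, Matrix.trace_sub, Matrix.trace_mul_comm _ Qᵀ,
      Matrix.trace_mul_comm Q (Qᵀ * _), Matrix.trace_mul_comm Q ((Qᵀ * (Y * Yᵀ) * Q) * Qᵀ),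
      Matrix.mul_assoc _ Qᵀ Q, hQ, Matrix.mul_one, ← Matrix.mul_assoc Qᵀ (Y * Yᵀ)]
    ring
  have hXN : X - Q * (Qᵀ * X) = -(N - Q * (Qᵀ * N)) := by
    rw [hX, Matrix.mul_sub, Matrix.mul_sub, hQC]; abel
  have h1 := hb X
  have h2 := hb N
  rw [hXN, Matrix.transpose_neg, Matrix.neg_mul, Matrix.mul_neg, neg_neg, ← h2] at h1
  have h3 : 0 ≤ (Qᵀ * (X * Xᵀ) * Q).trace := by
    have : Qᵀ * (X * Xᵀ) * Q = (Xᵀ * Q)ᵀ * (Xᵀ * Q) := by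
      simp only [Matrix.transpose_mul, Matrix.transpose_transpose, Matrix.mul_assoc]
    rw [this]
    exact Finset.sum_nonneg fun i _ => aux_diag_nonneg _ i
  have h4 : (N * Nᵀ).trace = ∑ i, δ i ^ 2 := by
    rw [hNN, Matrix.trace_mul_comm, ← Matrix.mul_assoc, hW, Matrix.one_mul, Matrix.trace_diagonal]
  let p : Fin k → ℝ := fun i => (Wᵀ * Q * (Qᵀ * W)) i i
  have h5 : (Qᵀ * (N * Nᵀ) * Q).trace = ∑ i, δ i ^ 2 * p i := by
    have : Qᵀ * (N * Nᵀ) * Q = (Qᵀ * W) * (diagonal (fun i => δ i ^ 2) * (Wᵀ * Q)) := by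
      rw [hNN]; simp only [Matrix.mul_assoc]
    rw [this, Matrix.trace_mul_comm, Matrix.mul_assoc]
    simp [Matrix.trace, Matrix.diagonal_mul, p]
  have hp0 : ∀ i, 0 ≤ p i := fun i => by
    have := aux_diag_nonneg (Qᵀ * W) i
    simpa only [Matrix.transpose_mul, Matrix.transpose_transpose] using this
  have hp1 : ∀ i, p i ≤ 1 := fun i => by
    have := aux_bessel Q hQ W i
    rwa [hW, Matrix.one_apply_eq] at this
  have hps : ∑ i, p i ≤ r := by
    have e : ∑ i, p i = (Qᵀ * W * (Wᵀ * Q)).trace := by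
      rw [Matrix.trace_mul_comm]; rfl
    rw [e]
    calc (Qᵀ * W * (Wᵀ * Q)).trace ≤ (Qᵀ * Q).trace :=
          Finset.sum_le_sum fun i _ => aux_bessel W hW Q i
      _ = q := by rw [hQ]; simp
      _ ≤ r := by exact_mod_cast hq
  have h6 := aux_scalar hr (fun i => δ i ^ 2) p (fun i => sq_nonneg _)
    (fun i j hij => pow_le_pow_left₀ (hδ j) (hord i j hij) 2) hp0 hp1 hps
  rw [h4, h5] at h1
  linarith

lemma aux_alg {n m : ℕ} (K : Matrix (Fin n) (Fin n) ℝ) (R : Matrix (Fin m) (Fin m) ℝ)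
    (M : Matrix (Fin m) (Fin n) ℝ) (B : Matrix (Fin n) (Fin m) ℝ)
    (hK : Kᵀ = K) (hR : Rᵀ = R) (hKK : K * K = 1 + Mᵀ * M) (hRR : R * R = 1 + M * Mᵀ)
    (hMK : M * K = R * M) :
    (K * (B * M - 1)) * (K * (B * M - 1))ᵀ + (K * B) * (K * B)ᵀ =
      (K * B * R - Mᵀ) * (K * B * R - Mᵀ)ᵀ + 1 := by
  have hKM : Mᵀ * R = K * Mᵀ := by
    have := congrArg Matrix.transpose hMK
    rw [Matrix.transpose_mul, Matrix.transpose_mul, hK, hR] at this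
    exact this.symm
  have h1 : ∀ Y : Matrix (Fin m) (Fin n) ℝ, R * (R * Y) = Y + M * (Mᵀ * Y) := by
    intro Y; rw [← Matrix.mul_assoc, hRR, Matrix.add_mul, Matrix.one_mul, Matrix.mul_assoc]
  have h2 : ∀ Y : Matrix (Fin m) (Fin n) ℝ, Mᵀ * (R * Y) = K * (Mᵀ * Y) := by
    intro Y; rw [← Matrix.mul_assoc, hKM, Matrix.mul_assoc]
  simp only [Matrix.transpose_sub, Matrix.transpose_mul, Matrix.transpose_transpose,
    Matrix.transpose_one, Matrix.sub_mul, Matrix.mul_sub, Matrix.mul_assoc, Matrix.mul_one,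
    Matrix.one_mul, hK, hR, h1, h2, ← hMK, hKK, Matrix.mul_add]
  abel

lemma aux_sqrt {n m k : ℕ} (W : Matrix (Fin n) (Fin k) ℝ) (V : Matrix (Fin m) (Fin k) ℝ)
    (hW : Wᵀ * W = 1) (hV : Vᵀ * V = 1) (D E : Matrix (Fin k) (Fin k) ℝ)
    (hD : Dᵀ = D) (hE : Eᵀ = E) (hE2 : E * E = 1 + D * D) (hED : E * D = D * E) :
    (1 + W * ((E - 1) * Wᵀ))ᵀ = 1 + W * ((E - 1) * Wᵀ) ∧
    (1 + W * ((E - 1) * Wᵀ)) * (1 + W * ((E - 1) * Wᵀ)) =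
      1 + (V * D * Wᵀ)ᵀ * (V * D * Wᵀ) ∧
    (V * D * Wᵀ) * (1 + W * ((E - 1) * Wᵀ)) = (1 + V * ((E - 1) * Vᵀ)) * (V * D * Wᵀ) ∧
    (1 + W * ((E - 1) * Wᵀ)) * W = W * E := by
  have hW' : ∀ {l : ℕ} (Y : Matrix (Fin k) (Fin l) ℝ), Wᵀ * (W * Y) = Y := by
    intro l Y; rw [← Matrix.mul_assoc, hW, Matrix.one_mul]
  have hV' : ∀ {l : ℕ} (Y : Matrix (Fin k) (Fin l) ℝ), Vᵀ * (V * Y) = Y := by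
    intro l Y; rw [← Matrix.mul_assoc, hV, Matrix.one_mul]
  have hE2' : ∀ {l : ℕ} (Y : Matrix (Fin k) (Fin l) ℝ), E * (E * Y) = Y + D * (D * Y) := by
    intro l Y; rw [← Matrix.mul_assoc, hE2, Matrix.add_mul, Matrix.one_mul, Matrix.mul_assoc]
  have hED' : ∀ {l : ℕ} (Y : Matrix (Fin k) (Fin l) ℝ), E * (D * Y) = D * (E * Y) := by
    intro l Y; rw [← Matrix.mul_assoc, hED, Matrix.mul_assoc]
  refine ⟨?_, ?_, ?_, ?_⟩
  · simp only [Matrix.transpose_add, Matrix.transpose_sub, Matrix.transpose_mul,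
      Matrix.transpose_transpose, Matrix.transpose_one, hE, Matrix.mul_assoc]
  · simp only [Matrix.transpose_mul, Matrix.transpose_transpose, hD, Matrix.mul_assoc,
      Matrix.sub_mul, Matrix.mul_sub, Matrix.add_mul, Matrix.mul_add, Matrix.one_mul,
      Matrix.mul_one, hW', hV', hE2']
    abel
  · simp only [Matrix.mul_assoc,
      Matrix.sub_mul, Matrix.mul_sub, Matrix.add_mul, Matrix.mul_add, Matrix.one_mul,
      Matrix.mul_one, hW', hV', hED']
  · simp only [Matrix.mul_assoc, hW,
      Matrix.sub_mul, Matrix.mul_sub, Matrix.add_mul, Matrix.mul_add, Matrix.one_mul,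
      Matrix.mul_one]
    abel

/-- Theorem 4.1 (i): the matrix `A* = Σ_{i≤r} (δᵢ/(1+δᵢ²)) ŵᵢ v̂ᵢᵀ` has rank at most `r`
and minimizes the Bayes risk `E‖A y − x‖²_{Γpos⁻¹}` over all matrices of rank at most `r`. -/
theorem optimal_low_rank_posterior_mean
    (n m r : ℕ) (hn : 0 < n) (hm : 0 < m) (hr : r ≤ min m n)
    (G : Matrix (Fin m) (Fin n) ℝ)
    (Γobs : Matrix (Fin m) (Fin m) ℝ) (hobs : Γobs.PosDef)
    (Γpr : Matrix (Fin n) (Fin n) ℝ) (hpr : Γpr.PosDef)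
    (Γpos : Matrix (Fin n) (Fin n) ℝ)
    (hΓpos : Γpos = (Gᵀ * Γobs⁻¹ * G + Γpr⁻¹)⁻¹)
    (Spr : Matrix (Fin n) (Fin n) ℝ) (hSpr : Γpr = Spr * Sprᵀ)
    (Sobs : Matrix (Fin m) (Fin m) ℝ) (hSobs : Γobs = Sobs * Sobsᵀ)
    (δ : Fin (min m n) → ℝ)
    (v : Fin (min m n) → Fin m → ℝ) (w : Fin (min m n) → Fin n → ℝ)
    (hδ : ∀ i, 0 ≤ δ i)
    (hord : ∀ i j : Fin (min m n), i ≤ j → δ j ≤ δ i)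
    (hv : ∀ i j, v i ⬝ᵥ v j = if i = j then (1:ℝ) else 0)
    (hw : ∀ i j, w i ⬝ᵥ w j = if i = j then (1:ℝ) else 0)
    (hsvd : Sobs⁻¹ * G * Spr =
      ∑ i : Fin (min m n), δ i • vecMulVec (v i) (w i))
    (Astar : Matrix (Fin n) (Fin m) ℝ)
    (hAstar : Astar = ∑ i ∈ Finset.univ.filter (fun i : Fin (min m n) => (i : ℕ) < r),
      (δ i / (1 + (δ i) ^ 2)) • vecMulVec (Spr *ᵥ w i) ((Sobs⁻¹)ᵀ *ᵥ v i)) :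
    Astar.rank ≤ r ∧
      ∀ A : Matrix (Fin n) (Fin m) ℝ, A.rank ≤ r →
        bayesRisk (jointMeasure G Γpr Γobs) Γpos⁻¹ Astar ≤
          bayesRisk (jointMeasure G Γpr Γobs) Γpos⁻¹ A := by
  
  classical
  have hdet : ∀ {l : ℕ} (Γ S : Matrix (Fin l) (Fin l) ℝ), Γ.PosDef → Γ = S * Sᵀ → S.det ≠ 0 := by
    intro l Γ S hΓ h h0
    have := hΓ.det_pos
    rw [h, Matrix.det_mul, h0, zero_mul] at this
    exact lt_irrefl _ this
  have hd1 := hdet _ _ hpr hSpr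
  have hd2 := hdet _ _ hobs hSobs
  have hu1 : IsUnit Spr.det := isUnit_iff_ne_zero.mpr hd1
  have hu2 : IsUnit Sobs.det := isUnit_iff_ne_zero.mpr hd2
  let V : Matrix (Fin m) (Fin (min m n)) ℝ := Matrix.of fun a i => v i a
  let W : Matrix (Fin n) (Fin (min m n)) ℝ := Matrix.of fun a i => w i a
  have hW : Wᵀ * W = 1 := by
    ext i j
    rw [Matrix.one_apply, ← hw i j]
    simp [W, Matrix.mul_apply, dotProduct]
  have hV : Vᵀ * V = 1 := by
    ext i j
    rw [Matrix.one_apply, ← hv i j]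
    simp [V, Matrix.mul_apply, dotProduct]
  let F : Fin (min m n) → ℝ := fun i => if (i : ℕ) < r then δ i / (1 + (δ i) ^ 2) else 0
  let g : Fin (min m n) → ℝ := fun i => if (i : ℕ) < r then δ i else 0
  let s : Fin (min m n) → ℝ := fun i => Real.sqrt (1 + δ i ^ 2)
  have hs : ∀ i, s i * s i = 1 + δ i ^ 2 := fun i => Real.mul_self_sqrt (by positivity)
  obtain ⟨M, hM⟩ : ∃ M, M = Sobs⁻¹ * G * Spr := ⟨_, rfl⟩
  rw [← hM] at hsvd
  have hMV : M = V * diagonal δ * Wᵀ := by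
    rw [hsvd]
    ext a b
    rw [Matrix.mul_apply]
    simp only [Matrix.sum_apply, Matrix.smul_apply, Matrix.vecMulVec_apply,
      Matrix.mul_diagonal, V, W, Matrix.of_apply, Matrix.transpose_apply, smul_eq_mul]
    exact Finset.sum_congr rfl fun i _ => by ring
  have hA : Astar = Spr * (W * diagonal F * Vᵀ) * Sobs⁻¹ := by
    have h1 : W * diagonal F * Vᵀ = ∑ i, F i • vecMulVec (w i) (v i) := by
      ext a b
      rw [Matrix.mul_apply]
      simp only [Matrix.sum_apply, Matrix.smul_apply, Matrix.vecMulVec_apply,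
        Matrix.mul_diagonal, V, W, Matrix.of_apply, Matrix.transpose_apply, smul_eq_mul]
      exact Finset.sum_congr rfl fun i _ => by ring
    rw [hAstar, h1, Finset.sum_filter, Matrix.mul_sum, Matrix.sum_mul]
    refine Finset.sum_congr rfl fun i _ => ?_
    rw [Matrix.mul_smul, Matrix.smul_mul, Matrix.mul_vecMulVec, Matrix.vecMulVec_mul,
      Matrix.mulVec_transpose]
    by_cases hi : (i : ℕ) < r <;> simp [F, hi]
  refine ⟨?_, ?_⟩
  · rw [hA]
    refine (Matrix.rank_mul_le_left _ _).trans ((Matrix.rank_mul_le_right _ _).trans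
      ((Matrix.rank_mul_le_left _ _).trans ((Matrix.rank_mul_le_right _ _).trans ?_)))
    rw [Matrix.rank_diagonal, Fintype.card_subtype]
    calc _ ≤ (Finset.univ.filter (fun i : Fin (min m n) => (i : ℕ) < r)).card := by
          refine Finset.card_le_card fun i hi => ?_
          simp only [Finset.mem_filter, Finset.mem_univ, true_and] at hi ⊢
          by_contra h
          exact hi (by simp [F, h])
      _ ≤ r := by rw [Fin.card_filter_val_lt]; exact min_le_right _ _
  -- square roots of `1 + MᵀM` and `1 + MMᵀ`
  have hE2 : (diagonal s * diagonal s : Matrix (Fin (min m n)) (Fin (min m n)) ℝ)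
      = 1 + diagonal δ * diagonal δ := by
    rw [Matrix.diagonal_mul_diagonal, Matrix.diagonal_mul_diagonal, ← Matrix.diagonal_one,
      Matrix.diagonal_add]
    congr 1; ext i; rw [hs]; simp [sq]
  have hED : (diagonal s * diagonal δ : Matrix (Fin (min m n)) (Fin (min m n)) ℝ)
      = diagonal δ * diagonal s := by
    rw [Matrix.diagonal_mul_diagonal, Matrix.diagonal_mul_diagonal]
    congr 1; ext i; ring
  have hEFE : (diagonal s * (diagonal F * diagonal s) : Matrix (Fin (min m n)) (Fin (min m n)) ℝ)
      = diagonal g := by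
    rw [Matrix.diagonal_mul_diagonal, Matrix.diagonal_mul_diagonal]
    congr 1; ext i
    have h1 : s i * (F i * s i) = F i * (1 + δ i ^ 2) := by rw [← hs]; ring
    rw [h1]
    by_cases hi : (i : ℕ) < r
    · simp only [F, g, hi, if_true]
      have : 1 + δ i ^ 2 ≠ 0 := by positivity
      field_simp
    · simp [F, g, hi]
  have hDt : (diagonal δ : Matrix (Fin (min m n)) (Fin (min m n)) ℝ)ᵀ = diagonal δ :=
    Matrix.diagonal_transpose _
  have hEt : (diagonal s : Matrix (Fin (min m n)) (Fin (min m n)) ℝ)ᵀ = diagonal s :=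
    Matrix.diagonal_transpose _
  obtain ⟨hK, hKK, hMK, hKW⟩ := aux_sqrt W V hW hV _ _ hDt hEt hE2 hED
  obtain ⟨hR, hRR, -, hRV⟩ := aux_sqrt V W hV hW _ _ hDt hEt hE2 hED
  have hMt : Mᵀ = W * diagonal δ * Vᵀ := by
    rw [hMV]
    simp only [Matrix.transpose_mul, Matrix.transpose_transpose, hDt, Matrix.mul_assoc]
  rw [← hMt, Matrix.transpose_transpose] at hRR
  rw [← hMV] at hKK hMK
  set K := 1 + W * ((diagonal s - 1) * Wᵀ) with hKdef
  set R := 1 + V * ((diagonal s - 1) * Vᵀ) with hRdef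
  have hinv1 : Spr⁻¹ * Spr = 1 := Matrix.nonsing_inv_mul _ hu1
  have hinv1' : Spr * Spr⁻¹ = 1 := Matrix.mul_nonsing_inv _ hu1
  have hinv2 : Sobs⁻¹ * Sobs = 1 := Matrix.nonsing_inv_mul _ hu2
  have hinv2' : Sobs * Sobs⁻¹ = 1 := Matrix.mul_nonsing_inv _ hu2
  have hGM : G = Sobs * M * Spr⁻¹ := by
    rw [hM]
    simp only [Matrix.mul_assoc, hinv1', Matrix.mul_one]
    rw [← Matrix.mul_assoc, hinv2', Matrix.one_mul]
  -- the weight matrix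
  have hS : Γpos⁻¹ = (K * Spr⁻¹)ᵀ * (K * Spr⁻¹) := by
    have h1 : (K * Spr⁻¹)ᵀ * (K * Spr⁻¹) = Gᵀ * Γobs⁻¹ * G + Γpr⁻¹ := by
      have e1 : (K * Spr⁻¹)ᵀ * (K * Spr⁻¹) = Spr⁻¹ᵀ * (K * K) * Spr⁻¹ := by
        rw [Matrix.transpose_mul, hK]; simp only [Matrix.mul_assoc]
      have e2 : Γobs⁻¹ = Sobs⁻¹ᵀ * Sobs⁻¹ := by
        rw [hSobs, Matrix.mul_inv_rev, Matrix.transpose_nonsing_inv]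
      have e3 : Γpr⁻¹ = Spr⁻¹ᵀ * Spr⁻¹ := by
        rw [hSpr, Matrix.mul_inv_rev, Matrix.transpose_nonsing_inv]
      have e4 : Gᵀ * Γobs⁻¹ * G = (Sobs⁻¹ * G)ᵀ * (Sobs⁻¹ * G) := by
        rw [e2, Matrix.transpose_mul]; simp only [Matrix.mul_assoc]
      have e5 : Sobs⁻¹ * G = M * Spr⁻¹ := by
        rw [hM, Matrix.mul_assoc _ Spr, hinv1', Matrix.mul_one]
      rw [e1, hKK, e4, e5, e3, Matrix.transpose_mul, Matrix.mul_add, Matrix.add_mul,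
        Matrix.mul_one, add_comm]
      simp only [Matrix.mul_assoc]
    rw [h1, hΓpos]
    apply Matrix.nonsing_inv_nonsing_inv
    rw [← h1, Matrix.det_mul, Matrix.det_transpose, Matrix.det_mul]
    have hKdet : K.det ≠ 0 := by
      have hpd : (1 + Mᵀ * M).PosDef := by
        refine Matrix.PosDef.add_posSemidef Matrix.PosDef.one ?_
        have := Matrix.posSemidef_conjTranspose_mul_self M
        simpa using this
      have := hpd.det_pos
      rw [← hKK, Matrix.det_mul] at this
      intro h0
      rw [h0, mul_zero] at this
      exact lt_irrefl _ this
    have hSd : (Spr⁻¹).det ≠ 0 := by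
      have : IsUnit (Spr⁻¹).det := by
        rw [← Matrix.isUnit_iff_isUnit_det] 
        exact (Matrix.isUnit_nonsing_inv_iff).mpr ((Matrix.isUnit_iff_isUnit_det _).mpr hu1)
      exact this.ne_zero
    exact isUnit_iff_ne_zero.mpr (mul_ne_zero (mul_ne_zero hKdet hSd) (mul_ne_zero hKdet hSd))
  have hrisk : ∀ A : Matrix (Fin n) (Fin m) ℝ,
      bayesRisk (jointMeasure G Γpr Γobs) Γpos⁻¹ A =
        ((K * (Spr⁻¹ * A * Sobs) * R - W * diagonal δ * Vᵀ) *
          (K * (Spr⁻¹ * A * Sobs) * R - W * diagonal δ * Vᵀ)ᵀ).trace + n := by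
    intro A
    have e1 : K * Spr⁻¹ * (A * G - 1) * Spr = K * ((Spr⁻¹ * A * Sobs) * M - 1) := by
      rw [hGM]
      simp only [Matrix.mul_sub, Matrix.sub_mul, Matrix.mul_assoc, hinv1, Matrix.mul_one]
    have e2 : K * Spr⁻¹ * A * Sobs = K * (Spr⁻¹ * A * Sobs) := by
      simp only [Matrix.mul_assoc]
    rw [hS, hSpr, hSobs, aux_risk G Spr Sobs hd1 hd2, e1, e2, ← Matrix.trace_add,
      aux_alg K R M _ hK hR hKK hRR hMK, Matrix.trace_add, hMt]
    simp
  intro A hAr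
  rw [hrisk, hrisk]
  have hCr : (K * (Spr⁻¹ * A * Sobs) * R).rank ≤ r :=
    (Matrix.rank_mul_le_left _ _).trans ((Matrix.rank_mul_le_right _ _).trans
      ((Matrix.rank_mul_le_left _ _).trans ((Matrix.rank_mul_le_right _ _).trans hAr)))
  have hlow := aux_eckart hr W V hW hV δ hδ hord _ hCr
  have hstar : K * (Spr⁻¹ * Astar * Sobs) * R = W * diagonal g * Vᵀ := by
    have e1 : Spr⁻¹ * Astar * Sobs = W * diagonal F * Vᵀ := by
      rw [hA]
      simp only [Matrix.mul_assoc, hinv2, Matrix.mul_one]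
      rw [← Matrix.mul_assoc Spr⁻¹ Spr, hinv1, Matrix.one_mul]
    have e2 : Vᵀ * R = diagonal s * Vᵀ := by
      have := congrArg Matrix.transpose hRV
      rwa [Matrix.transpose_mul, Matrix.transpose_mul, hR, hEt] at this
    have e3 : K * (W * diagonal F * Vᵀ) * R = (K * W) * (diagonal F * (Vᵀ * R)) := by
      simp only [Matrix.mul_assoc]
    rw [e1, e3, e2, hKW, ← hEFE]
    simp only [Matrix.mul_assoc]
  have heq : ((W * diagonal g * Vᵀ - W * diagonal δ * Vᵀ) *
      (W * diagonal g * Vᵀ - W * diagonal δ * Vᵀ)ᵀ).trace =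
      ∑ i, δ i ^ 2 - ∑ i, δ i ^ 2 * (if (i : ℕ) < r then 1 else 0) := by
    have e1 : W * diagonal g * Vᵀ - W * diagonal δ * Vᵀ = W * (diagonal (fun i => g i - δ i) * Vᵀ) := by
      rw [← Matrix.diagonal_sub, Matrix.sub_mul, Matrix.mul_sub]
      simp only [Matrix.mul_assoc]
    have e2 : W * (diagonal (fun i => g i - δ i) * Vᵀ) *
        (W * (diagonal (fun i => g i - δ i) * Vᵀ))ᵀ =
        W * (diagonal (fun i => (g i - δ i) * (g i - δ i)) * Wᵀ) := by
      rw [← Matrix.diagonal_mul_diagonal]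
      simp only [Matrix.transpose_mul, Matrix.transpose_transpose, Matrix.diagonal_transpose,
        Matrix.mul_assoc]
      rw [← Matrix.mul_assoc Vᵀ V, hV, Matrix.one_mul]
    rw [e1, e2, Matrix.trace_mul_comm, Matrix.mul_assoc, hW, Matrix.mul_one,
      Matrix.trace_diagonal, ← Finset.sum_sub_distrib]
    refine Finset.sum_congr rfl fun i _ => ?_
    by_cases hi : (i : ℕ) < r <;> simp [g, hi, sq]
  rw [hstar, heq]
  linarith
end
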